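/- arXiv:2302.13478 — 12 statements merged into one kernel-verified Lean document; each statement's English description precedes it below -/
import Mathlib

section
/- The set Γ of roots in F_{q³} of X^(2q²+1) + hX + e has exactly three elements, and Γ is contained in F_q if and only if 1 + ωe is a cube in F_{q²}. If Γ is not contained in F_q, then Γ is contained in F_{q³} \ F_q, and Γ is the set of roots of X³ + h²X² + (e+1)hX + 1 if (e+ω)^((q²−1)/3) = ω, while Γ is the set of roots of (e+1)X³ + h²X² + hX + e² + 1 if (e+ω)^((q²−1)/3) ≠ ω. -/
open Polynomial

local notation "K" => AlgebraicClosure (ZMod 2)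

section ZhengHelpers

variable {F : Type*} [Field F]

/-- The Moebius map that conjugates `x ↦ e / (x² + h)` to `s ↦ s⁻²`. -/
def zN (u v s : F) : F := (u ^ 2 * s + v ^ 2) / (v * s + u)

lemma zden (h2 : (2 : F) = 0) (ω e u v s : F) (hω : ω ^ 2 + ω + 1 = 0)
    (he0 : e ≠ 0) (he1 : e + 1 ≠ 0)
    (hu : u ^ 3 = 1 + ω * e) (hv : v ^ 3 = 1 + ω ^ 2 * e)
    (hs : s ^ 9 = 1) : v * s + u ≠ 0 := by
  intro h0
  have h1 : v ^ 3 * s ^ 3 = u ^ 3 := by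
    have : v * s = u := by linear_combination h0 - u * h2
    rw [← mul_pow, this]
  have hf : (s ^ 3 - 1) * ((s ^ 3 - ω) * (s ^ 3 - ω ^ 2)) = 0 := by
    have hω3 : ω ^ 3 = 1 := by linear_combination (ω - 1) * hω
    linear_combination hs + (s ^ 3 - s ^ 6) * hω + (s ^ 3 - 1) * hω3
  rcases mul_eq_zero.mp hf with h | h
  · have : e = 0 := by
      have h3 : s ^ 3 = 1 := by linear_combination h
      rw [h3] at h1
      grind
    exact he0 this
  · rcases mul_eq_zero.mp h with h | h
    · have h3 : s ^ 3 = ω := by linear_combination h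
      rw [h3] at h1
      have : ω ^ 2 * (e + 1) = 0 := by grind
      rcases mul_eq_zero.mp this with h | h
      · have : ω = 0 := by simpa using h
        rw [this] at hω
        simp at hω
      · exact he1 h
    · have h3 : s ^ 3 = ω ^ 2 := by linear_combination h
      rw [h3] at h1
      have : ω = 0 := by grind
      rw [this] at hω
      simp at hω

lemma zN_inj (h2 : (2 : F) = 0) (e u v s t : F) (he0 : e ≠ 0) (huv : u ^ 3 + v ^ 3 = e)
    (hs : v * s + u ≠ 0) (ht : v * t + u ≠ 0) (h : zN u v s = zN u v t) : s = t := by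
  unfold zN at h
  rw [div_eq_div_iff hs ht] at h
  have : e * (s - t) = 0 := by grind
  rcases mul_eq_zero.mp this with h | h
  · exact absurd h he0
  · linear_combination h

/-- The point `zN u v s` in terms of the inverse Moebius map. -/
lemma zN_of_ab (h2 : (2 : F) = 0) (e u v x : F) (he0 : e ≠ 0) (huv : u ^ 3 + v ^ 3 = e)
    (hb : v * x + u ^ 2 ≠ 0) : x = zN u v ((u * x + v ^ 2) / (v * x + u ^ 2)) := by
  have hd : v * ((u * x + v ^ 2) / (v * x + u ^ 2)) + u = e / (v * x + u ^ 2) := by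
    field_simp
    grind
  unfold zN
  rw [hd]
  field_simp
  grind

lemma zN_ab (h2 : (2 : F) = 0) (e u v s : F) (huv : u ^ 3 + v ^ 3 = e)
    (hs : v * s + u ≠ 0) : u * zN u v s + v ^ 2 = e * s / (v * s + u) ∧
      v * zN u v s + u ^ 2 = e / (v * s + u) := by
  unfold zN
  constructor
  · field_simp
    grind
  · field_simp
    grind

lemma zcubic (h2 : (2 : F) = 0) (ω e u v τ : F) (hω : ω ^ 2 + ω + 1 = 0)
    (he0 : e ≠ 0) (he1 : e + 1 ≠ 0)
    (hu : u ^ 3 = 1 + ω * e) (hv : v ^ 3 = 1 + ω ^ 2 * e) (hτ : τ ^ 3 = 1) (x : F) :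
    (∃ s, s ^ 3 = τ ∧ x = zN u v s) ↔ (u * x + v ^ 2) ^ 3 = τ * (v * x + u ^ 2) ^ 3 := by
  have huv : u ^ 3 + v ^ 3 = e := by grind
  constructor
  · rintro ⟨s, hs, rfl⟩
    have hd := zden h2 ω e u v s hω he0 he1 hu hv (by rw [← hτ, ← hs]; ring)
    obtain ⟨h1, h3⟩ := zN_ab h2 e u v s huv hd
    rw [h1, h3, ← hs]
    ring
  · intro h
    have hb : v * x + u ^ 2 ≠ 0 := by
      intro hb
      have ha : u * x + v ^ 2 = 0 := by
        rw [hb] at h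
        simpa using h
      apply he0
      rw [← huv]
      grind
    refine ⟨_, ?_, zN_of_ab h2 e u v x he0 huv hb⟩
    rw [div_pow, h]
    field_simp

lemma zphi (h2 : (2 : F) = 0) (ω e h u v s : F) (hω : ω ^ 2 + ω + 1 = 0)
    (he0 : e ≠ 0) (he1 : e + 1 ≠ 0) (hh : u * v = h)
    (hu : u ^ 3 = 1 + ω * e) (hv : v ^ 3 = 1 + ω ^ 2 * e)
    (hs : s ^ 9 = 1) (y : F) : (zN u v s ^ 2 * y + h * y + e = 0 ↔ y = zN u v (s ^ 7)) := by
  have huv : u ^ 3 + v ^ 3 = e := by grind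
  have hd := zden h2 ω e u v s hω he0 he1 hu hv hs
  have hd7 := zden h2 ω e u v (s ^ 7) hω he0 he1 hu hv (by rw [← pow_mul, mul_comm, pow_mul, hs, one_pow])
  have hs0 : s ≠ 0 := by
    rintro rfl
    simp at hs
  have e1 : s ^ 2 * (v * s ^ 7 + u) = u * s ^ 2 + v := by linear_combination v * hs
  have e2 : s ^ 2 * (u ^ 2 * s ^ 7 + v ^ 2) = v ^ 2 * s ^ 2 + u ^ 2 := by linear_combination u ^ 2 * hs
  have hd' : u * s ^ 2 + v ≠ 0 := by
    rw [← e1]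
    exact mul_ne_zero (pow_ne_zero 2 hs0) hd7
  have e3 : zN u v (s ^ 7) = (v * s + u) ^ 2 / (u * s ^ 2 + v) := by
    unfold zN
    rw [← e1, ← mul_div_mul_left _ _ (pow_ne_zero 2 hs0), e2]
    congr 1
    linear_combination - u * v * s * h2
  have e4 : zN u v s ^ 2 + h = e * (u * s ^ 2 + v) / (v * s + u) ^ 2 := by
    unfold zN
    rw [← hh, ← huv, div_pow, div_add' _ _ _ (pow_ne_zero 2 hd)]
    congr 1
    linear_combination 2 * u ^ 2 * v ^ 2 * s * h2
  have e5 : zN u v s ^ 2 * y + h * y + e = (zN u v s ^ 2 + h) * y + e := by ring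
  rw [e5, e3, e4, eq_div_iff hd', div_mul_eq_mul_div, div_add' _ _ _ (pow_ne_zero 2 hd),
    div_eq_zero_iff]
  have hD := pow_ne_zero 2 hd
  generalize (v * s + u) ^ 2 = D at *
  constructor
  · rintro (h | h)
    · apply mul_left_cancel₀ he0
      linear_combination h - e * D * h2
    · exact absurd h hD
  · intro h
    left
    linear_combination e * h + e * D * h2

lemma zsurj (h2 : (2 : F) = 0) (e h u v x y z : F) (he0 : e ≠ 0) (hh : u * v = h)
    (huv : u ^ 3 + v ^ 3 = e)
    (h1 : x ^ 2 * y + h * y + e = 0) (h3 : y ^ 2 * z + h * z + e = 0)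
    (h4 : z ^ 2 * x + h * x + e = 0) : ∃ s, s ^ 9 = 1 ∧ x = zN u v s := by
  have A : ∀ x y : F, x ^ 2 * y + h * y + e = 0 →
      (u * y + v ^ 2) * (x ^ 2 + h) = (v * x + u ^ 2) ^ 2 ∧
      (v * y + u ^ 2) * (x ^ 2 + h) = (u * x + v ^ 2) ^ 2 := by
    intro x y h1
    constructor <;> grind
  obtain ⟨a1, b1⟩ := A x y h1
  obtain ⟨a2, b2⟩ := A y z h3
  obtain ⟨a3, b3⟩ := A z x h4
  generalize ha : u * x + v ^ 2 = a at *
  generalize hb : v * x + u ^ 2 = b at *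
  generalize u * y + v ^ 2 = a' at *
  generalize v * y + u ^ 2 = b' at *
  generalize u * z + v ^ 2 = a'' at *
  generalize v * z + u ^ 2 = b'' at *
  generalize x ^ 2 + h = c1 at *
  generalize y ^ 2 + h = c2 at *
  generalize z ^ 2 + h = c3 at *
  have p : a * (c3 * c2 ^ 2 * c1 ^ 4) = b ^ 8 := by
    calc a * (c3 * c2 ^ 2 * c1 ^ 4) = (a * c3) * c2 ^ 2 * c1 ^ 4 := by ring
      _ = (b'' * c2) ^ 2 * c1 ^ 4 := by rw [a3]; ring
      _ = (a' * c1) ^ 4 := by rw [b2]; ring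
      _ = b ^ 8 := by rw [a1]; ring
  have p' : b * (c3 * c2 ^ 2 * c1 ^ 4) = a ^ 8 := by
    calc b * (c3 * c2 ^ 2 * c1 ^ 4) = (b * c3) * c2 ^ 2 * c1 ^ 4 := by ring
      _ = (a'' * c2) ^ 2 * c1 ^ 4 := by rw [b3]; ring
      _ = (b' * c1) ^ 4 := by rw [a2]; ring
      _ = a ^ 8 := by rw [b1]; ring
  have p9 : a ^ 9 = b ^ 9 := by linear_combination b * p - a * p'
  have hb0 : b ≠ 0 := by
    intro hb0
    have ha0 : a = 0 := by
      rw [hb0] at p9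
      simpa using p9
    apply he0
    rw [← huv]
    grind
  refine ⟨a / b, by rw [div_pow, p9]; field_simp, ?_⟩
  have := zN_of_ab h2 e u v x he0 huv (by rw [hb]; exact hb0)
  rw [ha, hb] at this
  exact this

/-- Description of the root set in the `s`-coordinate. -/
lemma zgamma (h2 : (2 : F) = 0) (ω e h u v : F) (hω : ω ^ 2 + ω + 1 = 0)
    (he0 : e ≠ 0) (he1 : e + 1 ≠ 0) (hh : u * v = h)
    (hu : u ^ 3 = 1 + ω * e) (hv : v ^ 3 = 1 + ω ^ 2 * e)
    (q : ℕ) (hadd : ∀ x y : F, (x + y) ^ q = x ^ q + y ^ q) (hq0 : q ≠ 0)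
    (hhq : h ^ q = h) (heq : e ^ q = e)
    (f : F → F) (hf : ∀ s, s ^ 9 = 1 → f s ^ 9 = 1 ∧ zN u v s ^ q = zN u v (f s)) (x : F) :
    (x ^ q ^ 3 = x ∧ x ^ (2 * q ^ 2 + 1) + h * x + e = 0) ↔
      ∃ s, s ^ 9 = 1 ∧ f s = s ^ 7 ∧ x = zN u v s := by
  have huv : u ^ 3 + v ^ 3 = e := by grind
  have fr : ∀ x y : F, x ^ 2 * y + h * y + e = 0 → (x ^ q) ^ 2 * y ^ q + h * y ^ q + e = 0 := by
    intro x y hxy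
    have := congrArg (· ^ q) hxy
    simp only [hadd, mul_pow, hhq, heq, zero_pow hq0] at this
    rw [← this]
    ring
  have q2 : ∀ x : F, x ^ (q ^ 2) = (x ^ q) ^ q := fun x => by rw [← pow_mul, sq]
  have q3 : ∀ x : F, x ^ (q ^ 3) = ((x ^ q) ^ q) ^ q := fun x => by
    rw [← pow_mul, ← pow_mul]; ring_nf
  have hx2 : x ^ (2 * q ^ 2 + 1) = ((x ^ q) ^ q) ^ 2 * x := by
    rw [pow_succ, mul_comm 2, pow_mul, q2]
  rw [hx2, q3]
  have h79 : ∀ s : F, s ^ 9 = 1 → (s ^ 7) ^ 9 = 1 := by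
    intro s hs
    rw [← pow_mul, mul_comm, pow_mul, hs, one_pow]
  constructor
  · rintro ⟨hx3, hx⟩
    have k1 := fr _ _ hx
    rw [hx3] at k1
    have k2 := fr _ _ k1
    obtain ⟨s, hs, rfl⟩ := zsurj h2 e h u v _ _ _ he0 hh huv k1 k2 hx
    refine ⟨s, hs, ?_, rfl⟩
    obtain ⟨f1, f2⟩ := hf s hs
    rw [f2] at k1
    have := (zphi h2 ω e h u v s hω he0 he1 hh hu hv hs _).mp k1
    exact zN_inj h2 e u v _ _ he0 huv (zden h2 ω e u v _ hω he0 he1 hu hv f1)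
      (zden h2 ω e u v _ hω he0 he1 hu hv (h79 s hs)) this
  · rintro ⟨s, hs, hfs, rfl⟩
    obtain ⟨f1, f2⟩ := hf s hs
    rw [hfs] at f2
    have P := zphi h2 ω e h u v s hω he0 he1 hh hu hv hs
    have k1 := (P _).mpr f2
    have P2 := zphi h2 ω e h u v _ hω he0 he1 hh hu hv (h79 s hs)
    have k2 := fr _ _ k1
    have k3 := fr _ _ k2
    rw [f2] at k2 k3 ⊢
    have f3 := (P2 _).mp k2
    have P3 := zphi h2 ω e h u v _ hω he0 he1 hh hu hv (h79 _ (h79 s hs))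
    rw [f3] at k3 ⊢
    have f4 := (P3 _).mp k3
    have : ((s ^ 7) ^ 7) ^ 7 = s := by
      calc ((s ^ 7) ^ 7) ^ 7 = (s ^ 9) ^ 38 * s := by ring
        _ = s := by rw [hs]; ring
    rw [this] at f4
    refine ⟨f4, ?_⟩
    rw [f4] at k3
    exact k3

lemma zfrobI (u v ρ : F) (q : ℕ) (hadd : ∀ x y : F, (x + y) ^ q = x ^ q + y ^ q)
    (hρ : ρ ^ 3 = 1) (huq : u ^ q = ρ * u) (hvq : v ^ q = ρ ^ 2 * v) (s : F) :
    zN u v s ^ q = zN u v (ρ * s ^ q) := by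
  have hρ0 : ρ ≠ 0 := by
    rintro rfl
    simp at hρ
  unfold zN
  rw [div_pow, hadd, hadd, mul_pow, mul_pow, pow_right_comm, pow_right_comm v, huq, hvq,
    ← mul_div_mul_left (u ^ 2 * (ρ * s ^ q) + v ^ 2) _ hρ0]
  congr 1
  · linear_combination ρ * v ^ 2 * hρ
  · ring

lemma zfrobII (u v ρ : F) (q : ℕ) (hadd : ∀ x y : F, (x + y) ^ q = x ^ q + y ^ q)
    (hρ : ρ ^ 3 = 1) (huq : u ^ q = ρ * v) (hvq : v ^ q = ρ ^ 2 * u) (s : F) (hs : s ^ 9 = 1) :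
    zN u v s ^ q = zN u v (ρ ^ 2 * (s ^ q) ^ 8) := by
  have hρ0 : ρ ≠ 0 := by
    rintro rfl
    simp at hρ
  have hs0 : s ^ q ≠ 0 := by
    apply pow_ne_zero
    rintro rfl
    simp at hs
  have hsq : (s ^ q) ^ 9 = 1 := by rw [pow_right_comm, hs, one_pow]
  unfold zN
  rw [div_pow, hadd, hadd, mul_pow, mul_pow, pow_right_comm, pow_right_comm v, huq, hvq,
    ← mul_div_mul_left (u ^ 2 * (ρ ^ 2 * (s ^ q) ^ 8) + v ^ 2) _
      (mul_ne_zero (pow_ne_zero 2 hρ0) hs0)]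
  generalize s ^ q = t at *
  congr 1
  · linear_combination - ρ ^ 4 * u ^ 2 * hsq
  · linear_combination (- ρ ^ 4 * v) * hsq - ρ * v * hρ

lemma zpow_red (x : F) (d k r q : ℕ) (hx : x ^ d = 1) (hq : q = d * k + r) : x ^ q = x ^ r := by
  rw [hq, pow_add, pow_mul, hx, one_pow, one_mul]

lemma zroot3 (ω ρ : F) (hω : ω ^ 2 + ω + 1 = 0) (hρ : ρ ^ 3 = 1) :
    ρ = 1 ∨ ρ = ω ∨ ρ = ω ^ 2 := by
  have hω3 : ω ^ 3 = 1 := by linear_combination (ω - 1) * hω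
  have hf : (ρ - 1) * ((ρ - ω) * (ρ - ω ^ 2)) = 0 := by
    linear_combination hρ + (ρ - ρ ^ 2) * hω + (ρ - 1) * hω3
  rcases mul_eq_zero.mp hf with h | h
  · left; linear_combination h
  · rcases mul_eq_zero.mp h with h | h
    · right; left; linear_combination h
    · right; right; linear_combination h

set_option maxHeartbeats 2000000 in
lemma zkey (h2 : (2 : F) = 0) (ω e h u v : F) (hω : ω ^ 2 + ω + 1 = 0)
    (he0 : e ≠ 0) (he1 : e + 1 ≠ 0) (hh : u * v = h) (hu0 : u ≠ 0) (hv0 : v ≠ 0)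
    (hu : u ^ 3 = 1 + ω * e) (hv : v ^ 3 = 1 + ω ^ 2 * e)
    (q : ℕ) (hadd : ∀ x y : F, (x + y) ^ q = x ^ q + y ^ q)
    (hq9 : q % 9 = 1 ∨ q % 9 = 4 ∨ q % 9 = 5 ∨ q % 9 = 8)
    (hhq : h ^ q = h) (heq : e ^ q = e) :
    ∃ τ : F, τ ^ 3 = 1 ∧
      (∀ x : F, (x ^ q ^ 3 = x ∧ x ^ (2 * q ^ 2 + 1) + h * x + e = 0) ↔
        ∃ s, s ^ 3 = τ ∧ x = zN u v s) ∧
      (u ^ q ^ 2 = u ↔ τ = 1) ∧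
      ((e + ω) ^ ((q ^ 2 - 1) / 3) = ω ↔ τ = ω ^ 2) := by
  have hq0 : q ≠ 0 := by rintro rfl; simp at hq9
  have hω3 : ω ^ 3 = 1 := by linear_combination (ω - 1) * hω
  have hω0 : ω ≠ 0 := by rintro rfl; simp at hω
  have hω1 : ω ≠ 1 := by
    rintro rfl
    apply one_ne_zero (α := F)
    linear_combination hω - h2
  have hω21 : ω ^ 2 ≠ 1 := fun h => hω1 (by linear_combination hω3 - ω * h)
  have hω22 : ω ^ 2 ≠ ω := fun h => hω1 (by linear_combination hω3 - (ω+1) * h)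
  have huvq : u ^ q * v ^ q = u * v := by rw [← mul_pow, hh, hhq]
  have q2 : ∀ x : F, x ^ (q ^ 2) = (x ^ q) ^ q := fun x => by rw [← pow_mul, sq]
  -- reduction to the `s`-coordinate
  have core : ∀ (f : F → F) (τ : F), τ ^ 3 = 1 →
      (∀ s, s ^ 9 = 1 → f s ^ 9 = 1 ∧ zN u v s ^ q = zN u v (f s)) →
      (∀ s, s ^ 9 = 1 → (f s = s ^ 7 ↔ s ^ 3 = τ)) →
      (∀ x : F, (x ^ q ^ 3 = x ∧ x ^ (2 * q ^ 2 + 1) + h * x + e = 0) ↔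
        ∃ s, s ^ 3 = τ ∧ x = zN u v s) := by
    intro f τ hτ hf hfτ x
    rw [zgamma h2 ω e h u v hω he0 he1 hh hu hv q hadd hq0 hhq heq f hf]
    constructor
    · rintro ⟨s, hs, hfs, rfl⟩
      exact ⟨s, (hfτ s hs).mp hfs, rfl⟩
    · rintro ⟨s, hs, rfl⟩
      have hs9 : s ^ 9 = 1 := by rw [← hτ, ← hs]; ring
      exact ⟨s, hs9, (hfτ s hs9).mpr hs, rfl⟩
  -- the cubic character
  have chi : ∀ (n : ℕ) (κ : F), q ^ 2 = 3 * n + 1 → v ^ q ^ 2 = κ * v →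
      (e + ω) ^ ((q ^ 2 - 1) / 3) = ω ^ n * κ := by
    intro n κ hn hκ
    have h1 : (q ^ 2 - 1) / 3 = n := by omega
    have h3 : e + ω = ω * v ^ 3 := by rw [hv]; linear_combination (- e) * hω3
    rw [h1, h3, mul_pow, ← pow_mul]
    congr 1
    apply mul_right_cancel₀ hv0
    rw [← hκ, hn, pow_succ]
  have s9 : ∀ (ρ s : F) (a b : ℕ), ρ ^ 3 = 1 → s ^ 9 = 1 → (ρ ^ a * s ^ b) ^ 9 = 1 := by
    intro ρ s a b h1 h3
    calc (ρ ^ a * s ^ b) ^ 9 = ((ρ ^ 3) ^ a) ^ 3 * (s ^ 9) ^ b := by ring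
      _ = 1 := by rw [h1, h3]; simp
  obtain ⟨k, r, hqk, hr⟩ : ∃ k r, q = 9 * k + r ∧ (r = 1 ∨ r = 4 ∨ r = 5 ∨ r = 8) :=
    ⟨q / 9, q % 9, (Nat.div_add_mod q 9).symm, hq9⟩
  have hsq : ∀ s : F, s ^ 9 = 1 → s ^ q = s ^ r := fun s hs => zpow_red s 9 k r q hs hqk
  have h3q : ∀ s : F, s ^ 3 = 1 → s ^ q = s ^ r := fun s hs =>
    zpow_red s 3 (3 * k) r q hs (by rw [hqk]; ring)
  have hωq := h3q ω hω3
  have hu3q : (u ^ q) ^ 3 = 1 + ω ^ r * e := by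
    rw [pow_right_comm, hu, hadd, mul_pow, heq, one_pow, hωq]
  have hu3n : u ^ 3 ≠ 0 := pow_ne_zero 3 hu0
  have hv3n : v ^ 3 ≠ 0 := pow_ne_zero 3 hv0
  rcases hr with rfl | rfl | rfl | rfl
  · -- r = 1
    obtain ⟨ρ, hρ, huq, hvq⟩ : ∃ ρ : F, ρ ^ 3 = 1 ∧ u ^ q = ρ * u ∧ v ^ q = ρ ^ 2 * v := by
      have h1 : (u ^ q / u) ^ 3 = 1 := by
        rw [div_pow, hu3q, div_eq_one_iff_eq hu3n, hu]; ring
      have h3 : u ^ q = (u ^ q / u) * u := by field_simp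
      refine ⟨u ^ q / u, h1, h3, ?_⟩
      generalize u ^ q / u = ρ at *
      have hρ0 : ρ ≠ 0 := by rintro rfl; simp at h1
      rw [h3] at huvq
      apply mul_left_cancel₀ (mul_ne_zero hρ0 hu0)
      linear_combination huvq - u * v * h1
    have hρq := h3q ρ hρ
    refine ⟨ρ ^ 2, by linear_combination (ρ ^ 3 + 1) * hρ, core (fun s => ρ * s ^ q) _
      (by linear_combination (ρ ^ 3 + 1) * hρ) ?_ ?_, ?_, ?_⟩
    · intro s hs
      refine ⟨?_, zfrobI u v ρ q hadd hρ huq hvq s⟩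
      simpa using s9 ρ s 1 q hρ hs
    · intro s hs
      simp only [hsq s hs]
      have hs0 : s ≠ 0 := by rintro rfl; simp at hs
      constructor
      · intro h
        have : ρ = s ^ 6 := by
          apply mul_right_cancel₀ hs0
          linear_combination h
        rw [this]; linear_combination (-s ^ 3) * hs
      · intro h
        linear_combination (- (ρ ^ 2 * s + s ^ 4)) * h - ρ * s * hρ
    · rw [q2, huq, mul_pow, huq, hρq]
      constructor
      · intro h
        apply mul_right_cancel₀ hu0
        linear_combination h
      · intro h
        linear_combination u * h
    · have hvq2 : v ^ q ^ 2 = ρ * v := by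
        rw [q2, hvq, mul_pow, hvq, pow_right_comm, hρq]
        linear_combination ρ * v * hρ
      rw [chi (27 * k ^ 2 + 6 * k) ρ (by rw [hqk]; ring) hvq2,
        zpow_red ω 3 (9 * k ^ 2 + 2 * k) 0 _ hω3 (by ring)]
      rcases zroot3 ω ρ hω hρ with h | h | h <;> subst h <;> clear * - hω hω1 hω21 hω22 hω3 <;> grind
  · -- r = 4
    obtain ⟨ρ, hρ, huq, hvq⟩ : ∃ ρ : F, ρ ^ 3 = 1 ∧ u ^ q = ρ * u ∧ v ^ q = ρ ^ 2 * v := by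
      have h1 : (u ^ q / u) ^ 3 = 1 := by
        rw [div_pow, hu3q, div_eq_one_iff_eq hu3n, hu]; linear_combination (ω * e) * hω3
      have h3 : u ^ q = (u ^ q / u) * u := by field_simp
      refine ⟨u ^ q / u, h1, h3, ?_⟩
      generalize u ^ q / u = ρ at *
      have hρ0 : ρ ≠ 0 := by rintro rfl; simp at h1
      rw [h3] at huvq
      apply mul_left_cancel₀ (mul_ne_zero hρ0 hu0)
      linear_combination huvq - u * v * h1
    have hρq := h3q ρ hρ
    refine ⟨ρ, hρ, core (fun s => ρ * s ^ q) _ hρ ?_ ?_, ?_, ?_⟩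
    · intro s hs
      refine ⟨?_, zfrobI u v ρ q hadd hρ huq hvq s⟩
      simpa using s9 ρ s 1 q hρ hs
    · intro s hs
      simp only [hsq s hs]
      have hs0 : s ≠ 0 := by rintro rfl; simp at hs
      constructor
      · intro h
        apply mul_right_cancel₀ (pow_ne_zero 4 hs0)
        linear_combination - h
      · intro h
        linear_combination (- s ^ 4) * h
    · rw [q2, huq, mul_pow, huq, hρq]
      constructor
      · intro h
        have : ρ ^ 5 = 1 := by
          apply mul_right_cancel₀ hu0
          linear_combination h
        linear_combination (ρ ^ 5 + 1) * this - ρ * (ρ ^ 6 + ρ ^ 3 + 1) * hρ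
      · intro h
        rw [h]; ring
    · have hvq2 : v ^ q ^ 2 = ρ * v := by
        rw [q2, hvq, mul_pow, hvq, pow_right_comm, hρq]
        linear_combination ρ * v * (ρ ^ 6 + ρ ^ 3 + 1) * hρ
      rw [chi (27 * k ^ 2 + 24 * k + 5) ρ (by rw [hqk]; ring) hvq2,
        zpow_red ω 3 (9 * k ^ 2 + 8 * k + 1) 2 _ hω3 (by ring)]
      rcases zroot3 ω ρ hω hρ with h | h | h <;> subst h <;> clear * - hω hω1 hω21 hω22 hω3 <;> grind
  · -- r = 5
    obtain ⟨ρ, hρ, huq, hvq⟩ : ∃ ρ : F, ρ ^ 3 = 1 ∧ u ^ q = ρ * v ∧ v ^ q = ρ ^ 2 * u := by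
      have h1 : (u ^ q / v) ^ 3 = 1 := by
        rw [div_pow, hu3q, div_eq_one_iff_eq hv3n, hv]; linear_combination (ω ^ 2 * e) * hω3
      have h3 : u ^ q = (u ^ q / v) * v := by field_simp
      refine ⟨u ^ q / v, h1, h3, ?_⟩
      generalize u ^ q / v = ρ at *
      have hρ0 : ρ ≠ 0 := by rintro rfl; simp at h1
      rw [h3] at huvq
      apply mul_left_cancel₀ (mul_ne_zero hρ0 hv0)
      linear_combination huvq - u * v * h1
    have hρq := h3q ρ hρ
    refine ⟨ρ ^ 2, by linear_combination (ρ ^ 3 + 1) * hρ, core (fun s => ρ ^ 2 * (s ^ q) ^ 8) _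
      (by linear_combination (ρ ^ 3 + 1) * hρ) ?_ ?_, ?_, ?_⟩
    · intro s hs
      refine ⟨?_, zfrobII u v ρ q hadd hρ huq hvq s hs⟩
      simpa [← pow_mul] using s9 ρ s 2 (q * 8) hρ hs
    · intro s hs
      simp only [hsq s hs]
      have hs0 : s ≠ 0 := by rintro rfl; simp at hs
      have e1 : (s ^ 5) ^ 8 = s ^ 4 := by
        linear_combination s ^ 4 * (s ^ 27 + s ^ 18 + s ^ 9 + 1) * hs
      rw [e1]
      constructor
      · intro h
        apply mul_right_cancel₀ (pow_ne_zero 4 hs0)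
        linear_combination - h
      · intro h
        linear_combination (- s ^ 4) * h
    · rw [q2, huq, mul_pow, hvq, hρq]
      have e1 : ρ ^ 5 * (ρ ^ 2 * u) = ρ * u := by
        linear_combination ρ * u * (ρ ^ 3 + 1) * hρ
      rw [e1]
      constructor
      · intro h
        have : ρ = 1 := by
          apply mul_right_cancel₀ hu0
          linear_combination h
        rw [this]; ring
      · intro h
        linear_combination (- ρ * u) * h + u * hρ
    · have hvq2 : v ^ q ^ 2 = ρ ^ 2 * v := by
        rw [q2, hvq, mul_pow, huq, pow_right_comm, hρq]
        linear_combination ρ ^ 2 * v * (ρ ^ 6 + ρ ^ 3 + 1) * hρ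
      rw [chi (27 * k ^ 2 + 30 * k + 8) (ρ ^ 2) (by rw [hqk]; ring) hvq2,
        zpow_red ω 3 (9 * k ^ 2 + 10 * k + 2) 2 _ hω3 (by ring)]
      rcases zroot3 ω ρ hω hρ with h | h | h <;> subst h <;> clear * - hω hω1 hω21 hω22 hω3 <;> grind
  · -- r = 8
    obtain ⟨ρ, hρ, huq, hvq⟩ : ∃ ρ : F, ρ ^ 3 = 1 ∧ u ^ q = ρ * v ∧ v ^ q = ρ ^ 2 * u := by
      have h1 : (u ^ q / v) ^ 3 = 1 := by
        rw [div_pow, hu3q, div_eq_one_iff_eq hv3n, hv]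
        linear_combination (ω ^ 2 * e) * (ω ^ 3 + 1) * hω3
      have h3 : u ^ q = (u ^ q / v) * v := by field_simp
      refine ⟨u ^ q / v, h1, h3, ?_⟩
      generalize u ^ q / v = ρ at *
      have hρ0 : ρ ≠ 0 := by rintro rfl; simp at h1
      rw [h3] at huvq
      apply mul_left_cancel₀ (mul_ne_zero hρ0 hv0)
      linear_combination huvq - u * v * h1
    have hρq := h3q ρ hρ
    refine ⟨ρ, hρ, core (fun s => ρ ^ 2 * (s ^ q) ^ 8) _ hρ ?_ ?_, ?_, ?_⟩
    · intro s hs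
      refine ⟨?_, zfrobII u v ρ q hadd hρ huq hvq s hs⟩
      simpa [← pow_mul] using s9 ρ s 2 (q * 8) hρ hs
    · intro s hs
      simp only [hsq s hs]
      have hs0 : s ≠ 0 := by rintro rfl; simp at hs
      have e1 : (s ^ 8) ^ 8 = s := by
        calc (s ^ 8) ^ 8 = (s ^ 9) ^ 7 * s := by ring
          _ = s := by rw [hs]; ring
      rw [e1]
      constructor
      · intro h
        have : ρ ^ 2 = s ^ 6 := by
          apply mul_right_cancel₀ hs0
          linear_combination h
        have h4 : ρ ^ 4 = s ^ 12 := by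
          linear_combination (ρ ^ 2 + s ^ 6) * this
        linear_combination ρ * hρ - h4 - s ^ 3 * hs
      · intro h
        rw [← h]; ring
    · rw [q2, huq, mul_pow, hvq, hρq]
      have e1 : ρ ^ 8 * (ρ ^ 2 * u) = ρ * u := by
        linear_combination ρ * u * (ρ ^ 6 + ρ ^ 3 + 1) * hρ
      rw [e1]
      constructor
      · intro h
        apply mul_right_cancel₀ hu0
        linear_combination h
      · intro h
        linear_combination u * h
    · have hvq2 : v ^ q ^ 2 = ρ ^ 2 * v := by
        rw [q2, hvq, mul_pow, huq, pow_right_comm, hρq]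
        linear_combination ρ ^ 2 * v * (ρ ^ 12 + ρ ^ 9 + ρ ^ 6 + ρ ^ 3 + 1) * hρ
      rw [chi (27 * k ^ 2 + 48 * k + 21) (ρ ^ 2) (by rw [hqk]; ring) hvq2,
        zpow_red ω 3 (9 * k ^ 2 + 16 * k + 7) 0 _ hω3 (by ring)]
      rcases zroot3 ω ρ hω hρ with h | h | h <;> subst h <;> clear * - hω hω1 hω21 hω22 hω3 <;> grind


set_option maxHeartbeats 2000000 in
lemma zfinal [IsAlgClosed F] (h2 : (2 : F) = 0)
    (q : ℕ) (hadd : ∀ x y : F, (x + y) ^ q = x ^ q + y ^ q)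
    (hq9 : q % 9 = 1 ∨ q % 9 = 4 ∨ q % 9 = 5 ∨ q % 9 = 8)
    (ω : F) (hω4 : ω ^ 4 = ω) (hω2 : ω ^ 2 ≠ ω)
    (h e : F) (hhq : h ^ q = h) (hh2 : h ^ 2 ≠ h)
    (heq : e ^ q = e) (he2 : e ^ 2 ≠ e)
    (hcube : h ^ 3 = e ^ 2 + e + 1)
    (Γ : Set F)
    (hΓ : Γ = {x : F | x ^ q ^ 3 = x ∧ x ^ (2 * q ^ 2 + 1) + h * x + e = 0}) :
    Γ.ncard = 3 ∧
    (Γ ⊆ {x : F | x ^ q = x} ↔ ∃ y : F, y ^ q ^ 2 = y ∧ y ^ 3 = 1 + ω * e) ∧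
    (¬ Γ ⊆ {x : F | x ^ q = x} →
      Γ ⊆ {x : F | x ^ q ^ 3 = x ∧ x ^ q ≠ x} ∧
      ((e + ω) ^ ((q ^ 2 - 1) / 3) = ω →
        Γ = {x : F | x ^ 3 + h ^ 2 * x ^ 2 + (e + 1) * h * x + 1 = 0}) ∧
      ((e + ω) ^ ((q ^ 2 - 1) / 3) ≠ ω →
        Γ = {x : F | (e + 1) * x ^ 3 + h ^ 2 * x ^ 2 + h * x + (e ^ 2 + 1) = 0})) := by
  have hω : ω ^ 2 + ω + 1 = 0 := by
    have h1 : (ω ^ 2 - ω) * (ω ^ 2 + ω + 1) = 0 := by linear_combination hω4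
    rcases mul_eq_zero.mp h1 with h | h
    · exact absurd (sub_eq_zero.mp h) hω2
    · exact h
  have hω3 : ω ^ 3 = 1 := by linear_combination (ω - 1) * hω
  have hω1 : ω ≠ 1 := by
    rintro rfl
    simp at hω2
  have hω21 : ω ^ 2 ≠ 1 := fun h => hω1 (by linear_combination hω3 - ω * h)
  have hω0 : ω ≠ 0 := by
    rintro rfl
    simp at hω2
  have he0 : e ≠ 0 := by
    rintro rfl
    simp at he2
  have he1 : e + 1 ≠ 0 := by
    intro h
    apply he2
    linear_combination e * h - e * h2
  have hh0 : h ≠ 0 := by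
    rintro rfl
    simp at hh2
  obtain ⟨u, hu⟩ := IsAlgClosed.exists_pow_nat_eq (1 + ω * e) (n := 3) (by norm_num)
  have hprod : (1 + ω * e) * (1 + ω ^ 2 * e) = h ^ 3 := by
    rw [hcube]
    linear_combination e ^ 2 * hω3 + e * hω - e * h2
  have hu0 : u ≠ 0 := by
    rintro rfl
    rw [← hu] at hprod
    apply hh0
    simpa using hprod.symm
  obtain ⟨v, hh⟩ : ∃ v, u * v = h := ⟨h / u, by field_simp⟩
  have hv0 : v ≠ 0 := by
    rintro rfl
    exact hh0 (by simpa using hh.symm)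
  have hv : v ^ 3 = 1 + ω ^ 2 * e := by
    apply mul_left_cancel₀ (pow_ne_zero 3 hu0)
    rw [← mul_pow, hh, ← hprod, hu]
  have huv : u ^ 3 + v ^ 3 = e := by
    rw [hu, hv]
    linear_combination e * hω + (1 - e) * h2
  obtain ⟨τ, hτ, hG, hκ, hχ⟩ := zkey h2 ω e h u v hω he0 he1 hh hu0 hv0 hu hv q hadd hq9 hhq heq
  have hΓ' : Γ = {x : F | ∃ s, s ^ 3 = τ ∧ x = zN u v s} := by
    rw [hΓ]
    ext x
    exact hG x
  have hs9 : ∀ s : F, s ^ 3 = τ → s ^ 9 = 1 := by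
    intro s hs
    rw [← hτ, ← hs]
    ring
  have inj : ∀ s t : F, s ^ 9 = 1 → t ^ 9 = 1 → zN u v s = zN u v t → s = t := by
    intro s t hs ht
    exact zN_inj h2 e u v s t he0 huv (zden h2 ω e u v s hω he0 he1 hu hv hs)
      (zden h2 ω e u v t hω he0 he1 hu hv ht)
  obtain ⟨s0, hs0⟩ := IsAlgClosed.exists_pow_nat_eq τ (n := 3) (by norm_num)
  have hs00 : s0 ≠ 0 := by
    rintro rfl
    rw [← hs0] at hτ
    simp at hτ
  -- fixed points of Frobenius in `Γ`
  have hfix : ∀ s : F, s ^ 3 = τ → (zN u v s ^ q = zN u v s ↔ τ = 1) := by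
    intro s hs
    have hs9' := hs9 s hs
    obtain ⟨hx3, hx⟩ := (hG (zN u v s)).mpr ⟨s, hs, rfl⟩
    have P := zphi h2 ω e h u v s hω he0 he1 hh hu hv hs9'
    have h79 : (s ^ 7) ^ 9 = 1 := by
      rw [← pow_mul, mul_comm, pow_mul, hs9', one_pow]
    have h1 : zN u v s ^ q = zN u v (s ^ 7) := by
      rw [← P]
      have hq0 : q ≠ 0 := by
        rintro rfl
        simp at hq9
      have := congrArg (· ^ q) hx
      simp only [hadd, mul_pow, hhq, heq, zero_pow hq0] at this
      rw [← this]
      congr 2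
      have e1 : (zN u v s ^ (2 * q ^ 2 + 1)) ^ q = (zN u v s ^ q ^ 3) ^ 2 * zN u v s ^ q := by
        rw [← pow_mul, ← pow_mul, ← pow_add]
        congr 1
        ring
      rw [e1, hx3]
    rw [h1]
    constructor
    · intro h3
      have h4 := inj _ _ h79 hs9' h3
      have hsne : s ≠ 0 := by
        rintro rfl
        simp at hs9'
      have h6 : s ^ 6 = 1 := by
        apply mul_right_cancel₀ hsne
        linear_combination h4
      rw [← hs]
      linear_combination hs9' - s ^ 3 * h6
    · intro h3
      rw [h3] at hs
      congr 1
      linear_combination s * (s ^ 3 + 1) * hs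
  have hsub : Γ ⊆ {x : F | x ^ q = x} ↔ τ = 1 := by
    constructor
    · intro h3
      have : zN u v s0 ∈ Γ := by
        rw [hΓ']
        exact ⟨s0, hs0, rfl⟩
      exact (hfix s0 hs0).mp (h3 this)
    · rintro h3 x hx
      rw [hΓ'] at hx
      obtain ⟨s, hs, rfl⟩ := hx
      exact (hfix s hs).mpr h3
  refine ⟨?_, ?_, ?_⟩
  · rw [Set.ncard_eq_three]
    have c1 : (ω * s0) ^ 3 = τ := by rw [mul_pow, hω3, one_mul, hs0]
    have c2 : (ω ^ 2 * s0) ^ 3 = τ := by rw [mul_pow, ← pow_mul, mul_comm 2 3, pow_mul, hω3, one_pow, one_mul, hs0]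
    refine ⟨zN u v s0, zN u v (ω * s0), zN u v (ω ^ 2 * s0), ?_, ?_, ?_, ?_⟩
    · intro h3
      have := inj _ _ (hs9 _ hs0) (hs9 _ c1) h3
      apply hω1
      apply mul_right_cancel₀ hs00
      linear_combination - this
    · intro h3
      have := inj _ _ (hs9 _ hs0) (hs9 _ c2) h3
      apply hω21
      apply mul_right_cancel₀ hs00
      linear_combination - this
    · intro h3
      have := inj _ _ (hs9 _ c1) (hs9 _ c2) h3
      apply hω2
      apply mul_right_cancel₀ hs00
      linear_combination - this
    · rw [hΓ']
      ext x
      simp only [Set.mem_ofPred_eq, Set.mem_insert_iff, Set.mem_singleton_iff]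
      constructor
      · rintro ⟨s, hs, rfl⟩
        have h3 : (s / s0) ^ 3 = 1 := by
          rw [div_pow, hs, hs0, div_self]
          rintro rfl
          simp at hτ
        have h4 : s = (s / s0) * s0 := by field_simp
        rcases zroot3 ω _ hω h3 with h5 | h5 | h5 <;> rw [h5] at h4
        · left
          rw [h4, one_mul]
        · right; left
          rw [h4]
        · right; right
          rw [h4]
      · rintro (rfl | rfl | rfl)
        · exact ⟨_, hs0, rfl⟩
        · exact ⟨_, c1, rfl⟩
        · exact ⟨_, c2, rfl⟩
  · rw [hsub, ← hκ]
    constructor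
    · intro h3
      exact ⟨u, h3, hu⟩
    · rintro ⟨y, hy, hy3⟩
      have h3 : (u / y) ^ 3 = 1 := by
        rw [div_pow, hu, hy3, div_self]
        rw [← hu]
        exact pow_ne_zero 3 hu0
      have hy0 : y ≠ 0 := by
        rintro rfl
        simp at h3
      have h4 : u = (u / y) * y := by field_simp
      have hq3 : q ^ 2 % 3 = 1 := by
        have : q % 3 = 1 ∨ q % 3 = 2 := by omega
        rcases this with h | h <;> simp [Nat.pow_mod, h]
      have h5 : (u / y) ^ q ^ 2 = u / y := by
        rw [zpow_red (u / y) 3 (q ^ 2 / 3) 1 (q ^ 2) h3 (by omega), pow_one]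
      rw [h4, mul_pow, h5, hy]
  · intro hns
    rw [hsub] at hns
    refine ⟨?_, ?_, ?_⟩
    · intro x hx
      rw [hΓ'] at hx
      obtain ⟨s, hs, rfl⟩ := hx
      exact ⟨((hG _).mpr ⟨s, hs, rfl⟩).1, fun h3 => hns ((hfix s hs).mp h3)⟩
    · intro h3
      have h4 := hχ.mp h3
      rw [hΓ']
      ext x
      simp only [Set.mem_ofPred_eq]
      rw [zcubic h2 ω e u v τ hω he0 he1 hu hv hτ x, h4]
      have key : (u * x + v ^ 2) ^ 3 - ω ^ 2 * (v * x + u ^ 2) ^ 3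
          = ω * (x ^ 3 + h ^ 2 * x ^ 2 + (e + 1) * h * x + 1) := by
        rw [← hh]
        clear * - h2 hω hu hv
        grind
      rw [← sub_eq_zero, key, mul_eq_zero]
      simp [hω0]
    · intro h3
      have h4 : τ = ω := by
        rcases zroot3 ω τ hω hτ with h | h | h
        · exact absurd h hns
        · exact h
        · exact absurd (hχ.mpr h) h3
      rw [hΓ']
      ext x
      simp only [Set.mem_ofPred_eq]
      rw [zcubic h2 ω e u v τ hω he0 he1 hu hv hτ x, h4]
      have key : (u * x + v ^ 2) ^ 3 - ω * (v * x + u ^ 2) ^ 3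
          = ω ^ 2 * ((e + 1) * x ^ 3 + h ^ 2 * x ^ 2 + h * x + (e ^ 2 + 1)) := by
        rw [← hh]
        clear * - h2 hω hu hv
        grind
      rw [← sub_eq_zero, key, mul_eq_zero]
      simp [hω0]

end ZhengHelpers

/-- Proposition 7.2: the set `Γ` of roots in `F_{q³}` of `X^(2q²+1) + hX + e` has exactly
three elements; `Γ ⊆ F_q` iff `1 + ωe` is a cube in `F_{q²}`; and if `Γ ⊄ F_q` then
`Γ ⊆ F_{q³} \ F_q` and `Γ` is the set of roots of the stated cubic. -/
theorem zheng_refined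
    (m : ℕ) (hm : 0 < m) (hm3 : ¬ m % 3 = 1)
    (q : ℕ) (hq : q = 2 ^ m)
    (ω : K) (hω4 : ω ^ 4 = ω) (hω2 : ω ^ 2 ≠ ω)
    (h e : K) (hhq : h ^ q = h) (hh2 : h ^ 2 ≠ h)
    (heq : e ^ q = e) (he2 : e ^ 2 ≠ e)
    (hcube : h ^ 3 = e ^ 2 + e + 1)
    (Γ : Set K)
    (hΓ : Γ = {x : K | x ^ q ^ 3 = x ∧ x ^ (2 * q ^ 2 + 1) + h * x + e = 0}) :
    Γ.ncard = 3 ∧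
    (Γ ⊆ {x : K | x ^ q = x} ↔ ∃ y : K, y ^ q ^ 2 = y ∧ y ^ 3 = 1 + ω * e) ∧
    (¬ Γ ⊆ {x : K | x ^ q = x} →
      Γ ⊆ {x : K | x ^ q ^ 3 = x ∧ x ^ q ≠ x} ∧
      ((e + ω) ^ ((q ^ 2 - 1) / 3) = ω →
        Γ = {x : K | x ^ 3 + h ^ 2 * x ^ 2 + (e + 1) * h * x + 1 = 0}) ∧
      ((e + ω) ^ ((q ^ 2 - 1) / 3) ≠ ω →
        Γ = {x : K | (e + 1) * x ^ 3 + h ^ 2 * x ^ 2 + h * x + (e ^ 2 + 1) = 0})) := by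
  have h2 : (2 : K) = 0 := by
    have := CharP.cast_eq_zero K 2
    exact_mod_cast this
  have hadd : ∀ x y : K, (x + y) ^ q = x ^ q + y ^ q := by
    intro x y
    rw [hq]
    exact add_pow_expChar_pow x y 2 m
  have hq9 : q % 9 = 1 ∨ q % 9 = 4 ∨ q % 9 = 5 ∨ q % 9 = 8 := by
    have h6 : q % 9 = 2 ^ (m % 6) % 9 := by
      rw [hq]
      conv_lhs => rw [← Nat.div_add_mod m 6, pow_add, pow_mul, Nat.mul_mod, Nat.pow_mod]
      norm_num
    have hlt : m % 6 < 6 := Nat.mod_lt _ (by norm_num)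
    have h63 : m % 6 % 3 ≠ 1 := by omega
    rw [h6]
    generalize m % 6 = r at hlt h63
    interval_cases r <;> simp_all
  exact zfinal h2 q hadd hq9 ω hω4 hω2 h e hhq hh2 heq he2 hcube Γ hΓ
end

section
/- The polynomial X^(2q^ℓ+1) + hX + e has either zero or three roots in μ_{q²+q+1}. It has three such roots if and only if (e+ω)^((q²−1)/3) = ω^(−ℓ), in which case these three roots are precisely the roots of X³ + h²X² + (e+1)hX + 1. -/
lemma zz_toCubic {F : Type*} [Field F] (h2 : (2:F) = 0) {h e x y z : F} (he : e ≠ 0)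
    (hc : h^3 = e^2+e+1) (hxyz : x*y*z = 1) (E1 : x*y^2+h*x+e=0) (E2 : y*z^2+h*y+e=0)
    (E3 : z*x^2+h*z+e=0) : x^3+h^2*x^2+(e+1)*h*x+1=0 := by
  have A1 : e*x*y = x^2 + h := by grind
  have A2 : e*y*z = y^2+h := by grind
  have A3 : e*z*x = z^2+h := by grind
  have B2 : x^4+h^2+h*e^2*x^2+e^3*x=0 := by grind
  have B3 : h*x^4+h^3+e^2+e^2*x^3+e^2*h*x=0 := by 
    have : z*(x^2+h) = e := by grind
    grind
  have : e^2*(x^3+h^2*x^2+(e+1)*h*x+1)=0 := by grind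
  grind

lemma zz_fromCubic {F : Type*} [Field F] (h2 : (2:F) = 0) {h e x : F} (he : e ≠ 0)
    (hc : h^3 = e^2+e+1) (H : x^3+h^2*x^2+(e+1)*h*x+1=0) :
    ∃ y z, x*y*z = 1 ∧ x*y^2+h*x+e=0 ∧ y*z^2+h*y+e=0 ∧ z*x^2+h*z+e=0 ∧ x + y + z = h^2 ∧
      x*y+y*z+z*x = (e+1)*h ∧ x ≠ y ∧ y ≠ z ∧ z ≠ x := by
  have hx : x ≠ 0 := by rintro rfl; simp at H
  have hu : x^2+h ≠ 0 := by
    intro hu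
    have : h = x^2 := by grind
    subst this
    have : e * (e + 1 + x^3) = 0 := by grind
    have : e + 1 + x^3 = 0 := by grind
    grind
  have Q : (x^2+h)^2 + h*e^2*x^2+e^3*x = 0 := by 
    have : (x^2+h)^2 + h*e^2*x^2+e^3*x = (x+h^2)*(x^3+h^2*x^2+(e+1)*h*x+1) := by grind
    grind
  have hB' : h * (x^2+h)^2 + e^2 + e^2*x*(x^2+h) = 0 := by
    clear hx hu he
    grind
  obtain ⟨y, hy⟩ : ∃ y, e*x*y = x^2+h := ⟨(x^2+h)/(e*x), by field_simp⟩
  obtain ⟨z, hz⟩ : ∃ z, z*(x^2+h) = e := ⟨e/(x^2+h), by field_simp⟩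
  have P : x*y*z = 1 := by
    have : e*(x*y*z - 1) = 0 := by grind
    grind
  have E1 : x*y^2+h*x+e=0 := by
    have : e^2*x*(x*y^2+h*x+e) = 0 := by linear_combination (e*x*y + x^2+h)*hy + Q
    grind
  have E3 : z*x^2+h*z+e=0 := by grind
  have E2 : y*z^2+h*y+e=0 := by
    have : (x^2+h)^2*(z^2 + h + e*z*x) = 0 := by
      linear_combination (z*(x^2+h)+e)*hz + e*x*(x^2+h)*hz + hB'
    have : z^2 + h + e*z*x = 0 := by grind
    grind
  have S1 : x+y+z=h^2 := by
    have : e*x*(x^2+h)*(x+y+z-h^2) = 0 := by grind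
    grind
  have S2 : x*y+y*z+z*x = (e+1)*h := by
    grind
  have D : ∀ t, t^3+h^2*t^2+(e+1)*h*t+1=0 → t^2 + (e+1)*h ≠ 0 := by
    intro t ht h'
    have : (h*t+1)^2 = 0 := by grind
    have : h*t = 1 := by grind
    have : e^3 = 0 := by grind
    grind
  have hyc : y^3+h^2*y^2+(e+1)*h*y+1=0 := by
    grind
  refine ⟨y, z, P, E1, E2, E3, S1, S2, ?_, ?_, ?_⟩
  · rintro rfl
    apply D x H; grind
  · rintro rfl
    apply D y hyc; grind
  · rintro rfl
    apply D z H; grind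

lemma zz_cube {F : Type*} [Field F] (h2 : (2:F) = 0) {h e x y z w : F}
    (hw : w^2+w+1=0)
    (hc : h^3 = e^2+e+1) (hxyz : x*y*z = 1) (E1 : x*y^2+h*x+e=0) (E2 : y*z^2+h*y+e=0)
    (E3 : z*x^2+h*z+e=0) (S1 : x+y+z=h^2) (S2 : x*y+y*z+z*x = (e+1)*h) : 
    (x+w^2*y+w*z)^3 = e^3*(e+w) := by
  have B : x*y^2+y*z^2+z*x^2 = e^2+1 := by
    grind
  have A : x^2*y+y^2*z+z^2*x = e^3+e^2+1 := by
    have : (x+y+z)*(x*y+y*z+z*x) = e^3+1 := by rw [S1, S2]; grind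
    grind
  have P : x^3+y^3+z^3 = e^4+e^3+e^2+1 := by
    have : (x+y+z)^3 = (e^2+e+1)^2 := by rw [S1]; grind
    grind
  have hw' : w^2 = w+1 := by grind
  have : (x+w^2*y+w*z)^3 = (x^3+y^3+z^3) + w^2*(x^2*y+y^2*z+z^2*x) + w*(x*y^2+y*z^2+z*x^2) := by
    have h3 : w^3 = 1 := by grind
    have e1 : (x+w^2*y+w*z)^3 = x^3 + (w^3)^2*y^3 + w^3*z^3 + 3*(w^2*x^2*y+w*x^2*z + w^3*w*x*y^2 + w^2*x*z^2+w^3*w^2*y^2*z+w^3*w*y*z^2)+6*w^3*x*y*z := by ring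
    rw [e1, h3]
    linear_combination (w^2*x^2*y+w*x^2*z + w*x*y^2 + w^2*x*z^2+w^2*y^2*z+w*y*z^2 + 3*x*y*z)*h2
  rw [this, A, B, P]; grind

lemma zz_pw {F : Type*} [Field F] {a : F} {N : ℕ} (ha : a^N = a) (k : ℕ) : a^(N^k) = a := by
  induction k with
  | zero => simp
  | succ k ih => rw [pow_succ, pow_mul, ih, ha]

lemma zz_cond {F : Type*} [Field F] {e w r ζ : F} {q n : ℕ} (hn : 3 * n + 1 = q^2) (he : e ≠ 0)
    (heq : e^q = e) (hr : r ≠ 0) (hr3 : r^3 = e^3*(e+w)) (hz : r^(q^2) = ζ*r) :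
    (e+w)^n = ζ := by
  have h1 : e + w = (r/e)^3 := by field_simp; rw [hr3]
  have h0 : r/e ≠ 0 := div_ne_zero hr he
  have h2 : (r/e)^(q^2) = ζ*(r/e) := by
    rw [div_pow, hz, zz_pw heq 2]; ring
  rw [h1, ← pow_mul]
  rw [← hn, pow_succ] at h2
  exact mul_right_cancel₀ h0 h2

lemma zz_sub {F : Type*} [Field F] [CharP F 2] {h e a : F} {m ℓ q : ℕ} (hq : q = 2^m)
    (hℓ : ∃ k, ℓ = 3*k+1 ∨ ℓ = 3*k+2) (hhq : h^q = h) (heq : e^q = e) (he : e ≠ 0)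
    (hc : h^3 = e^2+e+1) (h1 : a^(q^2+q+1) = 1) (h2 : a^(2*q^ℓ+1)+h*a+e=0) :
    a^3+h^2*a^2+(e+1)*h*a+1=0 := by
  have c2 : (2:F) = 0 := CharTwo.two_eq_zero
  have hq1 : 1 ≤ q := by rw [hq]; exact Nat.one_le_two_pow
  have a3 : a^(q^3) = a := by
    obtain ⟨p, rfl⟩ := Nat.exists_eq_add_of_le hq1
    have : (1+p)^3 = ((1+p)^2+(1+p)+1)*p+1 := by ring
    rw [this, pow_succ, pow_mul, h1]; simp
  have hadd : ∀ u v : F, (u+v)^(q^ℓ) = u^(q^ℓ)+v^(q^ℓ) := by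
    intro u v
    rw [hq, ← pow_mul]
    exact add_pow_char_pow u v 2 _
  have hQ0 : q^ℓ ≠ 0 := by positivity
  have step : ∀ u v : F, u*v^2+h*u+e=0 → (u^(q^ℓ))*(v^(q^ℓ))^2+h*u^(q^ℓ)+e=0 := by
    intro u v huv
    have := congrArg (fun t => t^(q^ℓ)) huv
    simp only [hadd, mul_pow, zz_pw hhq, zz_pw heq, zero_pow hQ0] at this
    rw [← this]; ring
  have E1 : a*(a^(q^ℓ))^2+h*a+e=0 := by rw [← h2]; ring
  have E2 := step _ _ E1
  have E3 := step _ _ E2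
  have hcyc : ((a^(q^ℓ))^(q^ℓ))^(q^ℓ) = a := by
    rw [← pow_mul, ← pow_mul]
    have : q^ℓ*(q^ℓ*q^ℓ) = (q^3)^ℓ := by ring
    rw [this]; exact zz_pw a3 ℓ
  rw [hcyc] at E3
  refine zz_toCubic c2 he hc ?_ E1 E2 E3
  obtain ⟨k, rfl | rfl⟩ := hℓ
  · have hb : a^(q^(3*k+1)) = a^q := by
      rw [pow_succ, pow_mul q, pow_mul a, zz_pw a3]
    have hc : (a^q)^(q^(3*k+1)) = (a^q)^q := by rw [← pow_mul, mul_comm, pow_mul, hb]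
    rw [hb, hc, ← h1]; ring
  · have hb : ∀ t : F, t^(q^3) = t → t^(q^(3*k+2)) = t^(q^2) := by
      intro t ht
      rw [pow_add, pow_mul q, pow_mul t, zz_pw ht]
    have hc : (a^(q^2))^(q^3) = a^(q^2) := by rw [← pow_mul, mul_comm, pow_mul, a3]
    rw [hb _ a3, hb _ hc]
    have : (a^(q^2))^(q^2) = a^q := by
      rw [← pow_mul, ← pow_add, pow_add, show q^2*q^2 = q^3*q by ring, pow_mul, a3]
    rw [this, ← h1]; ring

open Polynomial

local notation "K" => AlgebraicClosure (ZMod 2)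

/-- Proposition 7.1 / Corollary 1.5: the polynomial `X^(2q^ℓ+1) + hX + e` has either zero
or three roots in `μ_{q²+q+1}`; it has three such roots iff `(e+ω)^((q²−1)/3) = ω^(−ℓ)`,
in which case they are precisely the roots of `X³ + h²X² + (e+1)hX + 1`. -/
theorem zheng_open_problem
    (m : ℕ) (hm : 0 < m) (ℓ : ℕ) (hℓ : 0 < ℓ) (hℓ3 : Nat.Coprime ℓ 3)
    (q : ℕ) (hq : q = 2 ^ m)
    (ω : K) (hω4 : ω ^ 4 = ω) (hω2 : ω ^ 2 ≠ ω)
    (h e : K) (hhq : h ^ q = h) (hh2 : h ^ 2 ≠ h)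
    (heq : e ^ q = e) (he2 : e ^ 2 ≠ e)
    (hcube : h ^ 3 = e ^ 2 + e + 1)
    (S : Set K)
    (hS : S = {x : K | x ^ (q ^ 2 + q + 1) = 1 ∧ x ^ (2 * q ^ ℓ + 1) + h * x + e = 0}) :
    (S.ncard = 0 ∨ S.ncard = 3) ∧
    (S.ncard = 3 ↔ (e + ω) ^ ((q ^ 2 - 1) / 3) = (ω ^ ℓ)⁻¹) ∧
    (S.ncard = 3 → S = {x : K | x ^ 3 + h ^ 2 * x ^ 2 + (e + 1) * h * x + 1 = 0}) := by
  have : CharP K 2 := inferInstance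
  have c2 : (2:K) = 0 := CharTwo.two_eq_zero
  have hk : ∃ k, ℓ = 3*k+1 ∨ ℓ = 3*k+2 := by
    have : ¬ 3 ∣ ℓ := fun hd => by
      have := Nat.dvd_gcd hd (dvd_refl 3)
      rw [hℓ3] at this; omega
    exact ⟨ℓ/3, by omega⟩
  have he : e ≠ 0 := by rintro rfl; simp at he2
  have hh : h ≠ 0 := by rintro rfl; simp at hh2
  have hw : ω^2+ω+1 = 0 := by
    have : (ω^2-ω)*(ω^2+ω+1) = 0 := by linear_combination hω4
    exact (mul_eq_zero.1 this).resolve_left (sub_ne_zero.2 hω2)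
  have hw3 : ω^3 = 1 := by linear_combination (ω-1)*hw
  have hw0 : ω ≠ 0 := by rintro rfl; simp at hw3
  have hw1 : ω ≠ 1 := by rintro rfl; simp at hω2
  have hwn : ω^2 ≠ 1 := fun h' => hw1 (by rw [← hw3, pow_succ, h', one_mul])
  have hn : 3 * ((q^2-1)/3) + 1 = q^2 := by
    have h4 : q^2 = 4^m := by rw [hq, ← pow_mul, mul_comm, pow_mul]; norm_num
    have : 4^m % 3 = 1 := by rw [Nat.pow_mod]; simp
    omega
  have hwq : ω^(q^2) = ω := by rw [← hn, pow_succ, pow_mul, hw3]; simp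
  have hadd : ∀ u v : K, (u+v)^q = u^q+v^q := by
    intro u v
    rw [hq]; exact add_pow_char_pow u v 2 _
  have hq0 : q ≠ 0 := by rw [hq]; positivity
  -- a root of the cubic
  obtain ⟨x, hx⟩ : ∃ x : K, x^3+h^2*x^2+(e+1)*h*x+1=0 := by
    obtain ⟨x, hx⟩ := IsAlgClosed.exists_root (X^3 + C (h^2)*X^2+C ((e+1)*h)*X+1 : K[X])
      (by
        have : (X^3 + C (h^2)*X^2+C ((e+1)*h)*X+1 : K[X]).degree = 3 := by compute_degree!
        rw [this]; norm_num)
    refine ⟨x, ?_⟩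
    simpa [IsRoot] using hx
  obtain ⟨y, z, P, E1, E2, E3, S1, S2, nxy, nyz, nzx⟩ := zz_fromCubic c2 he hcube hx
  have hiff : ∀ a : K, a^3+h^2*a^2+(e+1)*h*a+1=0 ↔ a = x ∨ a = y ∨ a = z := by
    intro a
    have : a^3+h^2*a^2+(e+1)*h*a+1 = (a-x)*((a-y)*(a-z)) := by
      rw [← S1, ← S2, ← P]
      linear_combination (a^2*(x+y+z)+x*y*z)*c2
    rw [this, mul_eq_zero, mul_eq_zero, sub_eq_zero, sub_eq_zero, sub_eq_zero]
  have x0 : x ≠ 0 := by rintro rfl; simp at P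
  have y0 : y ≠ 0 := by rintro rfl; simp at P
  have z0 : z ≠ 0 := by rintro rfl; simp at P
  have hsub : ∀ a ∈ S, a = x ∨ a = y ∨ a = z := by
    intro a ha
    rw [hS] at ha
    exact (hiff a).1 (zz_sub hq hk hhq heq he hcube ha.1 ha.2)
  have huniq : ∀ a b c : K, a ≠ 0 → a*b^2+h*a+e=0 → a*c^2+h*a+e=0 → c = b := by
    intro a b c ha h1 h2
    have : a*(c-b)^2 = 0 := by linear_combination h2 - h1 + (a*b^2-a*b*c)*c2
    have := (mul_eq_zero.1 this).resolve_left ha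
    exact sub_eq_zero.1 (pow_eq_zero_iff (two_ne_zero)|>.1 this)
  have hpw : ∀ a : K, a^(2*q^ℓ+1) = a*(a^(q^ℓ))^2 := by intro a; ring
  have hpn : ∀ a : K, a^(q^2+q+1) = a*a^q*(a^q)^q := by intro a; ring
  have hset : {x : K | x ^ 3 + h ^ 2 * x ^ 2 + (e + 1) * h * x + 1 = 0} = {x, y, z} := by
    ext a; simp [hiff]
  -- the two alternatives
  have good : x^(q^ℓ) = y → y^(q^ℓ) = z → z^(q^ℓ) = x → x^(q^2+q+1) = 1 → y^(q^2+q+1) = 1 →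
      z^(q^2+q+1) = 1 → (e + ω) ^ ((q ^ 2 - 1) / 3) = (ω ^ ℓ)⁻¹ → 
      (S.ncard = 0 ∨ S.ncard = 3) ∧
      (S.ncard = 3 ↔ (e + ω) ^ ((q ^ 2 - 1) / 3) = (ω ^ ℓ)⁻¹) ∧
      (S.ncard = 3 → S = {x : K | x ^ 3 + h ^ 2 * x ^ 2 + (e + 1) * h * x + 1 = 0}) := by
    intro g1 g2 g3 k1 k2 k3 hcond
    have hSe : S = {x, y, z} := by
      apply Set.Subset.antisymm
      · intro a ha; simpa using hsub a ha
      · rintro a (rfl | rfl | rfl)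
        · rw [hS]; exact ⟨k1, by rw [hpw, g1]; exact E1⟩
        · rw [hS]; exact ⟨k2, by rw [hpw, g2]; exact E2⟩
        · rw [hS]; exact ⟨k3, by rw [hpw, g3]; exact E3⟩
    have hcard : S.ncard = 3 := by
      rw [hSe]
      exact Set.ncard_eq_three.2 ⟨x, y, z, nxy, nzx.symm, nyz, rfl⟩
    exact ⟨Or.inr hcard, ⟨fun _ => hcond, fun _ => hcard⟩, fun _ => by rw [hset, hSe]⟩
  have bad : x^(q^ℓ) ≠ y → y^(q^ℓ) ≠ z → z^(q^ℓ) ≠ x → 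
      (e + ω) ^ ((q ^ 2 - 1) / 3) ≠ (ω ^ ℓ)⁻¹ → 
      (S.ncard = 0 ∨ S.ncard = 3) ∧
      (S.ncard = 3 ↔ (e + ω) ^ ((q ^ 2 - 1) / 3) = (ω ^ ℓ)⁻¹) ∧
      (S.ncard = 3 → S = {x : K | x ^ 3 + h ^ 2 * x ^ 2 + (e + 1) * h * x + 1 = 0}) := by
    intro g1 g2 g3 hcond
    have hSe : S = ∅ := by
      rw [Set.eq_empty_iff_forall_notMem]
      intro a ha
      have h1 := hsub a ha
      rw [hS] at ha
      have h2 := ha.2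
      rw [hpw] at h2
      rcases h1 with rfl | rfl | rfl
      · exact g1 (huniq _ _ _ x0 E1 h2)
      · exact g2 (huniq _ _ _ y0 E2 h2)
      · exact g3 (huniq _ _ _ z0 E3 h2)
    have hcard : S.ncard = 0 := by rw [hSe]; simp
    refine ⟨Or.inl hcard, ⟨fun h' => by omega, fun h' => absurd h' hcond⟩, fun h' => by omega⟩
  -- Frobenius
  have step : ∀ u v : K, u*v^2+h*u+e=0 → (u^q)*(v^q)^2+h*u^q+e=0 := by
    intro u v huv
    have := congrArg (fun t => t^q) huv
    simp only [hadd, mul_pow, hhq, heq, zero_pow hq0] at this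
    rw [← this]; ring
  have F1 := step _ _ E1
  have F2 := step _ _ E2
  have F3 := step _ _ E3
  have hxq : x^q = x ∨ x^q = y ∨ x^q = z := by
    rw [← hiff]
    have := congrArg (fun t => t^q) hx
    simp only [hadd, mul_pow, hhq, heq, zero_pow hq0, one_pow] at this
    rw [pow_right_comm h, hhq, pow_right_comm x 3, pow_right_comm x 2] at this
    exact this
  have hr3 := zz_cube c2 hw hcube P E1 E2 E3 S1 S2
  have hr : x+ω^2*y+ω*z ≠ 0 := by
    intro h0
    rw [h0] at hr3
    have h1 : e^3*(e+ω) = 0 := by rw [← hr3]; ring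
    have h2 := (mul_eq_zero.1 h1).resolve_left (pow_ne_zero 3 he)
    apply hh
    have : h^3 = 0 := by rw [hcube]; linear_combination (e-ω+1)*h2 + hw - ω*c2
    exact pow_eq_zero_iff (three_ne_zero) |>.1 this
  have hadd2 : ∀ u v : K, (u+v)^(q^2) = u^(q^2)+v^(q^2) := by
    intro u v
    rw [sq, pow_mul, hadd, hadd, pow_mul, pow_mul]
  have hrq : (x+ω^2*y+ω*z)^(q^2) = (x^q)^q + ω^2*(y^q)^q+ω*(z^q)^q := by
    rw [hadd2, hadd2, mul_pow, mul_pow, hwq, pow_right_comm, hwq, sq q, pow_mul, pow_mul, pow_mul]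
  -- reduction of ℓ modulo 3
  have hl : (∀ a : K, a^(q^3) = a → a^(q^ℓ) = a^q) ∧ (ω^ℓ)⁻¹ = ω^2 ∨ 
      (∀ a : K, a^(q^3) = a → a^(q^ℓ) = (a^q)^q) ∧ (ω^ℓ)⁻¹ = ω := by
    obtain ⟨k, rfl | rfl⟩ := hk
    · left
      refine ⟨fun a ha => ?_, ?_⟩
      · rw [pow_succ, pow_mul q, pow_mul a, zz_pw ha]
      · rw [pow_succ, pow_mul, hw3, one_pow, one_mul]
        exact inv_eq_of_mul_eq_one_right (by rw [← hw3]; ring)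
    · right
      refine ⟨fun a ha => ?_, ?_⟩
      · rw [pow_add, pow_mul q, pow_mul a, zz_pw ha, sq, pow_mul]
      · rw [pow_add, pow_mul, hw3, one_pow, one_mul]
        exact inv_eq_of_mul_eq_one_right (by rw [← hw3]; ring)
  have hq3 : ∀ a : K, a^(q^3) = ((a^q)^q)^q := by intro a; ring
  have cond := fun ζ => zz_cond (ζ := ζ) hn he heq hr hr3
  rcases hxq with hxq | hxq | hxq
  · -- identity
    have hyq : y^q = y := huniq x _ _ x0 E1 (by rw [hxq] at F1; exact F1)
    have hzq : z^q = z := huniq y _ _ y0 E2 (by rw [hyq] at F2; exact F2)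
    have hc := cond 1 (by rw [hrq, hxq, hxq, hyq, hyq, hzq, hzq]; ring)
    rcases hl with ⟨hl, hl'⟩ | ⟨hl, hl'⟩
    · apply bad
      · rw [hl x (by rw [hq3]; simp only [hxq])]; simp only [hxq]; exact nxy
      · rw [hl y (by rw [hq3]; simp only [hyq])]; simp only [hyq]; exact nyz
      · rw [hl z (by rw [hq3]; simp only [hzq])]; simp only [hzq]; exact nzx
      · rw [hc, hl']; exact hwn.symm
    · apply bad
      · rw [hl x (by rw [hq3]; simp only [hxq])]; simp only [hxq]; exact nxy
      · rw [hl y (by rw [hq3]; simp only [hyq])]; simp only [hyq]; exact nyz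
      · rw [hl z (by rw [hq3]; simp only [hzq])]; simp only [hzq]; exact nzx
      · rw [hc, hl']; exact hw1.symm
  · have hyq : y^q = z := huniq y _ _ y0 E2 (by rw [hxq] at F1; exact F1)
    have hzq : z^q = x := huniq z _ _ z0 E3 (by rw [hyq] at F2; exact F2)
    have hc := cond (ω^2) (by
      rw [hrq]; simp only [hxq, hyq, hzq]; linear_combination (-z-ω*y)*hw3)
    rcases hl with ⟨hl, hl'⟩ | ⟨hl, hl'⟩
    · apply good
      · rw [hl x (by rw [hq3]; simp only [hxq, hyq, hzq])]; simp only [hxq]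
      · rw [hl y (by rw [hq3]; simp only [hxq, hyq, hzq])]; simp only [hyq]
      · rw [hl z (by rw [hq3]; simp only [hxq, hyq, hzq])]; simp only [hzq]
      · rw [hpn, hxq, hyq, ← P]
      · rw [hpn, hyq, hzq, ← P]; ring
      · rw [hpn, hzq, hxq, ← P]; ring
      · rw [hc, hl']
    · apply bad
      · rw [hl x (by rw [hq3]; simp only [hxq, hyq, hzq])]; simp only [hxq, hyq]; exact nyz.symm
      · rw [hl y (by rw [hq3]; simp only [hxq, hyq, hzq])]; simp only [hyq, hzq]; exact nzx.symm
      · rw [hl z (by rw [hq3]; simp only [hxq, hyq, hzq])]; simp only [hzq, hxq]; exact nxy.symm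
      · rw [hc, hl']; exact hω2
  · have hyq : y^q = x := huniq z _ _ z0 E3 (by rw [hxq] at F1; exact F1)
    have hzq : z^q = y := huniq x _ _ x0 E1 (by rw [hyq] at F2; exact F2)
    have hc := cond ω (by
      rw [hrq]; simp only [hxq, hyq, hzq]; linear_combination (-y)*hw3)
    rcases hl with ⟨hl, hl'⟩ | ⟨hl, hl'⟩
    · apply bad
      · rw [hl x (by rw [hq3]; simp only [hxq, hyq, hzq])]; simp only [hxq]; exact nyz.symm
      · rw [hl y (by rw [hq3]; simp only [hxq, hyq, hzq])]; simp only [hyq]; exact nzx.symm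
      · rw [hl z (by rw [hq3]; simp only [hxq, hyq, hzq])]; simp only [hzq]; exact nxy.symm
      · rw [hc, hl']; exact hω2.symm
    · apply good
      · rw [hl x (by rw [hq3]; simp only [hxq, hyq, hzq])]; simp only [hxq, hzq]
      · rw [hl y (by rw [hq3]; simp only [hxq, hyq, hzq])]; simp only [hyq, hxq]
      · rw [hl z (by rw [hq3]; simp only [hxq, hyq, hzq])]; simp only [hzq, hyq]
      · rw [hpn, hxq, hzq, ← P]; ring
      · rw [hpn, hyq, hxq, ← P]; ring
      · rw [hpn, hzq, hyq, ← P]; ring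
      · rw [hc, hl']
end

section
/- For any a ∈ F_q^*, the number of roots in F_q of the polynomial X^(Q+1) + X + a lies in {0, 1, 2, 1 + p^gcd(m,n)}. Moreover, if p = 2 and gcd(m,n) = 1, then this number of roots lies in {0, 1, 3}. -/
open Polynomial

lemma fix_card (F : Type*) [Field F] [Finite F] (p m n : ℕ) (hp : p.Prime) (hn : 0 < n)
    (hF : Nat.card F = p ^ m) :
    {t : F | t ^ (p ^ n) = t}.ncard = p ^ Nat.gcd m n := by
  have hQ : 0 < p ^ n := pow_pos hp.pos n
  have h : {t : F | t ^ (p ^ n) = t} =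
      insert 0 (Units.val '' ((powMonoidHom (p ^ n - 1) : Fˣ →* Fˣ).ker : Set Fˣ)) := by
    ext t
    simp only [Set.mem_ofPred_eq, Set.mem_insert_iff, Set.mem_image, SetLike.mem_coe,
      MonoidHom.mem_ker, powMonoidHom_apply]
    constructor
    · intro ht
      by_cases h0 : t = 0
      · exact Or.inl h0
      · refine Or.inr ⟨Units.mk0 t h0, ?_, rfl⟩
        ext
        simp only [Units.val_pow_eq_pow_val, Units.val_mk0, Units.val_one]
        apply mul_right_cancel₀ h0
        rw [← pow_succ, Nat.sub_add_cancel hQ, ht, one_mul]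
    · rintro (rfl | ⟨u, hu, rfl⟩)
      · exact zero_pow hQ.ne'
      · rw [← Nat.sub_add_cancel hQ, pow_succ, ← Units.val_pow_eq_pow_val, hu]
        simp
  rw [h, Set.ncard_insert_of_notMem (by simp) (Set.toFinite _),
    Set.ncard_image_of_injective _ Units.val_injective]
  have h2 := IsCyclic.card_powMonoidHom_ker (G := Fˣ) (p ^ n - 1)
  rw [Nat.card_units, hF, Nat.pow_sub_one_gcd_pow_sub_one] at h2
  rw [← Nat.card_coe_set_eq]
  have h3 : 0 < p ^ Nat.gcd m n := pow_pos hp.pos _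
  refine (congrArg (· + 1) h2).trans ?_
  exact Nat.sub_add_cancel h3

lemma ker_card (F : Type*) [Field F] [Finite F] (p m n : ℕ) (hp : p.Prime) (hn : 0 < n)
    (hF : Nat.card F = p ^ m) (u r z : F) (hu : u ≠ 0) (hz : z ≠ 0)
    (hz1 : u * z ^ (p ^ n) + r * z = 0) :
    {t : F | u * t ^ (p ^ n) + r * t = 0}.ncard = p ^ Nat.gcd m n := by
  rw [← fix_card F p m n hp hn hF,
    ← Set.ncard_image_of_injective {t : F | t ^ (p ^ n) = t} (mul_right_injective₀ hz)]
  congr 1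
  ext t
  simp only [Set.mem_ofPred_eq, Set.mem_image]
  constructor
  · intro ht
    refine ⟨t / z, ?_, by field_simp⟩
    rw [div_pow, div_eq_div_iff (pow_ne_zero _ hz) hz]
    apply mul_left_cancel₀ hu
    linear_combination z * ht - t * hz1
  · rintro ⟨s, hs, rfl⟩
    rw [mul_pow, hs]
    linear_combination s * hz1

lemma aff_card (F : Type*) [Field F] (p n : ℕ) [Fact p.Prime] [CharP F p]
    (u r y : F) (hy : u * y ^ (p ^ n) + r * y + 1 = 0) :
    {t : F | u * t ^ (p ^ n) + r * t + 1 = 0}.ncard =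
    {t : F | u * t ^ (p ^ n) + r * t = 0}.ncard := by
  rw [← Set.ncard_image_of_injective {t : F | u * t ^ (p ^ n) + r * t = 0}
    (add_right_injective y)]
  congr 1
  ext t
  simp only [Set.mem_ofPred_eq, Set.mem_image]
  constructor
  · intro ht
    refine ⟨t - y, ?_, by ring⟩
    rw [sub_pow_char_pow]
    linear_combination ht - hy
  · rintro ⟨s, hs, rfl⟩
    rw [add_pow_char_pow]
    linear_combination hs + hy

lemma root_card (F : Type*) [Field F] [Finite F] (p n : ℕ) [Fact p.Prime] [CharP F p]
    (a r : F) (hr : r ^ (p ^ n + 1) + r + a = 0) :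
    {x : F | x ^ (p ^ n + 1) + x + a = 0}.ncard =
    {t : F | (r ^ (p ^ n) + 1) * t ^ (p ^ n) + r * t + 1 = 0}.ncard + 1 := by
  have hQ : p ^ n ≠ 0 := pow_ne_zero _ (Fact.out : p.Prime).ne_zero
  have hinj : Function.Injective (fun t : F => r + t⁻¹) :=
    (add_right_injective r).comp inv_injective
  have key : ∀ t : F, t ≠ 0 → ((r + t⁻¹) ^ (p ^ n + 1) + (r + t⁻¹) + a) * t ^ (p ^ n + 1) =
      (r ^ (p ^ n) + 1) * t ^ (p ^ n) + r * t + 1 := by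
    intro t ht
    rw [pow_succ (r + t⁻¹), add_pow_char_pow, inv_pow]
    rw [pow_succ] at hr ⊢
    have := pow_ne_zero (p ^ n) ht
    generalize t ^ p ^ n = T at *
    generalize r ^ p ^ n = R at *
    field_simp
    linear_combination T * t * hr
  have h : {x : F | x ^ (p ^ n + 1) + x + a = 0} = insert r ((fun t : F => r + t⁻¹) ''
      {t : F | (r ^ (p ^ n) + 1) * t ^ (p ^ n) + r * t + 1 = 0}) := by
    ext x
    simp only [Set.mem_ofPred_eq, Set.mem_insert_iff, Set.mem_image]
    constructor
    · intro hx
      by_cases hxr : x = r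
      · exact Or.inl hxr
      · have h1 : x - r ≠ 0 := sub_ne_zero.mpr hxr
        refine Or.inr ⟨(x - r)⁻¹, ?_, by simp⟩
        rw [← key _ (inv_ne_zero h1), inv_inv, add_sub_cancel, hx, zero_mul]
    · rintro (rfl | ⟨t, ht, rfl⟩)
      · exact hr
      · have ht0 : t ≠ 0 := by
          rintro rfl
          simp [zero_pow hQ] at ht
        rw [← key t ht0] at ht
        exact (mul_eq_zero.mp ht).resolve_right (pow_ne_zero _ ht0)
  rw [h, Set.ncard_insert_of_notMem _ (Set.toFinite _), Set.ncard_image_of_injective _ hinj]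
  rintro ⟨t, ht, hte⟩
  have ht0 : t = 0 := by simpa using hte
  subst ht0
  simp [zero_pow hQ] at ht


/-- Lemma 2.2: for `q = p^m`, `Q = p^n`, and `a ∈ F_q^*`, the number of roots in `F_q` of
`X^(Q+1) + X + a` lies in `{0, 1, 2, 1 + p^gcd(m,n)}`; if `p = 2` and `gcd(m,n) = 1`
then it lies in `{0, 1, 3}`. -/
theorem trinomial_root_count
    (p : ℕ) [Fact p.Prime] (m n : ℕ) (hm : 0 < m) (hn : 0 < n)
    (Q : ℕ) (hQ : Q = p ^ n)
    (a : GaloisField p m) (ha : a ≠ 0) :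
    {x : GaloisField p m | x ^ (Q + 1) + x + a = 0}.ncard ∈
      ({0, 1, 2, 1 + p ^ Nat.gcd m n} : Set ℕ) ∧
    (p = 2 → Nat.gcd m n = 1 →
      {x : GaloisField p m | x ^ (Q + 1) + x + a = 0}.ncard ∈ ({0, 1, 3} : Set ℕ)) := by
  subst hQ
  have hp : p.Prime := Fact.out
  have hF : Nat.card (GaloisField p m) = p ^ m := GaloisField.card p m hm.ne'
  rcases Set.eq_empty_or_nonempty {x : GaloisField p m | x ^ (p ^ n + 1) + x + a = 0} with
    h0 | ⟨r, hr⟩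
  · rw [h0]; simp
  have hr' : r ^ (p ^ n + 1) + r + a = 0 := hr
  have hr0 : r ≠ 0 := by
    rintro rfl
    simp at hr'
    exact ha hr'
  have hu : r ^ (p ^ n) + 1 ≠ 0 := by
    intro h
    apply ha
    linear_combination hr' - r * h
  rw [root_card _ p n a r hr']
  generalize r ^ (p ^ n) + 1 = u at hu
  rcases Set.eq_empty_or_nonempty
    {t : GaloisField p m | u * t ^ (p ^ n) + r * t + 1 = 0} with h1 | ⟨y, hy⟩
  · rw [h1]; simp
  rw [aff_card _ p n u r y hy]
  by_cases hz : ∃ z : GaloisField p m, z ≠ 0 ∧ u * z ^ (p ^ n) + r * z = 0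
  · obtain ⟨z, hz, hz1⟩ := hz
    rw [ker_card _ p m n hp hn hF u r z hu hz hz1]
    refine ⟨by simp [add_comm], ?_⟩
    intro h2 hg
    rw [h2, hg]
    simp
  · have hk : {t : GaloisField p m | u * t ^ (p ^ n) + r * t = 0} = {0} := by
      ext t
      simp only [Set.mem_ofPred_eq, Set.mem_singleton_iff]
      constructor
      · intro ht
        by_contra h
        exact hz ⟨t, h, ht⟩
      · rintro rfl
        simp [hp.ne_zero]
    refine ⟨by rw [hk]; simp, ?_⟩
    intro h2 hg
    exfalso
    apply hz
    have hc : (Nat.card (GaloisField p m)ˣ).Coprime (p ^ n - 1) := by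
      rw [Nat.card_units, hF, Nat.Coprime, Nat.pow_sub_one_gcd_pow_sub_one, hg, h2]
      norm_num
    have hne : -r / u ≠ 0 := div_ne_zero (neg_ne_zero.mpr hr0) hu
    obtain ⟨z, hz⟩ := (powCoprime hc).surjective (Units.mk0 _ hne)
    have hz' : (z : GaloisField p m) ^ (p ^ n - 1) = -r / u := by
      have := congrArg Units.val hz
      simpa using this
    refine ⟨z, z.ne_zero, ?_⟩
    rw [← Nat.sub_add_cancel (pow_pos hp.pos n : 0 < p ^ n), pow_succ, hz']
    field_simp
    ring
end

section
/- For any a ∈ F_{q³}^* and any positive integer ℓ coprime to 3, the number of roots in F_{q³} of the polynomial X^(2q^ℓ+1) + X + a lies in {0, 1, 2, 9} if m ≡ −ℓ (mod 3), and lies in {0, 1, 3} otherwise. -/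
open Polynomial

local notation "K" => AlgebraicClosure (ZMod 2)

lemma pow_gcd_fix {F : Type*} [Monoid F] (x : F) (k n : ℕ) (h1 : x ^ 2 ^ k = x)
    (h2 : x ^ 2 ^ n = x) : x ^ 2 ^ (Nat.gcd k n) = x := by
  have key : ∀ j, (x ^ 2 ^ j = x ↔ Function.IsPeriodicPt (fun y : F => y ^ 2) j x) := by
    intro j
    rw [Function.IsPeriodicPt, Function.IsFixedPt, pow_iterate]
  rw [key] at *
  exact h1.gcd h2

/-- Either no nonzero kernel element, and at most 2 roots, or the root count is 0, 1, c + 1. -/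
lemma count_aux {F : Type*} [Field F] [CharP F 2] [Finite F] (k : ℕ) (a : F) (ha : a ≠ 0) :
    let S := {x : F | x ^ (2 ^ k + 1) + x + a = 0}
    let c := {t : F | t ^ 2 ^ k = t}.ncard
    S.ncard = 0 ∨ S.ncard = 1 ∨ S.ncard = c + 1 ∨
      (S.ncard = 2 ∧ ∃ b : F, b ≠ 0 ∧ ∀ u : F, u ≠ 0 → u ^ 2 ^ k ≠ b * u) := by
  intro S c
  rcases Set.eq_empty_or_nonempty S with h | ⟨x0, hx0⟩
  · left; simp [h]
  right
  have h2 : (2 : F) = 0 := CharTwo.two_eq_zero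
  have hx0' : x0 ^ 2 ^ k * x0 + x0 + a = 0 := by simpa [S, pow_succ] using hx0
  set A := x0 ^ 2 ^ k + 1 with hA
  have hAx : A * x0 = a := by linear_combination hx0' - a * h2
  have hA0 : A ≠ 0 := by rintro h; rw [h] at hAx; simp at hAx; exact ha hAx.symm
  have hB0 : x0 ≠ 0 := by rintro h; rw [h] at hAx; simp at hAx; exact ha hAx.symm
  set V := {v : F | A * v ^ 2 ^ k + x0 * v = 1} with hV
  have hSV : S = insert x0 ((fun v => x0 + v⁻¹) '' V) := by
    ext x
    simp only [S, V, Set.mem_ofPred_eq, Set.mem_insert_iff, Set.mem_image]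
    constructor
    · intro hx
      by_cases hxx : x = x0
      · left; exact hxx
      right
      have hw : x - x0 ≠ 0 := sub_ne_zero.mpr hxx
      refine ⟨(x - x0)⁻¹, ?_, by simp⟩
      have e : (x - x0) ^ 2 ^ k = x ^ 2 ^ k - x0 ^ 2 ^ k := sub_pow_char_pow (p := 2) x x0 k
      rw [inv_pow]
      have hw' : (x - x0) ^ 2 ^ k ≠ 0 := pow_ne_zero _ hw
      field_simp
      rw [e]
      rw [pow_succ] at hx
      linear_combination hx - hx0' +
        (x * x0 ^ 2 ^ k + x0 * x ^ 2 ^ k - x0 * x0 ^ 2 ^ k - x ^ 2 ^ k * x) * h2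
    · rintro (rfl | ⟨v, hv, rfl⟩)
      · exact hx0
      have hv0 : v ≠ 0 := by rintro rfl; simp at hv
      rw [pow_succ, add_pow_char_pow (p := 2), inv_pow]
      have hv' : v ^ 2 ^ k ≠ 0 := pow_ne_zero _ hv0
      field_simp
      linear_combination (v ^ 2 ^ k * v) * hx0' + hv + h2
  have hx0V : x0 ∉ ((fun v => x0 + v⁻¹) '' V) := by
    rintro ⟨v, hv, h⟩
    have : v = 0 := by simpa using h
    subst this
    simp [V] at hv
  have hinj : Function.Injective (fun v : F => x0 + v⁻¹) := by
    intro u v h; simpa using h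
  have hcard : S.ncard = V.ncard + 1 := by
    rw [hSV, Set.ncard_insert_of_notMem hx0V, Set.ncard_image_of_injective _ hinj]
  rcases Set.eq_empty_or_nonempty V with h | ⟨v0, hv0⟩
  · left; simp [hcard, h]
  right
  have hVk : V = (fun u => v0 + u) '' {u : F | A * u ^ 2 ^ k + x0 * u = 0} := by
    ext v
    simp only [V, Set.mem_ofPred_eq, Set.mem_image] at hv0 ⊢
    constructor
    · intro hv
      refine ⟨v - v0, ?_, by ring⟩
      rw [sub_pow_char_pow (p := 2)]
      linear_combination hv - hv0
    · rintro ⟨u, hu, rfl⟩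
      rw [add_pow_char_pow (p := 2)]
      linear_combination hu + hv0
  rw [hcard, hVk, Set.ncard_image_of_injective _ (add_right_injective v0)]
  by_cases hex : ∃ u : F, u ≠ 0 ∧ A * u ^ 2 ^ k + x0 * u = 0
  · obtain ⟨u, hu0, hu⟩ := hex
    left
    have : {u : F | A * u ^ 2 ^ k + x0 * u = 0} = (fun t => u * t) '' {t : F | t ^ 2 ^ k = t} := by
      ext v
      simp only [Set.mem_ofPred_eq, Set.mem_image]
      constructor
      · intro hv
        refine ⟨v / u, ?_, by field_simp⟩
        have hu' : u ^ 2 ^ k ≠ 0 := pow_ne_zero _ hu0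
        rw [div_pow]
        field_simp
        apply mul_left_cancel₀ hA0
        linear_combination u * hv - v * hu
      · rintro ⟨t, ht, rfl⟩
        rw [mul_pow, ht]
        linear_combination t * hu
    rw [this, Set.ncard_image_of_injective _ (mul_right_injective₀ hu0)]
  · right
    push Not at hex
    have : {u : F | A * u ^ 2 ^ k + x0 * u = 0} = {0} := by
      ext v
      simp only [Set.mem_ofPred_eq, Set.mem_singleton_iff]
      constructor
      · intro hv
        by_contra h
        exact hex v h hv
      · rintro rfl; simp
    refine ⟨by simp [this], x0 / A, div_ne_zero hB0 hA0, ?_⟩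
    intro u hu h
    apply hex u hu
    rw [h]
    field_simp
    linear_combination x0 * u * h2

lemma count_one {F : Type*} [Field F] [CharP F 2] [Finite F] (k : ℕ) (hk : 0 < k)
    (hfix : ∀ t : F, t ^ 2 ^ k = t → t = 0 ∨ t = 1) (b : F) (hb : b ≠ 0) :
    ∃ u : F, u ≠ 0 ∧ u ^ 2 ^ k = b * u := by
  obtain ⟨j, hj⟩ : ∃ j, 2 ^ k = j + 1 + 1 :=
    ⟨2 ^ k - 2, by have := Nat.pow_le_pow_right (n := 2) (by norm_num) hk; omega⟩
  have hinj : Function.Injective (fun t : F => t ^ (j + 1)) := by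
    intro s t h
    simp only at h
    by_cases ht : t = 0
    · subst ht; simpa using h
    have h1 : (s / t) ^ 2 ^ k = s / t := by
      rw [hj, pow_succ, div_pow, h, div_self (pow_ne_zero _ ht), one_mul]
    rcases hfix _ h1 with h0 | h0
    · have hs : s = 0 := by
        rcases div_eq_zero_iff.mp h0 with h0 | h0
        · exact h0
        · exact absurd h0 ht
      subst hs
      exact absurd (by simpa using h.symm) ht
    · exact (div_eq_one_iff_eq ht).mp h0
  obtain ⟨u, hu⟩ := Finite.injective_iff_surjective.mp hinj b
  simp only at hu
  refine ⟨u, ?_, by rw [hj, pow_succ, hu]⟩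
  rintro rfl
  apply hb
  simpa using hu.symm

lemma card_fix8 : {t : K | t ^ 2 ^ 3 = t}.ncard = 8 := by
  have hsep : (X ^ 8 - X : (ZMod 2)[X]).Separable := by
    have := @galois_poly_separable (ZMod 2) _ 2 8 _ (by decide)
    exact this
  have hdeg : (X ^ 8 - X : (ZMod 2)[X]).natDegree = 8 := by compute_degree!
  have hc := @card_rootSet_eq_natDegree (ZMod 2) _ K _ _ _ hsep (IsAlgClosed.splits _)
  have hs : {t : K | t ^ 2 ^ 3 = t} = (X ^ 8 - X : (ZMod 2)[X]).rootSet K := by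
    ext t
    rw [mem_rootSet]
    have : (X ^ 8 - X : (ZMod 2)[X]) ≠ 0 := by
      intro h; rw [h] at hdeg; simp at hdeg
    simp [this, sub_eq_zero]
  rw [hs, ← Nat.card_coe_set_eq, Nat.card_eq_fintype_card, hc, hdeg]

/-- Corollary 2.3: for `q = 2^m`, `a ∈ F_{q³}^*` and `ℓ` coprime to `3`, the number of
roots in `F_{q³}` of `X^(2q^ℓ+1) + X + a` lies in `{0,1,2,9}` if `m ≡ −ℓ (mod 3)`,
and in `{0,1,3}` otherwise. -/
theorem trinomial_root_count_cubic_ext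
    (m : ℕ) (hm : 0 < m) (q : ℕ) (hq : q = 2 ^ m)
    (ℓ : ℕ) (hℓ : 0 < ℓ) (hℓ3 : Nat.Coprime ℓ 3)
    (a : K) (haq : a ^ q ^ 3 = a) (ha : a ≠ 0) :
    (3 ∣ (m + ℓ) →
      {x : K | x ^ q ^ 3 = x ∧ x ^ (2 * q ^ ℓ + 1) + x + a = 0}.ncard ∈
        ({0, 1, 2, 9} : Set ℕ)) ∧
    (¬ 3 ∣ (m + ℓ) →
      {x : K | x ^ q ^ 3 = x ∧ x ^ (2 * q ^ ℓ + 1) + x + a = 0}.ncard ∈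
        ({0, 1, 3} : Set ℕ)) := by
  have hN : q ^ 3 = 2 ^ (3 * m) := by rw [hq, ← pow_mul, mul_comm]
  have hQ : 2 * q ^ ℓ = 2 ^ (m * ℓ + 1) := by rw [hq, ← pow_mul, pow_succ, mul_comm]
  rw [hN] at haq ⊢
  rw [hQ]
  set k := m * ℓ + 1 with hk
  have hgcd : Nat.gcd k (3 * m) = Nat.gcd k 3 := by
    apply Nat.Coprime.gcd_mul_right_cancel_right
    rw [hk, Nat.coprime_comm]
    simp
  let F : Subfield K := (iterateFrobenius K 2 (3 * m)).eqLocusField (RingHom.id K)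
  have hF : ∀ x : K, x ∈ F ↔ x ^ 2 ^ (3 * m) = x := by
    intro x
    change iterateFrobenius K 2 (3 * m) x = x ↔ _
    rw [iterateFrobenius_def]
  have hfin : Finite F := by
    classical
    have hne : (X ^ 2 ^ (3 * m) - X : K[X]) ≠ 0 :=
      FiniteField.X_pow_card_pow_sub_X_ne_zero K (by omega) (by norm_num)
    have : ((F : Set K)).Finite := by
      refine ((X ^ 2 ^ (3 * m) - X : K[X]).roots.toFinset.finite_toSet).subset ?_
      intro x hx
      have := (hF x).mp hx
      simp [hne, this]
    exact this
  have hfix : ∀ t : F, t ^ 2 ^ k = t ↔ (t : K) ^ 2 ^ (Nat.gcd k 3) = t := by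
    intro t
    have ht := (hF t).mp t.2
    rw [← hgcd]
    constructor
    · intro h
      exact pow_gcd_fix _ _ _ (by exact_mod_cast congrArg Subtype.val h) ht
    · intro h
      apply Subtype.ext
      obtain ⟨j, hj⟩ := Nat.gcd_dvd_left k (3 * m)
      push_cast
      have hp : Function.IsPeriodicPt (fun y : K => y ^ 2) (Nat.gcd k (3 * m)) t := by
        rw [Function.IsPeriodicPt, Function.IsFixedPt, pow_iterate]; exact h
      have := hp.mul_const j
      rw [← hj, Function.IsPeriodicPt, Function.IsFixedPt, pow_iterate] at this
      exact this
  have haF : a ∈ F := (hF a).mpr haq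
  have hS : {x : K | x ^ 2 ^ (3 * m) = x ∧ x ^ (2 ^ k + 1) + x + a = 0} =
      Subtype.val '' {x : F | x ^ (2 ^ k + 1) + x + (⟨a, haF⟩ : F) = 0} := by
    ext x
    simp only [Set.mem_ofPred_eq, Set.mem_image]
    constructor
    · rintro ⟨h1, h2⟩
      exact ⟨⟨x, (hF x).mpr h1⟩, Subtype.ext (by simpa using h2), rfl⟩
    · rintro ⟨y, hy, rfl⟩
      exact ⟨(hF y).mp y.2, by simpa using congrArg Subtype.val hy⟩
  rw [hS, Set.ncard_image_of_injective _ Subtype.val_injective]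
  have : CharP F 2 := inferInstance
  have hmain := count_aux k (⟨a, haF⟩ : F) (fun h => ha (congrArg Subtype.val h))
  simp only at hmain
  have hdvd : 3 ∣ k ↔ 3 ∣ m + ℓ := by
    have h3 : ¬ 3 ∣ ℓ := fun h => by
      have := Nat.eq_one_of_dvd_coprimes hℓ3 h (dvd_refl 3); omega
    have h4 : ℓ % 3 = 1 ∨ ℓ % 3 = 2 := by omega
    have h5 : (m * ℓ) % 3 = ((m % 3) * (ℓ % 3)) % 3 := Nat.mul_mod _ _ _
    rcases h4 with h4 | h4 <;> rw [h4] at h5 <;> omega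
  constructor
  · intro h
    have hg : Nat.gcd k 3 = 3 := Nat.gcd_eq_right (hdvd.mpr h)
    rw [hg] at hfix
    have hc : {t : F | t ^ 2 ^ k = t}.ncard = 8 := by
      rw [← card_fix8, ← Set.ncard_image_of_injective _ Subtype.val_injective]
      congr 1
      ext t
      simp only [Set.mem_ofPred_eq, Set.mem_image]
      constructor
      · rintro ⟨y, hy, rfl⟩
        exact (hfix y).mp hy
      · intro ht
        have : t ∈ F := by
          rw [hF]
          have hp : Function.IsPeriodicPt (fun y : K => y ^ 2) 3 t := by
            rw [Function.IsPeriodicPt, Function.IsFixedPt, pow_iterate]; exact ht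
          have := hp.mul_const m
          rwa [Function.IsPeriodicPt, Function.IsFixedPt, pow_iterate] at this
        exact ⟨⟨t, this⟩, (hfix _).mpr ht, rfl⟩
    rw [hc] at hmain
    simp only [Set.mem_insert_iff, Set.mem_singleton_iff]
    tauto
  · intro h
    have hg : Nat.gcd k 3 = 1 := by
      rw [Nat.gcd_comm]
      exact (Nat.Prime.coprime_iff_not_dvd Nat.prime_three).mpr (fun h' => h (hdvd.mp h'))
    rw [hg] at hfix
    have hfix' : ∀ t : F, t ^ 2 ^ k = t ↔ t = 0 ∨ t = 1 := by
      intro t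
      rw [hfix]
      have h1 : ((t : K) ^ 2 ^ 1 = t) ↔ t * t = t := by
        rw [pow_one, sq, ← Subfield.coe_mul, Subtype.coe_inj]
      rw [h1]
      constructor
      · intro ht
        by_cases h0 : t = 0
        · exact Or.inl h0
        · exact Or.inr (mul_left_cancel₀ h0 (by rw [ht, mul_one]))
      · rintro (rfl | rfl) <;> simp
    have hc : {t : F | t ^ 2 ^ k = t}.ncard = 2 := by
      have : {t : F | t ^ 2 ^ k = t} = {0, 1} := by
        ext t; simp [hfix']
      rw [this, Set.ncard_pair zero_ne_one]
    rw [hc] at hmain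
    simp only [Set.mem_insert_iff, Set.mem_singleton_iff]
    rcases hmain with h | h | h | ⟨_, b, hb, hu⟩
    · tauto
    · tauto
    · tauto
    · obtain ⟨u, hu0, hu1⟩ := count_one k (by omega) (fun t => (hfix' t).mp) b hb
      exact absurd hu1 (hu u hu0)
end

section
/- Let N be the number of distinct roots of f(X) := X³ + aX + b in F_q, and pick e ∈ F_{q²}^* satisfying e² + be + a³ = 0. Then N ∈ {0, 1, 3}; N = 1 if and only if Tr(a³/b²) ≠ Tr(1); and if N ∈ {0, 3}, then N = 3 if and only if e is a cube in F_{q²}. -/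
open Polynomial

local notation "K" => AlgebraicClosure (ZMod 2)

theorem wc_ncard3 {F : Type*} (S : Set F) (x0 x1 x2 : F) (φ : F → F)
    (hS : ∀ x, x ∈ S ↔ φ x = x ∧ (x = x0 ∨ x = x1 ∨ x = x2))
    (h01 : x0 ≠ x1) (h02 : x0 ≠ x2) (h12 : x1 ≠ x2) :
    (φ x0 = x0 → φ x1 = x1 → φ x2 = x2 → S.ncard = 3) ∧
    (φ x0 ≠ x0 → φ x1 ≠ x1 → φ x2 ≠ x2 → S.ncard = 0) ∧
    (φ x0 = x0 → φ x1 ≠ x1 → φ x2 ≠ x2 → S.ncard = 1) ∧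
    (φ x0 ≠ x0 → φ x1 = x1 → φ x2 ≠ x2 → S.ncard = 1) ∧
    (φ x0 ≠ x0 → φ x1 ≠ x1 → φ x2 = x2 → S.ncard = 1) := by
  refine ⟨?_, ?_, ?_, ?_, ?_⟩ <;> intro h0 h1 h2
  · have : S = {x0, x1, x2} := by
      ext x; rw [hS]; simp only [Set.mem_insert_iff, Set.mem_singleton_iff]; grind
    rw [this, Set.ncard_eq_three]
    exact ⟨x0, x1, x2, h01, h02, h12, rfl⟩
  · have : S = ∅ := by
      ext x; rw [hS]; simp only [Set.mem_empty_iff_false]; grind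
    rw [this, Set.ncard_empty]
  · have : S = {x0} := by
      ext x; rw [hS]; simp only [Set.mem_singleton_iff]; grind
    rw [this, Set.ncard_singleton]
  · have : S = {x1} := by
      ext x; rw [hS]; simp only [Set.mem_singleton_iff]; grind
    rw [this, Set.ncard_singleton]
  · have : S = {x2} := by
      ext x; rw [hS]; simp only [Set.mem_singleton_iff]; grind
    rw [this, Set.ncard_singleton]

theorem wc_perm {F : Type*} (S : Set F) (x0 x1 x2 : F) (φ : F → F)
    (hS : ∀ x, x ∈ S ↔ φ x = x ∧ (x = x0 ∨ x = x1 ∨ x = x2))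
    (h01 : x0 ≠ x1) (h02 : x0 ≠ x2) (h12 : x1 ≠ x2) :
    (φ x0 = x0 → φ x1 = x1 → φ x2 = x2 → S.ncard = 3) ∧
    (φ x0 = x1 → φ x1 = x2 → φ x2 = x0 → S.ncard = 0) ∧
    (φ x0 = x2 → φ x1 = x0 → φ x2 = x1 → S.ncard = 0) ∧
    (φ x0 = x0 → φ x1 = x2 → φ x2 = x1 → S.ncard = 1) ∧
    (φ x0 = x2 → φ x1 = x1 → φ x2 = x0 → S.ncard = 1) ∧
    (φ x0 = x1 → φ x1 = x0 → φ x2 = x2 → S.ncard = 1) := by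
  obtain ⟨c3, c0, c1, c1', c1''⟩ := wc_ncard3 S x0 x1 x2 φ hS h01 h02 h12
  refine ⟨c3, ?_, ?_, ?_, ?_, ?_⟩ <;> intro e0 e1 e2 <;> rw [e0, e1, e2] at c0 c1 c1' c1''
  · exact c0 h01.symm h12.symm h02
  · exact c0 h02.symm h01 h12
  · exact c1 rfl h12.symm h12
  · exact c1' h02.symm rfl h02
  · exact c1'' h01.symm h01 rfl

theorem wc_cuberoots {F : Type*} [Field F] (h2 : (2 : F) = 0) (w u v : F)
    (hw : w ^ 2 + w + 1 = 0) (h : u ^ 3 = v ^ 3) : u = v ∨ u = w * v ∨ u = w ^ 2 * v := by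
  have : (u - v) * ((u - w * v) * (u - w ^ 2 * v)) = 0 := by grind
  rcases mul_eq_zero.1 this with h | h
  · left; exact sub_eq_zero.1 h
  rcases mul_eq_zero.1 h with h | h
  · right; left; exact sub_eq_zero.1 h
  · right; right; exact sub_eq_zero.1 h

theorem wc_fact {F : Type*} [Field F] (h2 : (2 : F) = 0) (w y z e a b x : F)
    (hw : w ^ 2 + w + 1 = 0) (hy : y ^ 3 = e) (hz : z ^ 3 = e + b) (hyz : y * z = a) :
    x ^ 3 + a * x + b =
        (x - (y + z)) * ((x - (w * y + w ^ 2 * z)) * (x - (w ^ 2 * y + w * z))) := by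
  have hb : b = z ^ 3 - y ^ 3 := by rw [hy, hz]; ring
  have h3 : w ^ 3 = 1 := by linear_combination (w - 1) * hw
  rw [hb, ← hyz]
  clear hb hy hz hyz
  grind

set_option maxHeartbeats 1000000 in
/-- the core: `A` plays the role of m being even. -/
theorem wc_core {F : Type*} [Field F] (h2 : (2 : F) = 0) (φ : F →+* F) (S : Set F)
    (a b e w y z : F) (A : Prop) (hb : b ≠ 0) (he0 : e ≠ 0)
    (hw : w ^ 2 + w + 1 = 0) (hy : y ^ 3 = e) (hz : z ^ 3 = e + b) (hyz : y * z = a)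
    (hφa : φ a = a) (hφe : φ e = e ∨ φ e = e + b)
    (hA : A → φ w = w) (hA' : ¬ A → φ w = w ^ 2)
    (hS : ∀ x, x ∈ S ↔ φ x = x ∧ x ^ 3 + a * x + b = 0) :
    (S.ncard = 0 ∨ S.ncard = 1 ∨ S.ncard = 3) ∧
    (S.ncard = 1 ↔ ¬ (φ e = e ↔ A)) ∧
    ((S.ncard = 0 ∨ S.ncard = 3) → (S.ncard = 3 ↔ ∃ Y, φ (φ Y) = Y ∧ Y ^ 3 = e)) := by
  have hw3 : w ^ 3 = 1 := by grind
  have hw0 : w ≠ 0 := by rintro rfl; simp at hw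
  have hw1 : w ≠ 1 := by rintro rfl; grind
  have hy0 : y ≠ 0 := by rintro rfl; simp at hy; exact he0 hy.symm
  have hne : y ^ 3 ≠ z ^ 3 := by
    rw [hy, hz]; intro h; apply hb; linear_combination -h
  have n0 : y ≠ z := fun h => hne (by rw [h])
  have n1 : y ≠ w * z := fun h => hne (by rw [h, mul_pow, hw3, one_mul])
  have n2 : y ≠ w ^ 2 * z := fun h => hne (by
    rw [h, mul_pow, ← pow_mul, mul_comm 2 3, pow_mul, hw3]; ring)
  have hS' : ∀ x, x ∈ S ↔ φ x = x ∧
      (x = y + z ∨ x = w * y + w ^ 2 * z ∨ x = w ^ 2 * y + w * z) := by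
    intro x
    rw [hS]
    have : x ^ 3 + a * x + b =
        (x - (y + z)) * ((x - (w * y + w ^ 2 * z)) * (x - (w ^ 2 * y + w * z))) :=
      wc_fact h2 w y z e a b x hw hy hz hyz
    rw [this]
    simp only [mul_eq_zero, sub_eq_zero]
  have d01 : y + z ≠ w * y + w ^ 2 * z := by
    intro h; apply n2
    have : (1 - w) * (y - w ^ 2 * z) = 0 := by grind
    rcases mul_eq_zero.1 this with h | h
    · exact absurd (sub_eq_zero.1 h).symm hw1
    · exact sub_eq_zero.1 h
  have d02 : y + z ≠ w ^ 2 * y + w * z := by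
    intro h; apply n1
    have : (1 - w) * (y - w * z) = 0 := by grind
    rcases mul_eq_zero.1 this with h | h
    · exact absurd (sub_eq_zero.1 h).symm hw1
    · exact sub_eq_zero.1 h
  have d12 : w * y + w ^ 2 * z ≠ w ^ 2 * y + w * z := by
    intro h; apply n0
    have : (1 - w) * (y - z) = 0 := by grind
    rcases mul_eq_zero.1 this with h | h
    · exact absurd (sub_eq_zero.1 h).symm hw1
    · exact sub_eq_zero.1 h
  obtain ⟨c3, c0, c0', t0, t1, t2⟩ := wc_perm S _ _ _ φ hS' d01 d02 d12
  have hw4 : w ^ 4 = w := by linear_combination w * hw3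
  have hw5 : w ^ 5 = w ^ 2 := by linear_combination w ^ 2 * hw3
  have hw6 : w ^ 6 = 1 := by linear_combination (w ^ 3 + 1) * hw3
  have hφφw : φ (φ w) = w := by
    by_cases h : A
    · rw [hA h, hA h]
    · rw [hA' h, map_pow, hA' h]; linear_combination (w ^ 2 - w) * hw
  have hcube : (∃ Y, φ (φ Y) = Y ∧ Y ^ 3 = e) ↔ φ (φ y) = y := by
    constructor
    · rintro ⟨Y, hY, hYe⟩
      rcases wc_cuberoots h2 w y Y hw (hy.trans hYe.symm) with h | h | h <;>
        rw [h] <;> simp only [map_mul, map_pow, hφφw, hY]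
    · intro h; exact ⟨y, h, hy⟩
  rw [hcube]
  have hφyz : φ y * φ z = y * z := by rw [← map_mul, hyz, hφa]
  have wy1 : w * y ≠ y := fun h => hw1 (mul_right_cancel₀ hy0 (by rw [h, one_mul]))
  have wy2 : w ^ 2 * y ≠ y := by
    intro h; apply wy1; linear_combination -w * h + y * hw3
  have key : ((φ e = e ↔ A) ∧ ((φ (φ y) = y ∧ S.ncard = 3) ∨ (φ (φ y) ≠ y ∧ S.ncard = 0))) ∨
      (¬ (φ e = e ↔ A) ∧ S.ncard = 1) := by
    by_cases hE : φ e = e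
    · have h3 : φ y ^ 3 = y ^ 3 := by rw [← map_pow, hy, hE]
      by_cases h : A
      · have hw' := hA h
        left
        refine ⟨by simp only [hE, h, iff_self, iff_true, iff_false, not_true_eq_false, not_false_eq_true], ?_⟩
        rcases wc_cuberoots h2 w (φ y) y hw h3 with k | k | k <;> rw [k] at hφyz
        · have kz : φ z = z := by
            apply mul_left_cancel₀ hy0; linear_combination hφyz
          left
          refine ⟨by rw [k, k], c3 ?_ ?_ ?_⟩ <;>
            simp only [map_add, map_mul, map_pow, k, kz, hw'] <;> ring_nf <;>
            (try simp only [hw3, hw4, hw5, hw6]) <;> (try ring)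
        · have kz : φ z = w ^ 2 * z := by
            apply mul_left_cancel₀ hy0; linear_combination w ^ 2 * hφyz - y * φ z * hw3
          right
          constructor
          · simp only [map_mul, map_pow, k, kz, hw']; intro h; apply wy2; linear_combination h
          refine c0 ?_ ?_ ?_ <;>
            simp only [map_add, map_mul, map_pow, k, kz, hw'] <;> ring_nf <;>
            (try simp only [hw3, hw4, hw5, hw6]) <;> (try ring)
        · have kz : φ z = w * z := by
            apply mul_left_cancel₀ hy0; linear_combination w * hφyz - y * φ z * hw3
          right
          constructor
          · simp only [map_mul, map_pow, k, kz, hw']; intro h; apply wy1; linear_combination h - w * y * hw3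
          refine c0' ?_ ?_ ?_ <;>
            simp only [map_add, map_mul, map_pow, k, kz, hw'] <;> ring_nf <;>
            (try simp only [hw3, hw4, hw5, hw6]) <;> (try ring)
      · have hw' := hA' h
        right
        refine ⟨by simp only [hE, h, iff_self, iff_true, iff_false, not_true_eq_false, not_false_eq_true], ?_⟩
        rcases wc_cuberoots h2 w (φ y) y hw h3 with k | k | k <;> rw [k] at hφyz
        · have kz : φ z = z := by
            apply mul_left_cancel₀ hy0; linear_combination hφyz
          refine t0 ?_ ?_ ?_ <;>
            simp only [map_add, map_mul, map_pow, k, kz, hw'] <;> ring_nf <;>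
            (try simp only [hw3, hw4, hw5, hw6]) <;> (try ring)
        · have kz : φ z = w ^ 2 * z := by
            apply mul_left_cancel₀ hy0; linear_combination w ^ 2 * hφyz - y * φ z * hw3
          refine t2 ?_ ?_ ?_ <;>
            simp only [map_add, map_mul, map_pow, k, kz, hw'] <;> ring_nf <;>
            (try simp only [hw3, hw4, hw5, hw6]) <;> (try ring)
        · have kz : φ z = w * z := by
            apply mul_left_cancel₀ hy0; linear_combination w * hφyz - y * φ z * hw3
          refine t1 ?_ ?_ ?_ <;>
            simp only [map_add, map_mul, map_pow, k, kz, hw'] <;> ring_nf <;>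
            (try simp only [hw3, hw4, hw5, hw6]) <;> (try ring)
    · have hE' : φ e = e + b := hφe.resolve_left hE
      have hz0 : z ≠ 0 := by
        rintro rfl
        have : φ e = 0 := by rw [hE', ← hz]; simp
        exact he0 ((map_eq_zero φ).1 this)
      have h3 : φ y ^ 3 = z ^ 3 := by rw [← map_pow, hy, hE', hz]
      by_cases h : A
      · have hw' := hA h
        right
        refine ⟨by simp only [hE, h, iff_self, iff_true, iff_false, not_true_eq_false, not_false_eq_true], ?_⟩
        rcases wc_cuberoots h2 w (φ y) z hw h3 with k | k | k <;> rw [k] at hφyz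
        · have kz : φ z = y := by
            apply mul_left_cancel₀ hz0; linear_combination hφyz
          refine t0 ?_ ?_ ?_ <;>
            simp only [map_add, map_mul, map_pow, k, kz, hw'] <;> ring_nf <;>
            (try simp only [hw3, hw4, hw5, hw6]) <;> (try ring)
        · have kz : φ z = w ^ 2 * y := by
            apply mul_left_cancel₀ hz0; linear_combination w ^ 2 * hφyz - z * φ z * hw3
          refine t1 ?_ ?_ ?_ <;>
            simp only [map_add, map_mul, map_pow, k, kz, hw'] <;> ring_nf <;>
            (try simp only [hw3, hw4, hw5, hw6]) <;> (try ring)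
        · have kz : φ z = w * y := by
            apply mul_left_cancel₀ hz0; linear_combination w * hφyz - z * φ z * hw3
          refine t2 ?_ ?_ ?_ <;>
            simp only [map_add, map_mul, map_pow, k, kz, hw'] <;> ring_nf <;>
            (try simp only [hw3, hw4, hw5, hw6]) <;> (try ring)
      · have hw' := hA' h
        left
        refine ⟨by simp only [hE, h, iff_self, iff_true, iff_false, not_true_eq_false, not_false_eq_true], ?_⟩
        rcases wc_cuberoots h2 w (φ y) z hw h3 with k | k | k <;> rw [k] at hφyz
        · have kz : φ z = y := by
            apply mul_left_cancel₀ hz0; linear_combination hφyz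
          left
          refine ⟨by rw [k, kz], c3 ?_ ?_ ?_⟩ <;>
            simp only [map_add, map_mul, map_pow, k, kz, hw'] <;> ring_nf <;>
            (try simp only [hw3, hw4, hw5, hw6]) <;> (try ring)
        · have kz : φ z = w ^ 2 * y := by
            apply mul_left_cancel₀ hz0; linear_combination w ^ 2 * hφyz - z * φ z * hw3
          right
          constructor
          · simp only [map_mul, map_pow, k, kz, hw']; intro h; apply wy1; linear_combination h - w * y * hw3
          refine c0' ?_ ?_ ?_ <;>
            simp only [map_add, map_mul, map_pow, k, kz, hw'] <;> ring_nf <;>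
            (try simp only [hw3, hw4, hw5, hw6]) <;> (try ring)
        · have kz : φ z = w * y := by
            apply mul_left_cancel₀ hz0; linear_combination w * hφyz - z * φ z * hw3
          right
          constructor
          · simp only [map_mul, map_pow, k, kz, hw']; intro h; apply wy2; linear_combination h - w ^ 2 * y * hw3
          refine c0 ?_ ?_ ?_ <;>
            simp only [map_add, map_mul, map_pow, k, kz, hw'] <;> ring_nf <;>
            (try simp only [hw3, hw4, hw5, hw6]) <;> (try ring)
  rcases key with ⟨h1, ⟨h2, h3⟩ | ⟨h2, h3⟩⟩ | ⟨h1, h3⟩ <;> simp [h1, h2, h3]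

theorem wc_trace {F : Type*} [Field F] [CharP F 2] (t c : F) (h : t ^ 2 + t = c) (m : ℕ) :
    ∑ i ∈ Finset.range m, c ^ 2 ^ i = t ^ 2 ^ m + t := by
  induction m with
  | zero => simp [CharTwo.add_self_eq_zero]
  | succ n ih =>
    have h1 : c ^ 2 ^ n = t ^ 2 ^ (n + 1) + t ^ 2 ^ n := by
      rw [← h, add_pow_char_pow, ← pow_mul, pow_succ 2 n, mul_comm 2]
    rw [Finset.sum_range_succ, ih, h1]
    have := CharTwo.add_self_eq_zero (t ^ 2 ^ n)
    linear_combination this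

theorem wc_w {F : Type*} [Field F] [CharP F 2] (w : F) (hw : w ^ 2 + w + 1 = 0) (m : ℕ) :
    (Even m → w ^ 2 ^ m = w) ∧ (¬ Even m → w ^ 2 ^ m = w ^ 2) := by
  have h4 : w ^ 4 = w := by linear_combination (w ^ 2 - w) * hw
  have he : ∀ k : ℕ, w ^ 2 ^ (k + k) = w := by
    intro k
    induction k with
    | zero => simp
    | succ n ih =>
      rw [show 2 ^ (n + 1 + (n + 1)) = 2 ^ (n + n) * 4 by ring, pow_mul, ih, h4]
  constructor
  · rintro ⟨k, rfl⟩; exact he k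
  · intro h
    obtain ⟨k, rfl⟩ := Nat.not_even_iff_odd.1 h
    rw [show 2 ^ (2 * k + 1) = 2 ^ (k + k) * 2 by ring, pow_mul, he]

theorem wc_main {F : Type*} [Field F] [CharP F 2] [IsAlgClosed F]
    (m : ℕ) (hm : 0 < m) (q : ℕ) (hq : q = 2 ^ m)
    (a b : F) (haq : a ^ q = a) (hbq : b ^ q = b) (hb : b ≠ 0)
    (e : F) (he0 : e ≠ 0) (heF : e ^ q ^ 2 = e) (he : e ^ 2 + b * e + a ^ 3 = 0)
    (N : ℕ) (hN : N = {x : F | x ^ q = x ∧ x ^ 3 + a * x + b = 0}.ncard) :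
    N ∈ ({0, 1, 3} : Set ℕ) ∧
    (N = 1 ↔ ∑ i ∈ Finset.range m, (a ^ 3 / b ^ 2) ^ 2 ^ i ≠ (m : F)) ∧
    ((N = 0 ∨ N = 3) → (N = 3 ↔ ∃ y : F, y ^ q ^ 2 = y ∧ y ^ 3 = e)) := by
  have h2 : (2 : F) = 0 := CharTwo.two_eq_zero
  obtain ⟨w, hw⟩ : ∃ w : F, w ^ 2 + w + 1 = 0 := by
    have hd : (X ^ 2 + X + 1 : Polynomial F).degree = 2 := by compute_degree!
    obtain ⟨w, hw⟩ := IsAlgClosed.exists_root (X ^ 2 + X + 1 : Polynomial F) (by rw [hd]; simp)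
    exact ⟨w, by simpa using hw⟩
  obtain ⟨y, hy⟩ := IsAlgClosed.exists_pow_nat_eq e (n := 3) (by norm_num)
  have hy0 : y ≠ 0 := by rintro rfl; simp at hy; exact he0 hy.symm
  have hz : (a / y) ^ 3 = e + b := by
    rw [div_pow, hy, div_eq_iff he0]
    linear_combination -he + a ^ 3 * h2
  have hφ : ∀ x : F, iterateFrobenius F 2 m x = x ^ q := by
    intro x; rw [iterateFrobenius_def, hq]
  have htr := wc_trace (e / b) (a ^ 3 / b ^ 2) (by
    field_simp
    linear_combination he - a ^ 3 * h2) m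
  rw [← hq, div_pow, hbq, ← add_div] at htr
  have hφe : e ^ q = e ∨ e ^ q = e + b := by
    have h := congrArg (iterateFrobenius F 2 m) he
    simp only [map_add, map_mul, map_pow, map_zero] at h
    simp only [hφ, haq, hbq] at h
    have : (e ^ q - e) * (e ^ q - (e + b)) = 0 := by
      linear_combination h - he + (e ^ 2 + e * b - e ^ q * e - e ^ q * b) * h2
    rcases mul_eq_zero.1 this with h | h
    · left; exact sub_eq_zero.1 h
    · right; exact sub_eq_zero.1 h
  obtain ⟨hw1, hw2⟩ := wc_w w hw m
  obtain ⟨r1, r2, r3⟩ := wc_core h2 (iterateFrobenius F 2 m)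
    {x : F | x ^ q = x ∧ x ^ 3 + a * x + b = 0} a b e w y (a / y) (Even m) hb he0 hw hy hz
    (by field_simp) (by rw [hφ, haq]) (by rw [hφ]; exact hφe)
    (by rw [hφ, hq]; exact hw1) (by rw [hφ, hq]; exact hw2) (by intro x; rw [hφ]; rfl)
  rw [← hN] at r1 r2 r3
  refine ⟨by simpa using r1, ?_, ?_⟩
  · rw [r2, htr, hφ, ne_eq, not_iff_not]
    have hm' : (Even m → (m : F) = 0) ∧ (¬ Even m → (m : F) = 1) := by
      constructor
      · intro h; exact (CharP.cast_eq_zero_iff F 2 m).2 h.two_dvd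
      · intro h
        obtain ⟨k, rfl⟩ := Nat.not_even_iff_odd.1 h
        push_cast; rw [h2]; ring
    have h1 : e ^ q = e ↔ (e ^ q + e) / b = 0 := by
      rw [div_eq_zero_iff, or_iff_left hb, CharTwo.add_eq_zero]
    have h3 : e ^ q ≠ e → (e ^ q + e) / b = 1 := by
      intro h
      rw [hφe.resolve_left h, div_eq_one_iff_eq hb]
      linear_combination e * h2
    by_cases hE : Even m
    · rw [hm'.1 hE, ← h1]; exact iff_true_right hE
    · rw [hm'.2 hE]
      constructor
      · intro h; exact h3 (fun h' => hE (h.1 h'))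
      · intro h
        have : ¬ e ^ q = e := by rw [h1, h]; exact one_ne_zero
        exact iff_of_false this hE
  · intro h
    rw [r3 h]
    simp only [hφ, ← pow_mul, ← sq]


/-- Lemma 2.4 (Williams): for `q = 2^m`, `a ∈ F_q`, `b ∈ F_q^*`, the number `N` of distinct
roots of `X³ + aX + b` in `F_q` lies in `{0,1,3}`; `N = 1` iff `Tr(a³/b²) ≠ Tr(1)`; and
if `N ∈ {0,3}` then `N = 3` iff `e` is a cube in `F_{q²}`, where `e² + be + a³ = 0`, `e ≠ 0`. -/
theorem williams_cubic
    (m : ℕ) (hm : 0 < m) (q : ℕ) (hq : q = 2 ^ m)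
    (a b : K) (haq : a ^ q = a) (hbq : b ^ q = b) (hb : b ≠ 0)
    (e : K) (he0 : e ≠ 0) (heF : e ^ q ^ 2 = e) (he : e ^ 2 + b * e + a ^ 3 = 0)
    (N : ℕ) (hN : N = {x : K | x ^ q = x ∧ x ^ 3 + a * x + b = 0}.ncard) :
    N ∈ ({0, 1, 3} : Set ℕ) ∧
    (N = 1 ↔ ∑ i ∈ Finset.range m, (a ^ 3 / b ^ 2) ^ 2 ^ i ≠ (m : K)) ∧
    ((N = 0 ∨ N = 3) → (N = 3 ↔ ∃ y : K, y ^ q ^ 2 = y ∧ y ^ 3 = e)) :=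
  wc_main m hm q hq a b haq hbq hb e he0 heF he N hN
end

section
/- For any nonzero elements a, e of the algebraic closure of F_2 with e² + ae + 1 = 0, the set of roots of X³ + X + a in the algebraic closure of F_2 equals {v + v⁻¹ : v in the algebraic closure of F_2 with v³ = e}. -/
open Polynomial

local notation "K" => AlgebraicClosure (ZMod 2)

/-- Lemma 2.5: for nonzero `a, e` in the algebraic closure of `F_2` with `e² + ae + 1 = 0`,
the roots of `X³ + X + a` are exactly the elements `v + v⁻¹` with `v³ = e`. -/
theorem cubic_roots_via_cube_roots
    (a e : K) (ha : a ≠ 0) (he0 : e ≠ 0) (he : e ^ 2 + a * e + 1 = 0) :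
    {x : K | x ^ 3 + x + a = 0} = {x : K | ∃ v : K, v ^ 3 = e ∧ x = v + v⁻¹} := by
  have h2 : (2 : K) = 0 := by
    have h := CharP.cast_eq_zero K 2
    exact_mod_cast h
  ext x
  simp only [Set.mem_setOf_eq]
  constructor
  · intro hx
    obtain ⟨v, hv⟩ : ∃ v : K, v ^ 2 + x * v + 1 = 0 := by
      have hd : (C (1 : K) * X ^ 2 + C x * X + C 1).degree = 2 :=
        degree_quadratic one_ne_zero
      obtain ⟨v, hv⟩ := IsAlgClosed.exists_root (C (1 : K) * X ^ 2 + C x * X + C 1)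
        (by rw [hd]; decide)
      refine ⟨v, ?_⟩
      simpa [IsRoot] using hv
    have hv0 : v ≠ 0 := by
      rintro rfl
      simp at hv
    have hxv : x * v = v ^ 2 + 1 := by linear_combination hv - (v ^ 2 + 1) * h2
    have hxe : x = v + v⁻¹ := by
      field_simp
      linear_combination hxv
    have h6 : v ^ 6 + a * v ^ 3 + 1 = 0 := by
      have h3 : (x * v) ^ 3 + v ^ 2 * (x * v) + a * v ^ 3 = 0 := by
        linear_combination v ^ 3 * hx
      rw [hxv] at h3
      linear_combination h3 - (2 * v ^ 4 + 2 * v ^ 2) * h2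
    have hp : (v ^ 3 - e) * (v ^ 3 * e - 1) = 0 := by
      linear_combination e * h6 - v ^ 3 * he
    rcases mul_eq_zero.mp hp with h | h
    · exact ⟨v, sub_eq_zero.mp h, hxe⟩
    · refine ⟨v⁻¹, ?_, by rw [inv_inv, hxe, add_comm]⟩
      rw [inv_pow]
      exact inv_eq_of_mul_eq_one_right (sub_eq_zero.mp h)
  · rintro ⟨v, rfl, rfl⟩
    have hv0 : v ≠ 0 := by
      rintro rfl
      simp at he0
    field_simp
    linear_combination he + (2 * v ^ 4 + 2 * v ^ 2) * h2
end

section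
/- For any a ∈ F_q^* with Tr(1/a) = Tr(1), any nonnegative integer ℓ divisible by 3, and any e ∈ F_{q²}^* with e² + ae + 1 = 0, the set Γ of roots in F_{q³} of X^(2q^ℓ+1) + X + a has exactly three elements, and Γ = {v + v⁻¹ : v ∈ F_{q⁶}, v³ = e}. -/
open Polynomial

local notation "K" => AlgebraicClosure (ZMod 2)

lemma aux_tele (y : K) (n : ℕ) :
    ∑ i ∈ Finset.range n, (y ^ 2 + y) ^ 2 ^ i = y ^ 2 ^ n + y := by
  have h2 : (2 : K) = 0 := CharTwo.two_eq_zero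
  induction n with
  | zero => simp; linear_combination (-y) * h2
  | succ n ih =>
    rw [Finset.sum_range_succ, ih, add_pow_char_pow, ← pow_mul, ← pow_succ']
    linear_combination (y ^ 2 ^ n) * h2

lemma aux_omega : ∃ w : K, w ^ 2 + w + 1 = 0 := by
  obtain ⟨w, hw⟩ := IsAlgClosed.exists_root (X ^ 2 + X + 1 : K[X]) (by
    have : (X ^ 2 + X + 1 : K[X]).degree = 2 := by compute_degree!
    rw [this]; decide)
  exact ⟨w, by simpa [IsRoot] using hw⟩

lemma aux_frob (m q : ℕ) (hq : q = 2 ^ m) (a e : K) (ha : a ≠ 0) (haq : a ^ q = a)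
    (htr : ∑ i ∈ Finset.range m, a⁻¹ ^ 2 ^ i = (m : K))
    (he : e ^ 2 + a * e + 1 = 0) : e ^ q = e + a * m := by
  have h2 : (2 : K) = 0 := CharTwo.two_eq_zero
  have h1 := aux_tele (e / a) m
  have h3 : (e / a) ^ 2 + e / a = a⁻¹ ^ 2 := by
    field_simp
    linear_combination he - h2
  rw [h3] at h1
  have h4 : ∑ i ∈ Finset.range m, (a⁻¹ ^ 2) ^ 2 ^ i = (m : K) ^ 2 := by
    rw [← htr, sum_pow_char]
    refine Finset.sum_congr rfl fun i _ => ?_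
    rw [← pow_mul, ← pow_mul, mul_comm]
  have h5 : (m : K) ^ 2 = m := by
    rcases Nat.even_or_odd m with ⟨k, hk⟩ | ⟨k, hk⟩
    · have : (m : K) = 0 := by rw [hk]; push_cast; linear_combination (k : K) * h2
      rw [this]; ring
    · have : (m : K) = 1 := by rw [hk]; push_cast; linear_combination (k : K) * h2
      rw [this]; ring
  rw [h4, h5, ← hq, div_pow, haq] at h1
  field_simp at h1
  linear_combination -h1 - e * h2

lemma aux_v (m q : ℕ) (hq : q = 2 ^ m) (a e v : K) (ha : a ≠ 0) (haq : a ^ q = a)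
    (htr : ∑ i ∈ Finset.range m, a⁻¹ ^ 2 ^ i = (m : K)) (he0 : e ≠ 0)
    (he : e ^ 2 + a * e + 1 = 0) (hv : v ^ 3 = e) : v ^ q ^ 3 = v ∨ v ^ q ^ 3 = v⁻¹ := by
  have h2 : (2 : K) = 0 := CharTwo.two_eq_zero
  have hf := aux_frob m q hq a e ha haq htr he
  have hv0 : v ≠ 0 := by rintro rfl; apply he0; rw [← hv]; simp
  rcases Nat.even_or_odd m with ⟨k, hk⟩ | ⟨k, hk⟩
  · left
    have hm0 : (m : K) = 0 := by rw [hk]; push_cast; linear_combination (k : K) * h2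
    rw [hm0, mul_zero, add_zero] at hf
    have hq3 : q % 3 = 1 := by
      rw [hq, hk, ← two_mul, pow_mul, Nat.pow_mod]; simp
    obtain ⟨t, ht⟩ : ∃ t, q = 3 * t + 1 := ⟨q / 3, by omega⟩
    have h1 : e ^ (3 * t) = 1 := by
      rw [ht, pow_succ] at hf
      exact mul_right_cancel₀ he0 (by rw [hf, one_mul])
    have : q ^ 3 = 3 * ((3 * t) * (3 * t ^ 2 + 3 * t + 1)) + 1 := by rw [ht]; ring
    rw [this, pow_succ, pow_mul, hv, pow_mul, h1, one_pow, one_mul]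
  · right
    have hm0 : (m : K) = 1 := by rw [hk]; push_cast; linear_combination (k : K) * h2
    rw [hm0, mul_one] at hf
    have hq3 : q % 3 = 2 := by
      rw [hq, hk, pow_succ, pow_mul, Nat.mul_mod, Nat.pow_mod]; simp
    obtain ⟨t, ht⟩ : ∃ t, q = 3 * t + 2 := ⟨q / 3, by omega⟩
    have h1 : e ^ (3 * t + 3) = 1 := by
      have : 3 * t + 3 = q + 1 := by omega
      rw [this, pow_succ, hf]
      linear_combination he - h2
    have : q ^ 3 + 1 = 3 * ((3 * t + 3) * (3 * t ^ 2 + 3 * t + 1)) := by rw [ht]; ring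
    apply eq_inv_of_mul_eq_one_left
    rw [← pow_succ, this, pow_mul, hv, pow_mul, h1, one_pow]

lemma aux_pow (x : K) (q : ℕ) (h : x ^ q ^ 3 = x) (k : ℕ) : x ^ q ^ (3 * k) = x := by
  induction k with
  | zero => simp
  | succ k ih => rw [Nat.mul_succ, pow_add, pow_mul, ih, h]

/-- Corollary 2.7: for `q = 2^m`, `a ∈ F_q^*` with `Tr(1/a) = Tr(1)`, `3 ∣ ℓ`, and
`e ∈ F_{q²}^*` with `e² + ae + 1 = 0`, the set `Γ` of roots in `F_{q³}` of
`X^(2q^ℓ+1) + X + a` has size `3` and equals `{v + v⁻¹ : v ∈ F_{q⁶}, v³ = e}`. -/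
theorem roots_ell_div_three
    (m : ℕ) (hm : 0 < m) (q : ℕ) (hq : q = 2 ^ m)
    (a : K) (ha : a ≠ 0) (haq : a ^ q = a)
    (htr : ∑ i ∈ Finset.range m, a⁻¹ ^ 2 ^ i = (m : K))
    (ℓ : ℕ) (hℓ : 3 ∣ ℓ)
    (e : K) (he0 : e ≠ 0) (heF : e ^ q ^ 2 = e) (he : e ^ 2 + a * e + 1 = 0)
    (Γ : Set K)
    (hΓ : Γ = {x : K | x ^ q ^ 3 = x ∧ x ^ (2 * q ^ ℓ + 1) + x + a = 0}) :
    Γ.ncard = 3 ∧ Γ = {x : K | ∃ v : K, v ^ q ^ 6 = v ∧ v ^ 3 = e ∧ x = v + v⁻¹} := by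
  have h2 : (2 : K) = 0 := CharTwo.two_eq_zero
  have hV := fun v => aux_v m q hq a e v ha haq htr he0 he
  have h6 : ∀ v : K, v ^ 3 = e → v ^ q ^ 6 = v := by
    intro v hv
    have : q ^ 6 = q ^ 3 * q ^ 3 := by ring
    rw [this, pow_mul]
    rcases hV v hv with h | h
    · rw [h, h]
    · rw [h, inv_pow, h, inv_inv]
  have hadd : ∀ x y : K, (x + y) ^ q ^ 3 = x ^ q ^ 3 + y ^ q ^ 3 := by
    intro x y
    rw [hq, ← pow_mul, add_pow_char_pow]
  have h3 : ∀ v : K, v ^ 3 = e → (v + v⁻¹) ^ q ^ 3 = v + v⁻¹ := by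
    intro v hv
    rw [hadd, inv_pow]
    rcases hV v hv with h | h
    · rw [h]
    · rw [h, inv_inv, add_comm]
  have hΓ1 : ∀ x, x ∈ Γ ↔ x ^ q ^ 3 = x ∧ x ^ 3 + x + a = 0 := by
    intro x
    rw [hΓ]
    refine and_congr_right fun hx => ?_
    obtain ⟨k, rfl⟩ := hℓ
    have : x ^ (2 * q ^ (3 * k) + 1) = x ^ 3 := by
      rw [pow_succ, mul_comm 2, pow_mul, aux_pow x q hx k, ← pow_succ]
    rw [this]
  obtain ⟨w, hw⟩ := aux_omega
  obtain ⟨v, hv⟩ := IsAlgClosed.exists_pow_nat_eq e (n := 3) (by norm_num)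
  have hv0 : v ≠ 0 := by rintro rfl; apply he0; rw [← hv]; simp
  have hw3 : w ^ 3 = 1 := by linear_combination (w - 1) * hw
  have hw0 : w ≠ 0 := by rintro rfl; simp at hw3
  have hw1 : w ≠ 1 := by
    rintro rfl
    exact one_ne_zero (α := K) (by linear_combination hw - h2)
  have he1 : e ≠ 1 := by
    rintro rfl
    apply ha
    linear_combination he - h2
  have hwi : w⁻¹ = w ^ 2 := inv_eq_of_mul_eq_one_right (by linear_combination hw3)
  have hva : v ^ 3 + (v⁻¹) ^ 3 = a := by
    rw [inv_pow, hv]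
    field_simp
    linear_combination he - a * e * h2
  have huv : v * v⁻¹ = 1 := mul_inv_cancel₀ hv0
  have hc1 : (v * w) ^ 3 = e := by rw [mul_pow, hw3, hv, mul_one]
  have hc2 : (v * w ^ 2) ^ 3 = e := by
    linear_combination hv * (w ^ 3) ^ 2 + e * (w ^ 3 + 1) * hw3
  have hcube : ∀ u : K, u ^ 3 = e → u = v ∨ u = v * w ∨ u = v * w ^ 2 := by
    intro u hu
    have : (u - v) * ((u - v * w) * (u - v * w ^ 2)) = 0 := by
      linear_combination hu - hv - u * v * (u - v) * (hw) +
        (u - v) * v ^ 2 * hw3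
    rcases mul_eq_zero.1 this with h | h
    · exact Or.inl (sub_eq_zero.1 h)
    · rcases mul_eq_zero.1 h with h | h
      · exact Or.inr (Or.inl (sub_eq_zero.1 h))
      · exact Or.inr (Or.inr (sub_eq_zero.1 h))
  -- roots are cubes
  have hroot : ∀ u : K, u ^ 3 = e → (u + u⁻¹) ^ 3 + (u + u⁻¹) + a = 0 := by
    intro u hu
    have hu0 : u ≠ 0 := by rintro rfl; apply he0; rw [← hu]; simp
    have hua : u ^ 3 + (u⁻¹) ^ 3 = a := by
      rw [inv_pow, hu]
      field_simp
      linear_combination he - a * e * h2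
    have huu : u * u⁻¹ = 1 := mul_inv_cancel₀ hu0
    linear_combination hua + 3 * (u + u⁻¹) * huu + (2 * (u + u⁻¹) + a) * h2
  have hinj : ∀ u z : K, u ^ 3 = e → z ^ 3 = e → u + u⁻¹ = z + z⁻¹ → u = z := by
    intro u z hu hz h
    have hu0 : u ≠ 0 := by rintro rfl; apply he0; rw [← hu]; simp
    have hz0 : z ≠ 0 := by rintro rfl; apply he0; rw [← hz]; simp
    field_simp at h
    have : (u - z) * (u * z - 1) = 0 := by linear_combination h
    rcases mul_eq_zero.1 this with h | h
    · exact sub_eq_zero.1 h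
    · exfalso
      have h1 : u * z = 1 := sub_eq_zero.1 h
      have h4 : e * e = 1 := by
        nth_rewrite 1 [← hu]
        rw [← hz, ← mul_pow, h1, one_pow]
      have h5 : (e - 1) ^ 2 = 0 := by linear_combination h4 + (1 - e) * h2
      exact he1 (sub_eq_zero.1 (pow_eq_zero_iff (two_ne_zero) |>.1 h5))
  have hn1 : v ≠ v * w := fun h => hw1 (mul_left_cancel₀ hv0 (by rw [mul_one]; exact h.symm))
  have hn2 : v ≠ v * w ^ 2 := fun h => by
    have h1 : w ^ 2 = 1 := mul_left_cancel₀ hv0 (by rw [mul_one]; exact h.symm)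
    exact hw1 (by linear_combination hw3 - w * h1)
  have hn3 : v * w ≠ v * w ^ 2 := fun h => hn1 (by
    have h1 := mul_left_cancel₀ hv0 h
    exact absurd (mul_left_cancel₀ hw0 (by rw [mul_one, ← sq]; exact h1.symm)) hw1)
  have hm1 : v + v⁻¹ ≠ v * w + (v * w)⁻¹ := fun h => hn1 (hinj _ _ hv hc1 h)
  have hm2 : v + v⁻¹ ≠ v * w ^ 2 + (v * w ^ 2)⁻¹ := fun h => hn2 (hinj _ _ hv hc2 h)
  have hm3 : v * w + (v * w)⁻¹ ≠ v * w ^ 2 + (v * w ^ 2)⁻¹ := fun h => hn3 (hinj _ _ hc1 hc2 h)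
  have hset : Γ = {v + v⁻¹, v * w + (v * w)⁻¹, v * w ^ 2 + (v * w ^ 2)⁻¹} := by
    ext x
    rw [hΓ1]
    simp only [Set.mem_insert_iff, Set.mem_singleton_iff]
    constructor
    · rintro ⟨-, hx⟩
      by_contra! hcon
      obtain ⟨k1, k2, k3⟩ := hcon
      -- divide differences of the cubic
      have e1 := hroot _ hv
      have e2 := hroot _ hc1
      have e3 := hroot _ hc2
      generalize v + v⁻¹ = r at *
      generalize v * w + (v * w)⁻¹ = s at *
      generalize v * w ^ 2 + (v * w ^ 2)⁻¹ = t at *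
      have f1 : x ^ 2 + x * r + r ^ 2 + 1 = 0 :=
        mul_left_cancel₀ (sub_ne_zero.2 k1) (by linear_combination hx - e1)
      have f2 : s ^ 2 + s * r + r ^ 2 + 1 = 0 :=
        mul_left_cancel₀ (sub_ne_zero.2 hm1.symm) (by linear_combination e2 - e1)
      have f3 : t ^ 2 + t * r + r ^ 2 + 1 = 0 :=
        mul_left_cancel₀ (sub_ne_zero.2 hm2.symm) (by linear_combination e3 - e1)
      have g1 : x + s + r = 0 :=
        mul_left_cancel₀ (sub_ne_zero.2 k2) (by linear_combination f1 - f2)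
      have g2 : t + s + r = 0 :=
        mul_left_cancel₀ (sub_ne_zero.2 hm3.symm) (by linear_combination f3 - f2)
      exact k3 (by linear_combination g1 - g2)
    · rintro (rfl | rfl | rfl)
      · exact ⟨h3 _ hv, hroot _ hv⟩
      · exact ⟨h3 _ hc1, hroot _ hc1⟩
      · exact ⟨h3 _ hc2, hroot _ hc2⟩
  refine ⟨?_, ?_⟩
  · rw [hset, Set.ncard_eq_three]
    exact ⟨_, _, _, hm1, hm2, hm3, rfl⟩
  · rw [hset]
    ext x
    simp only [Set.mem_insert_iff, Set.mem_singleton_iff, Set.mem_setOf_eq]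
    constructor
    · rintro (rfl | rfl | rfl)
      · exact ⟨_, h6 _ hv, hv, rfl⟩
      · exact ⟨_, h6 _ hc1, hc1, rfl⟩
      · exact ⟨_, h6 _ hc2, hc2, rfl⟩
    · rintro ⟨u, -, hu, rfl⟩
      rcases hcube u hu with rfl | rfl | rfl
      · exact Or.inl rfl
      · exact Or.inr (Or.inl rfl)
      · exact Or.inr (Or.inr rfl)
end

section
/- For any a ∈ F_q \ F_2 with Tr(1/a) ≠ Tr(1), the polynomial X^(2q^ℓ+1) + X + a has a unique root in F_{q³} for every nonnegative integer ℓ. This root equals e^n + e^(−n), where e ∈ F_{q²} satisfies e² + ae = 1 and n := (2q−1)/3 if m is odd and n := (q+2)/3 if m is even. -/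
open Polynomial

local notation "K" => AlgebraicClosure (ZMod 2)

section helpers

variable {F : Type*} [Field F] [CharP F 2]

lemma two_zero_aux : (2 : F) = 0 := by exact_mod_cast CharP.cast_eq_zero F 2

lemma tele_aux (u b : F) (h : u ^ 2 + u = b) (m : ℕ) :
    ∑ i ∈ Finset.range m, b ^ 2 ^ i = u ^ 2 ^ m + u := by
  have h2 : (2 : F) = 0 := two_zero_aux
  induction m with
  | zero => simp; grind
  | succ k ih =>
    rw [Finset.sum_range_succ, ih, ← h, add_pow_char_pow, ← pow_mul, ← pow_succ']
    grind

lemma key_aux (m : ℕ) (a : F)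
    (htr : ∑ i ∈ Finset.range m, a⁻¹ ^ 2 ^ i ≠ (m : F))
    (u : F) (hu : u ^ 2 ^ m = u) (h : u ^ 2 + u = 1 + a⁻¹) : False := by
  have h2 : (2 : F) = 0 := two_zero_aux
  have := tele_aux u _ h m
  simp only [add_pow_char_pow, one_pow, Finset.sum_add_distrib, hu] at this
  simp at this
  apply htr
  simp only [inv_pow]
  linear_combination this + (u - (m : F)) * h2

/-- `x^3 + x + a` has at most one root in the field with `2^m` elements. -/
lemma uniq_aux (m : ℕ) (a : F) (ha : a ≠ 0)
    (htr : ∑ i ∈ Finset.range m, a⁻¹ ^ 2 ^ i ≠ (m : F))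
    (x c : F) (hx : x ^ 2 ^ m = x) (hc : c ^ 2 ^ m = c)
    (hxa : x ^ 3 + x + a = 0) (hca : c ^ 3 + c + a = 0) : x = c := by
  have h2 : (2 : F) = 0 := two_zero_aux
  by_contra hne
  have hq : x ^ 2 + c * x + c ^ 2 + 1 = 0 := by
    have : (x - c) * (x ^ 2 + c * x + c ^ 2 + 1) = 0 := by grind
    exact (mul_eq_zero.mp this).resolve_left (sub_ne_zero.mpr hne)
  have hc0 : c ≠ 0 := by rintro rfl; apply ha; simpa using hca
  have hc1 : c + 1 ≠ 0 := by
    intro h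
    apply ha
    have : a = c * (c + 1) ^ 2 := by grind
    rw [this, h]; ring
  have haa : a = c * (c + 1) ^ 2 := by grind
  refine key_aux m a htr (x / c + 1 / c + 1 / (c + 1)) ?_ ?_
  · simp only [add_pow_char_pow, div_pow, one_pow, hx, hc]
  · rw [haa]
    field_simp
    grind

lemma sys_aux (m : ℕ) (a : F) (ha : a ≠ 0)
    (haq : a ^ 2 ^ m = a)
    (htr : ∑ i ∈ Finset.range m, a⁻¹ ^ 2 ^ i ≠ (m : F))
    (c : F) (hc : c ^ 2 ^ m = c) (hca : c ^ 3 + c + a = 0)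
    (x y z : F) (h1 : x * y ^ 2 + x + a = 0) (h2 : y * z ^ 2 + y + a = 0)
    (h3 : z * x ^ 2 + z + a = 0)
    (hs1 : (x + y + z) ^ 2 ^ m = x + y + z)
    (hs2 : (x * y + y * z + z * x) ^ 2 ^ m = x * y + y * z + z * x) : x = c := by
  have ht : (2 : F) = 0 := two_zero_aux
  have hs0 : x + y + z ≠ 0 := by
    intro h0
    have e2 : (x * y + y * z + z * x) ^ 2 = 0 := by grind
    have e2' : x * y + y * z + z * x = 0 := by simpa using e2
    have hz : z = x + y := by grind
    subst hz
    have hxy : x = y := by grind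
    subst hxy
    apply ha
    grind
  obtain ⟨w, hw⟩ : ∃ w, w = (x * y + y * z + z * x) / (x + y + z) := ⟨_, rfl⟩
  have hwq : w ^ 2 ^ m = w := by rw [hw, div_pow, hs1, hs2]
  have hws : w * (x + y + z) = x * y + y * z + z * x := by rw [hw]; field_simp
  have E1 : (x + y + z) * (w + 1) ^ 2 = a := by
    apply mul_left_cancel₀ hs0
    have : (x * y + y * z + z * x) ^ 2 + (x + y + z) ^ 2 = a * (x + y + z) := by grind
    rw [mul_comm _ a, ← this, ← hws]
    linear_combination w * (x + y + z) ^ 2 * ht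
  have E3 : x * y * z = a + w := by
    apply mul_left_cancel₀ hs0
    grind
  have P : x * y * z * (1 + (x + y + z) + (x * y + y * z + z * x) + x * y * z) ^ 2 = a ^ 3 := by
    have a1 : x * (y + 1) ^ 2 = a := by grind
    have a2 : y * (z + 1) ^ 2 = a := by grind
    have a3 : z * (x + 1) ^ 2 = a := by grind
    calc _ = (x * (y + 1) ^ 2) * (y * (z + 1) ^ 2) * (z * (x + 1) ^ 2) := by ring
      _ = _ := by rw [a1, a2, a3]; ring
  have hw1 : w + 1 ≠ 0 := by
    intro h; rw [h] at E1; apply ha; rw [← E1]; ring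
  have hs : x + y + z = a / (w + 1) ^ 2 := by rw [← E1]; field_simp
  rw [← hws, E3, hs] at P
  have Q : (w ^ 3 + w + a) * ((w + 1) ^ 2 + a * (w + 1) + a ^ 2 + a) = 0 := by
    field_simp at P
    have P' : (a + w) * ((w + 1) ^ 2 + a * w) ^ 2 = a ^ 3 * (w + 1) ^ 2 := by
      have : (w + 1) ^ 2 ≠ 0 := pow_ne_zero _ hw1
      apply mul_left_cancel₀ this
      have inner : (w + 1) ^ 2 + a + a * w + (a + w) * (w + 1) ^ 2
          = (w + 1) * ((w + 1) ^ 2 + a * w) := by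
        linear_combination (w + 1) * a * ht
      rw [inner] at P
      linear_combination P
    clear * - P' ht
    grind
  rcases mul_eq_zero.mp Q with h | h
  · have hwc := uniq_aux m a ha htr w c hwq hc h hca
    have es1 : x + y + z = w := by
      rw [hs]; field_simp; grind
    have es2 : x * y + y * z + z * x = w ^ 2 := by rw [← hws, es1]; ring
    have es3 : x * y * z = w ^ 3 := by grind
    have : (x - w) ^ 3 = 0 := by grind
    have := pow_eq_zero_iff (n := 3) (by norm_num) |>.mp this
    rw [← hwc]; exact sub_eq_zero.mp this
  · exfalso
    refine key_aux m a htr ((w + 1) / a) ?_ ?_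
    · rw [div_pow, add_pow_char_pow, hwq, one_pow, haq]
    · field_simp
      grind

lemma tr_aux (m : ℕ) (a : F) (haq : a ^ 2 ^ m = a) :
    ∑ i ∈ Finset.range m, (a⁻¹ ^ 2) ^ 2 ^ i = ∑ i ∈ Finset.range m, a⁻¹ ^ 2 ^ i ∧
    (∑ i ∈ Finset.range m, a⁻¹ ^ 2 ^ i = 0 ∨ ∑ i ∈ Finset.range m, a⁻¹ ^ 2 ^ i = 1) := by
  have h1 : ∑ i ∈ Finset.range m, (a⁻¹ ^ 2) ^ 2 ^ i = ∑ i ∈ Finset.range m, a⁻¹ ^ 2 ^ i := by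
    have A := Finset.sum_range_succ (fun i => a⁻¹ ^ 2 ^ i) m
    rw [Finset.sum_range_succ'] at A
    simp only [inv_pow, haq, pow_zero, pow_one] at A
    have := add_right_cancel A
    simp only [inv_pow, ← this, ← pow_mul, ← pow_succ']
  refine ⟨h1, ?_⟩
  have h2 : (∑ i ∈ Finset.range m, a⁻¹ ^ 2 ^ i) ^ 2 = ∑ i ∈ Finset.range m, a⁻¹ ^ 2 ^ i := by
    rw [sum_pow_char 2]
    rw [← h1]
    refine Finset.sum_congr rfl fun i _ => ?_
    rw [← pow_mul, ← pow_mul, mul_comm]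
  generalize ∑ i ∈ Finset.range m, a⁻¹ ^ 2 ^ i = s at *
  have : s * (s - 1) = 0 := by rw [mul_sub, ← sq, h2]; ring
  rcases mul_eq_zero.mp this with h | h
  · exact Or.inl h
  · exact Or.inr (sub_eq_zero.mp h)

lemma root_aux (m : ℕ) (hm : 0 < m) (a : F) (ha : a ≠ 0) (haq : a ^ 2 ^ m = a)
    (htr : ∑ i ∈ Finset.range m, a⁻¹ ^ 2 ^ i ≠ (m : F))
    (e : F) (he : e ^ 2 + a * e = 1)
    (n : ℕ) (hn : n = if m % 2 = 1 then (2 * 2 ^ m - 1) / 3 else (2 ^ m + 2) / 3) :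
    (e ^ n + (e ^ n)⁻¹) ^ 2 ^ m = e ^ n + (e ^ n)⁻¹ ∧
    (e ^ n + (e ^ n)⁻¹) ^ 3 + (e ^ n + (e ^ n)⁻¹) + a = 0 := by
  have ht : (2 : F) = 0 := two_zero_aux
  have he0 : e ≠ 0 := by rintro rfl; simp at he
  have hT := tele_aux (e / a) (a⁻¹ ^ 2) (by field_simp; grind) m
  obtain ⟨h1, h01⟩ := tr_aux m a haq
  rw [h1, div_pow, haq] at hT
  have hpos : 0 < 2 ^ m := by positivity
  have hmain : (e ^ n) ^ 3 = e ∧ (e ^ 2 ^ m = e ∨ e ^ 2 ^ m = e⁻¹) := by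
    obtain ⟨k, hk | hk⟩ := Nat.even_or_odd' m
    · have hm0 : (m : F) = 0 := by rw [hk]; push_cast; rw [ht]; ring
      have hn' : n * 3 = 2 ^ m + 2 := by
        rw [hn, if_neg (by omega)]
        apply Nat.div_mul_cancel
        rw [hk, pow_mul]
        have : (2 ^ 2) ^ k % 3 = 1 := by rw [Nat.pow_mod]; simp
        omega
      rw [hm0] at htr
      rw [h01.resolve_left htr] at hT
      have hq : e ^ 2 ^ m = e⁻¹ := by
        field_simp at hT ⊢
        grind
      refine ⟨?_, Or.inr hq⟩
      rw [← pow_mul, hn', pow_add, hq]; field_simp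
    · have hm1 : (m : F) = 1 := by rw [hk]; push_cast; rw [ht]; ring
      have hn' : n * 3 = 2 * 2 ^ m - 1 := by
        rw [hn, if_pos (by omega)]
        apply Nat.div_mul_cancel
        rw [hk, pow_succ, pow_mul]
        have : (2 ^ 2) ^ k % 3 = 1 := by rw [Nat.pow_mod]; simp
        omega
      rw [hm1] at htr
      rw [h01.resolve_right htr] at hT
      have hq : e ^ 2 ^ m = e := by
        field_simp at hT
        grind
      refine ⟨?_, Or.inl hq⟩
      rw [← pow_mul, hn']
      apply mul_right_cancel₀ he0
      rw [← pow_succ, Nat.sub_add_cancel (by omega), mul_comm, pow_mul, hq]; ring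
  obtain ⟨h3, hq⟩ := hmain
  have hcomm : (e ^ n) ^ 2 ^ m = (e ^ 2 ^ m) ^ n := by rw [← pow_mul, ← pow_mul, mul_comm]
  constructor
  · rw [add_pow_char_pow, inv_pow, hcomm]
    rcases hq with hq | hq <;> rw [hq]
    rw [inv_pow, inv_inv, add_comm]
  · have ht0 : e ^ n ≠ 0 := pow_ne_zero _ he0
    generalize e ^ n = t at *
    field_simp
    grind

end helpers

lemma main_aux {F : Type*} [Field F] [CharP F 2]
    (m : ℕ) (hm : 0 < m) (q : ℕ) (hq : q = 2 ^ m)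
    (a : F) (haq : a ^ q = a) (ha : a ≠ 0)
    (htr : ∑ i ∈ Finset.range m, a⁻¹ ^ 2 ^ i ≠ (m : F))
    (c : F) (hc : c ^ q = c) (hca : c ^ 3 + c + a = 0) (ℓ : ℕ) (x : F) :
    (x ^ q ^ 3 = x ∧ x ^ (2 * q ^ ℓ + 1) + x + a = 0) ↔ x = c := by
  have ht : (2 : F) = 0 := two_zero_aux
  have hform : ∀ t : F, t ^ (2 * q ^ ℓ + 1) = t * (t ^ q ^ ℓ) ^ 2 := by
    intro t; rw [pow_succ, mul_comm 2, pow_mul]; ring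
  have hadd : ∀ s t : F, (s + t) ^ q = s ^ q + t ^ q := by
    intro s t; rw [hq]; exact add_pow_char_pow ..
  constructor
  · rintro ⟨hx3, hx⟩
    have hper : ∀ k r : ℕ, x ^ q ^ (3 * k + r) = x ^ q ^ r := by
      intro k r
      induction k with
      | zero => simp
      | succ k ih =>
        rw [show 3 * (k + 1) + r = 3 + (3 * k + r) by ring, pow_add, pow_mul, hx3, ih]
    obtain ⟨y, hy⟩ : ∃ y, y = x ^ q := ⟨_, rfl⟩
    obtain ⟨z, hz⟩ : ∃ z, z = y ^ q := ⟨_, rfl⟩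
    have hzx : z ^ q = x := by
      rw [hz, hy, ← pow_mul, ← pow_mul]; rw [← pow_three] ; exact hx3
    have hx2 : x ^ q ^ 2 = z := by rw [hz, hy, ← pow_mul, ← sq]
    rw [hform] at hx
    have happ : ∀ s t : F, s * t ^ 2 + s + a = 0 → s ^ q * (t ^ q) ^ 2 + s ^ q + a = 0 := by
      intro s t h
      have := congrArg (· ^ q) h
      simp only [hadd, mul_pow, haq] at this
      rw [zero_pow (by rw [hq]; positivity)] at this
      rw [← this]; ring
    have hs1 : (x + y + z) ^ q = x + y + z := by
      rw [hadd, hadd, ← hy, ← hz, hzx]; ring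
    have hs2 : (x * y + y * z + z * x) ^ q = x * y + y * z + z * x := by
      rw [hadd, hadd, mul_pow, mul_pow, mul_pow, ← hy, ← hz, hzx]; ring
    have hr : ℓ % 3 = 0 ∨ ℓ % 3 = 1 ∨ ℓ % 3 = 2 := by omega
    have hl := hper (ℓ / 3) (ℓ % 3)
    rw [Nat.div_add_mod] at hl
    rw [hl] at hx
    rcases hr with h | h | h <;> rw [h] at hx
    · rw [pow_zero, pow_one] at hx
      have hx' := happ _ _ hx
      rw [← hy] at hx'
      by_contra hne
      have hyc : y ≠ c := by
        intro h; apply hne; rw [← hzx, hz, h, hc, hc]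
      have A : x ^ 2 + c * x + c ^ 2 + 1 = 0 := by
        have : (x - c) * (x ^ 2 + c * x + c ^ 2 + 1) = 0 := by grind
        exact (mul_eq_zero.mp this).resolve_left (sub_ne_zero.mpr hne)
      have B : y ^ 2 + c * y + c ^ 2 + 1 = 0 := by
        have : (y - c) * (y ^ 2 + c * y + c ^ 2 + 1) = 0 := by grind
        exact (mul_eq_zero.mp this).resolve_left (sub_ne_zero.mpr hyc)
      have C : (y - x) * (y + x + c) = 0 := by grind
      have hyx : y = x := by
        rcases mul_eq_zero.mp C with h | h
        · exact sub_eq_zero.mp h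
        · have h' : y = x + c := by grind
          have hzz : z = x := by
            rw [hz, h', hadd, ← hy, hc, h']; grind
          rw [hy, ← hzz, hzx, hzz]
      rw [hyx] at hy
      apply hne
      subst hq
      exact uniq_aux m a ha htr x c hy.symm hc (by rw [← hx]; ring) hca
    · rw [pow_one, ← hy] at hx
      have h2 := happ _ _ hx
      have h3 := happ _ _ h2
      rw [← hy, ← hz] at h2
      rw [← hy, ← hz, hzx] at h3
      subst hq
      exact sys_aux m a ha haq htr c hc hca x y z hx h2 h3 hs1 hs2
    · rw [hx2] at hx
      have h2 := happ _ _ hx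
      have h3 := happ _ _ h2
      rw [← hy, hzx] at h2
      rw [← hy, ← hz, hzx, ← hy] at h3
      subst hq
      refine sys_aux m a ha haq htr c hc hca x z y hx h3 h2 ?_ ?_
      · rw [add_right_comm]; exact hs1
      · rw [show x * z + z * y + y * x = x * y + y * z + z * x by ring]; exact hs2
  · rintro rfl
    have hit : ∀ k, x ^ q ^ k = x := by
      intro k
      induction k with
      | zero => simp
      | succ k ih => rw [pow_succ, pow_mul, ih, hc]
    refine ⟨hit 3, ?_⟩
    rw [hform, hit, ← hca]; ring

/-- Proposition 2.8: for `q = 2^m` and `a ∈ F_q \ F_2` with `Tr(1/a) ≠ Tr(1)`, the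
polynomial `X^(2q^ℓ+1) + X + a` has a unique root in `F_{q³}` for every `ℓ ≥ 0`,
namely `e^n + e^(−n)` where `e ∈ F_{q²}` satisfies `e² + ae = 1` and `n = (2q−1)/3`
or `(q+2)/3` according as `m` is odd or even. -/
theorem unique_root_of_trace_ne
    (m : ℕ) (hm : 0 < m) (q : ℕ) (hq : q = 2 ^ m)
    (a : K) (haq : a ^ q = a) (ha2 : a ^ 2 ≠ a)
    (htr : ∑ i ∈ Finset.range m, a⁻¹ ^ 2 ^ i ≠ (m : K))
    (e : K) (heF : e ^ q ^ 2 = e) (he : e ^ 2 + a * e = 1)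
    (n : ℕ) (hn : n = if m % 2 = 1 then (2 * q - 1) / 3 else (q + 2) / 3) :
    ∀ ℓ : ℕ, {x : K | x ^ q ^ 3 = x ∧ x ^ (2 * q ^ ℓ + 1) + x + a = 0}
      = {e ^ n + (e ^ n)⁻¹} := by
  intro ℓ
  haveI : CharP K 2 := charP_of_injective_algebraMap (algebraMap (ZMod 2) K).injective 2
  have ha : a ≠ 0 := by rintro rfl; apply ha2; simp
  obtain ⟨h1, h2⟩ := root_aux m hm a ha (hq ▸ haq) htr e he n (hq ▸ hn)
  rw [← hq] at h1
  ext x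
  exact main_aux m hm q hq a haq ha htr _ h1 h2 ℓ x
end

section
/- Let Γ_ℓ be the set of roots in F_{q³} of X^(2q^ℓ+1) + X + 1, and N_ℓ its cardinality. Then N_ℓ = 3 if 3 divides m·(ℓ−m), and N_ℓ = 0 otherwise. Moreover, if 3 divides m, then Γ_ℓ is the set of roots of X³ + X + 1, and if ℓ ≡ m ≡ ±1 (mod 3), then Γ_ℓ is the set of roots of X³ + X² + 1. -/
open Polynomial

local notation "K" => AlgebraicClosure (ZMod 2)

theorem aux_two : (2 : K) = 0 := by
  have := CharP.cast_eq_zero K 2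
  exact_mod_cast this

theorem aux_pow8 (x : K) (h : x ^ 8 = x) (k : ℕ) : x ^ 8 ^ k = x := by
  induction k with
  | zero => simp
  | succ k ih => rw [pow_succ, pow_mul, ih, h]

theorem aux_e (x : K) (n : ℕ) : x ^ (2 * 2 ^ n + 1) = x * (x ^ 2 ^ n) ^ 2 := by
  rw [pow_succ, mul_comm 2 (2 ^ n), pow_mul, mul_comm]

theorem aux_frob_s14 (x : K) (n : ℕ) (h : x ^ (2 * 2 ^ n + 1) + x + 1 = 0) :
    (x ^ 2 ^ n) * ((x ^ 2 ^ n) ^ 2 ^ n) ^ 2 + x ^ 2 ^ n + 1 = 0 := by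
  have h2 := congrArg (iterateFrobenius K 2 n) h
  simp only [map_add, map_one, map_zero, map_pow] at h2
  simp only [iterateFrobenius_def] at h2
  rw [← h2, aux_e]

theorem aux_key (x : K) (n : ℕ) (h : x ^ (2 * 2 ^ n + 1) + x + 1 = 0)
    (h3 : ((x ^ 2 ^ n) ^ 2 ^ n) ^ 2 ^ n = x) : x ^ 8 = x := by
  have two := aux_two
  have e2 := aux_frob_s14 x n h
  have e3 := aux_frob_s14 (x ^ 2 ^ n) n (by
    rw [← e2, aux_e])
  rw [h3] at e3
  have e1 : x * (x ^ 2 ^ n) ^ 2 + x + 1 = 0 := by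
    rw [← h, aux_e]
  generalize (x ^ 2 ^ n) ^ 2 ^ n = z at *
  generalize x ^ 2 ^ n = y at *
  have s2 : y ^ 2 * z ^ 4 + y ^ 2 + 1 = 0 := by
    linear_combination (y * z ^ 2 + y + 1) * e2 - (y ^ 2 * z ^ 2 + y * z ^ 2 + y) * two
  have s3 : z ^ 2 * x ^ 4 + z ^ 2 + 1 = 0 := by
    linear_combination (z * x ^ 2 + z + 1) * e3 - (z ^ 2 * x ^ 2 + z * x ^ 2 + z) * two
  have s4 : z ^ 4 * x ^ 8 + z ^ 4 + 1 = 0 := by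
    linear_combination (z ^ 2 * x ^ 4 + z ^ 2 + 1) * s3
      - (z ^ 4 * x ^ 4 + z ^ 2 * x ^ 4 + z ^ 2) * two
  have a : z ^ 4 * (x + 1) = 1 := by
    linear_combination (z ^ 4 + 1) * e1 - x * s2 + (-1) * two
  linear_combination (x + 1) * s4 - (x ^ 8 + 1) * a - (x + 1) * two

theorem aux_q3 (x : K) (m l : ℕ) (h : x ^ (2 ^ m) ^ 3 = x) :
    ((x ^ 2 ^ (m * l)) ^ 2 ^ (m * l)) ^ 2 ^ (m * l) = x := by
  have h2 : ∀ l : ℕ, x ^ ((2 ^ m) ^ 3) ^ l = x := by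
    intro l
    induction l with
    | zero => simp
    | succ k ih => rw [pow_succ, pow_mul, ih, h]
  rw [← pow_mul, ← pow_mul]
  convert h2 l using 2
  ring

theorem aux_red (x : K) (h : x ^ 8 = x) (n : ℕ) :
    x ^ (2 * 2 ^ n + 1) = x ^ (2 * 2 ^ (n % 3) + 1) := by
  have e : x ^ 2 ^ n = x ^ 2 ^ (n % 3) := by
    conv_lhs => rw [← Nat.div_add_mod n 3, pow_add, pow_mul, pow_mul]
    norm_num
    rw [aux_pow8 x h]
  rw [pow_succ, pow_succ, mul_comm 2, pow_mul, e, mul_comm 2, pow_mul]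

theorem aux_set (m l : ℕ) :
    {x : K | x ^ (2 ^ m) ^ 3 = x ∧ x ^ (2 * (2 ^ m) ^ l + 1) + x + 1 = 0} =
    {x : K | x ^ 8 = x ∧ x ^ (2 * 2 ^ (m * l % 3) + 1) + x + 1 = 0} := by
  ext x
  simp only [Set.mem_ofPred_eq, ← pow_mul 2 m l]
  constructor
  · rintro ⟨h1, h2⟩
    have h8 := aux_key x (m * l) h2 (aux_q3 x m l h1)
    exact ⟨h8, by rw [← aux_red x h8]; exact h2⟩
  · rintro ⟨h8, h2⟩
    refine ⟨?_, by rw [aux_red x h8]; exact h2⟩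
    have := aux_pow8 x h8 m
    convert this using 2
    rw [← pow_mul, mul_comm, pow_mul]
    norm_num

theorem aux_set0 :
    {x : K | x ^ 8 = x ∧ x ^ (2 * 2 ^ 0 + 1) + x + 1 = 0} = {x : K | x ^ 3 + x + 1 = 0} := by
  ext x
  have two := aux_two
  simp only [Set.mem_ofPred_eq]
  norm_num
  intro h
  grind

theorem aux_set1 :
    {x : K | x ^ 8 = x ∧ x ^ (2 * 2 ^ 1 + 1) + x + 1 = 0} =
      {x : K | x ^ 3 + x ^ 2 + 1 = 0} := by
  ext x
  have two := aux_two
  simp only [Set.mem_ofPred_eq]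
  norm_num
  constructor
  · rintro ⟨h, h5⟩
    grind
  · intro h
    constructor <;> grind

theorem aux_set2 :
    {x : K | x ^ 8 = x ∧ x ^ (2 * 2 ^ 2 + 1) + x + 1 = 0} = ∅ := by
  ext x
  have two := aux_two
  simp only [Set.mem_ofPred_eq, Set.mem_empty_iff_false, iff_false]
  norm_num
  intro h h9
  grind

theorem aux_card (p : K[X]) (hd : p.natDegree = 3) (hs : p.Separable) :
    {x : K | p.eval x = 0}.ncard = 3 := by
  have hp : p ≠ 0 := by rintro rfl; simp at hd
  have h := Polynomial.card_rootSet_eq_natDegree hs (IsAlgClosed.splits (p.map (algebraMap K K)))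
  rw [hd] at h
  rw [← h, ← Nat.card_eq_fintype_card, Nat.card_coe_set_eq]
  congr 1
  ext x
  simp [Polynomial.mem_rootSet, hp]

theorem aux_twoP : (2 : K[X]) = 0 := by
  have := CharP.cast_eq_zero K[X] 2
  exact_mod_cast this

theorem aux_card0 : {x : K | x ^ 3 + x + 1 = 0}.ncard = 3 := by
  have h := aux_card (X ^ 3 + X + 1) (by compute_degree!) (by
    refine ⟨1, X, ?_⟩
    simp only [derivative_add, derivative_X_pow, derivative_X, derivative_one]
    simp only [Nat.cast_ofNat, map_ofNat]
    norm_num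
    linear_combination (2 * X ^ 3 + X) * aux_twoP)
  simpa using h

theorem aux_card1 : {x : K | x ^ 3 + x ^ 2 + 1 = 0}.ncard = 3 := by
  have h := aux_card (X ^ 3 + X ^ 2 + 1) (by compute_degree!) (by
    refine ⟨1, X + 1, ?_⟩
    simp only [derivative_add, derivative_X_pow, derivative_one]
    simp only [Nat.cast_ofNat, map_ofNat]
    norm_num
    linear_combination (2 * X ^ 3 + 3 * X ^ 2 + X) * aux_twoP)
  simpa using h

/-- Corollary 4.4 (the case `a = 1`): `N_ℓ = 3` if `3 ∣ m(ℓ−m)` and `N_ℓ = 0` otherwise;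
if `3 ∣ m` then `Γ_ℓ` is the set of roots of `X³ + X + 1`, and if `ℓ ≡ m ≡ ±1 (mod 3)`
then `Γ_ℓ` is the set of roots of `X³ + X² + 1`. -/
theorem roots_a_eq_one
    (m : ℕ) (hm : 0 < m) (q : ℕ) (hq : q = 2 ^ m)
    (ℓ : ℕ) (hℓ : 0 < ℓ) (hℓ3 : Nat.Coprime ℓ 3)
    (Γ : Set K)
    (hΓ : Γ = {x : K | x ^ q ^ 3 = x ∧ x ^ (2 * q ^ ℓ + 1) + x + 1 = 0}) :
    ((3 : ℤ) ∣ (m : ℤ) * ((ℓ : ℤ) - (m : ℤ)) → Γ.ncard = 3) ∧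
    (¬ (3 : ℤ) ∣ (m : ℤ) * ((ℓ : ℤ) - (m : ℤ)) → Γ.ncard = 0) ∧
    (3 ∣ m → Γ = {x : K | x ^ 3 + x + 1 = 0}) ∧
    (ℓ % 3 = m % 3 → m % 3 ≠ 0 → Γ = {x : K | x ^ 3 + x ^ 2 + 1 = 0}) := by
  subst hq
  rw [aux_set] at hΓ
  have hl : ℓ % 3 = 1 ∨ ℓ % 3 = 2 := by
    have : ¬ 3 ∣ ℓ := fun h => by
      have := Nat.dvd_gcd h (dvd_refl 3)
      rw [hℓ3] at this
      omega
    omega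
  have hd : (3 : ℤ) ∣ (m : ℤ) * ((ℓ : ℤ) - (m : ℤ)) ↔ m % 3 = 0 ∨ ℓ % 3 = m % 3 := by
    rw [Int.prime_three.dvd_mul]
    omega
  rw [hd, Nat.dvd_iff_mod_eq_zero]
  have hmod := Nat.mul_mod m ℓ 3
  have hm3 : m % 3 = 0 ∨ m % 3 = 1 ∨ m % 3 = 2 := by omega
  rcases hm3 with h | h | h <;> rcases hl with h' | h' <;> rw [h, h'] at hmod <;>
    norm_num at hmod <;> rw [hmod] at hΓ <;>
    first
    | rw [aux_set0] at hΓ; rw [h, h', hΓ]; simp [aux_card0]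
    | rw [aux_set1] at hΓ; rw [h, h', hΓ]; simp [aux_card1]
    | rw [aux_set2] at hΓ; rw [h, h', hΓ]; simp
end

section
/- For every β in the algebraic closure of F_q the following hold: (i) β ∈ F_{q³} and β^(2q²+1) + β + a = 0 if and only if f(β) = 0, β² ≠ 1, and a/(β²+1) = β^q; (ii) β ∈ F_{q³} and β^(2q+1) + β + a = 0 if and only if f(β) = 0, β² ≠ 1, and (a/(β²+1))^q = β; (iii) β³ + β + a = 0 if and only if f(β) = 0, β² ≠ 1, and a/(β²+1) = β. -/
open Polynomial

local notation "K" => AlgebraicClosure (ZMod 2)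

theorem aux_cycle {F : Type*} [Field F] [CharP F 2] (a x y z w : F) (ha : a ≠ 0)
    (h1 : y * (x ^ 2 + 1) = a) (h2 : z * (y ^ 2 + 1) = a) (h3 : w * (z ^ 2 + 1) = a) :
    (a ^ 2 + 1) * x ^ 9 + a * x ^ 8 + (a ^ 4 + a ^ 2 + 1) * x + (a ^ 5 + a) = 0 ↔ w = x := by
  have t : (2 : F) = 0 := CharTwo.two_eq_zero
  have s : ∀ u v : F, (u + v) ^ 2 = u ^ 2 + v ^ 2 := fun u v => CharTwo.add_sq u v
  have e1 : y ^ 2 * (x ^ 4 + 1) = a ^ 2 := by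
    rw [← h1, mul_pow, s]; ring
  have e2 : z * (a ^ 2 + x ^ 4 + 1) = a * (x ^ 4 + 1) := by
    linear_combination (x ^ 4 + 1) * h2 - z * e1
  have e3 : z ^ 2 * (a ^ 4 + x ^ 8 + 1) = a ^ 2 * (x ^ 8 + 1) := by
    have := congrArg (· ^ 2) e2
    simp only [mul_pow, s] at this
    linear_combination this
  have e4 : w * ((a ^ 2 + 1) * x ^ 8 + (a ^ 4 + a ^ 2 + 1)) = a * (a ^ 4 + x ^ 8 + 1) := by
    linear_combination (a ^ 4 + x ^ 8 + 1) * h3 - w * e3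
  constructor
  · intro h
    have e5 : (w - x) * ((a ^ 2 + 1) * x ^ 8 + (a ^ 4 + a ^ 2 + 1)) = 0 := by
      linear_combination e4 - h + a * (a ^ 4 + x ^ 8 + 1) * t
    rcases mul_eq_zero.1 e5 with h' | h'
    · exact sub_eq_zero.1 h'
    · exfalso
      rw [h', mul_zero] at e4
      have e6 : a ^ 4 + x ^ 8 + 1 = 0 := by
        rcases mul_eq_zero.1 e4.symm with h | h
        · exact absurd h ha
        · exact h
      apply pow_ne_zero 6 ha
      linear_combination (a ^ 2 + 1) * e6 - h' + (-a ^ 4 + 0) * t + a ^ 4 * t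
  · rintro rfl
    linear_combination e4 + a * (a ^ 4 + w ^ 8 + 1) * t

/-- Lemma 4.2: a characterization of roots of `H_2`, `H_1`, `H_0` via the polynomial
`f(X) = (a²+1)X⁹ + aX⁸ + (a⁴+a²+1)X + (a⁵+a)` and the rational map `ρ(X) = a/(X²+1)`. -/
theorem twist_degree_three
    (m : ℕ) (hm : 0 < m) (q : ℕ) (hq : q = 2 ^ m)
    (a : K) (ha : a ≠ 0) (haq : a ^ q = a)
    (htr : ∑ i ∈ Finset.range m, a⁻¹ ^ 2 ^ i = (m : K)) :
    ∀ β : K,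
      ((β ^ q ^ 3 = β ∧ β ^ (2 * q ^ 2 + 1) + β + a = 0) ↔
        ((a ^ 2 + 1) * β ^ 9 + a * β ^ 8 + (a ^ 4 + a ^ 2 + 1) * β + (a ^ 5 + a) = 0 ∧
          β ^ 2 ≠ 1 ∧ a / (β ^ 2 + 1) = β ^ q)) ∧
      ((β ^ q ^ 3 = β ∧ β ^ (2 * q + 1) + β + a = 0) ↔
        ((a ^ 2 + 1) * β ^ 9 + a * β ^ 8 + (a ^ 4 + a ^ 2 + 1) * β + (a ^ 5 + a) = 0 ∧
          β ^ 2 ≠ 1 ∧ (a / (β ^ 2 + 1)) ^ q = β)) ∧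
      ((β ^ 3 + β + a = 0) ↔
        ((a ^ 2 + 1) * β ^ 9 + a * β ^ 8 + (a ^ 4 + a ^ 2 + 1) * β + (a ^ 5 + a) = 0 ∧
          β ^ 2 ≠ 1 ∧ a / (β ^ 2 + 1) = β)) := by
  intro β
  have t : (2 : K) = 0 := CharTwo.two_eq_zero
  have fr : ∀ u v : K, (u + v) ^ q = u ^ q + v ^ q := by
    intro u v; rw [hq]; exact add_pow_char_pow u v 2 m
  have frq : ∀ x y : K, y * (x ^ 2 + 1) = a → y ^ q * ((x ^ q) ^ 2 + 1) = a := by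
    intro x y h
    have := congrArg (· ^ q) h
    simp only [mul_pow, fr, one_pow, haq] at this
    rw [← this]; ring
  have inj : ∀ x y : K, x ^ q = y ^ q → x = y := by
    intro x y h
    rw [hq] at h
    exact iterateFrobenius_inj K 2 m h
  have ne : ∀ x y : K, y * (x ^ 2 + 1) = a → x ^ 2 + 1 ≠ 0 := by
    intro x y h h0
    rw [h0, mul_zero] at h
    exact ha h.symm
  have ne1 : ∀ x : K, x ^ 2 ≠ 1 ↔ x ^ 2 + 1 ≠ 0 := by
    intro x
    rw [not_iff_not]
    constructor
    · intro h; linear_combination h + t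
    · intro h; linear_combination h - t
  have key : ∀ x y : K, (x ^ 2 ≠ 1 ∧ a / (x ^ 2 + 1) = y) ↔ y * (x ^ 2 + 1) = a := by
    intro x y
    rw [ne1]
    constructor
    · rintro ⟨h, h'⟩
      rw [← h']; field_simp
    · intro h
      have := ne x y h
      exact ⟨this, by rw [← h]; field_simp⟩
  have p2 : β ^ q ^ 2 = (β ^ q) ^ q := by rw [← pow_mul, sq]
  have p3 : β ^ q ^ 3 = ((β ^ q) ^ q) ^ q := by rw [← pow_mul, ← pow_mul]; ring_nf
  have g : ∀ n : ℕ, β ^ (2 * n + 1) + β + a = 0 ↔ β * ((β ^ n) ^ 2 + 1) = a := by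
    intro n
    have : β ^ (2 * n + 1) = β * (β ^ n) ^ 2 := by ring
    rw [this]
    constructor
    · intro h; linear_combination h - a * t
    · intro h; linear_combination h + a * t
  refine ⟨?_, ?_, ?_⟩
  · rw [key, g, p2, p3]
    constructor
    · rintro ⟨h, h'⟩
      have h1 := frq _ _ h'
      rw [h] at h1
      have h2 := frq _ _ h1
      exact ⟨(aux_cycle a β _ _ _ ha h1 h2 h').2 rfl, h1⟩
    · rintro ⟨h, h1⟩
      have h2 := frq _ _ h1
      have h3 := frq _ _ h2
      have h4 := (aux_cycle a β _ _ _ ha h1 h2 h3).1 h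
      rw [h4] at h3
      exact ⟨h4, h3⟩
  · rw [g, p3]
    constructor
    · rintro ⟨h, h'⟩
      have h1 := frq _ _ h'
      have h2 := frq _ _ h1
      rw [h] at h2
      obtain ⟨k1, k2⟩ := (key _ _).2 h2
      exact ⟨(aux_cycle a β _ _ _ ha h2 h1 h').2 rfl, k1, by rw [k2, h]⟩
    · rintro ⟨h, h1, h2⟩
      obtain ⟨z, hz⟩ : ∃ z, a / (β ^ 2 + 1) = z := ⟨_, rfl⟩
      rw [hz] at h2
      have k1 := (key _ _).1 ⟨h1, hz⟩
      have step : ∀ u : K, (u ^ q) ^ 2 ≠ 1 → u ^ 2 ≠ 1 := by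
        intro u hu h0
        apply hu
        rw [← pow_mul, mul_comm, pow_mul, h0, one_pow]
      have z1 : z ^ 2 ≠ 1 := step z (by rw [h2]; exact h1)
      obtain ⟨y, hy⟩ : ∃ y, a / (z ^ 2 + 1) = y := ⟨_, rfl⟩
      have k2 := (key _ _).1 ⟨z1, hy⟩
      have yq : y ^ q = z := by
        have := frq _ _ k2
        rw [h2] at this
        exact mul_right_cancel₀ ((ne1 _).1 h1) (this.trans k1.symm)
      have y1 : y ^ 2 ≠ 1 := step y (by rw [yq]; exact z1)
      obtain ⟨w, hw⟩ : ∃ w, a / (y ^ 2 + 1) = w := ⟨_, rfl⟩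
      have k3 := (key _ _).1 ⟨y1, hw⟩
      have wq : w ^ q = y := by
        have := frq _ _ k3
        rw [yq] at this
        exact mul_right_cancel₀ ((ne1 _).1 z1) (this.trans k2.symm)
      have hwb := (aux_cycle a β _ _ _ ha k1 k2 k3).1 h
      subst hwb
      rw [wq, yq]
      exact ⟨h2, k3⟩
  · rw [key]
    have g1 := g 1
    norm_num at g1
    rw [g1]
    constructor
    · intro h
      exact ⟨(aux_cycle a β _ _ _ ha h h h).2 rfl, h⟩
    · exact fun h => h.2
end

section
/- The polynomial f(X) factors as f(X) = f_0(X)·f_1(X)·f_2(X), and f(X) has nine distinct roots in the algebraic closure of F_q. Moreover, every root β of f_0(X) satisfies a/(β²+1) = β; for each i ∈ {1,2}, the map β ↦ a/(β²+1) sends each root of f_i(X) to a root of f_i(X), fixes no root of f_i(X), and its threefold composition fixes every root of f_i(X). -/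
open Polynomial

lemma aux_bc {F : Type*} [Field F] [CharP F 2] (a b : F) (h : a * (b^2+b+1) = 1) (x : F)
    (hb0 : b ≠ 0)
    (hx : a * b^2 * x^3 + x^2 + a*(b+1)^2*x + a^2*b^4 = 0) :
    x^2+1 ≠ 0 ∧ a*b^2*(a/(x^2+1))^3 + (a/(x^2+1))^2 + a*(b+1)^2*(a/(x^2+1)) + a^2*b^4 = 0 := by
  have h2 : (2:F) = 0 := CharTwo.two_eq_zero
  have h1 : x^2+1 ≠ 0 := by
    intro h0
    have : (x+1)^2 = 0 := by linear_combination h0 + x * h2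
    have h3 : x = 1 := by
      have := pow_eq_zero_iff (two_ne_zero) |>.1 this
      linear_combination this - h2
    subst h3
    apply hb0
    grind
  refine ⟨h1, ?_⟩
  have key : a^2*(a^2*b^2 + (x^2+1) + (b+1)^2*(x^2+1)^2 + b^4*(x^2+1)^3) = 0 := by
    have : a^2*b^2 + (x^2+1) + (b+1)^2*(x^2+1)^2 + b^4*(x^2+1)^3 = (b^2+b+1)^2 * (a * b^2 * x^3 + x^2 + a*(b+1)^2*x + a^2*b^4)^2 := by
      clear hx hb0 h1
      grind
    rw [this, hx]; ring
  field_simp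
  linear_combination key

lemma aux_fac {F : Type*} [Field F] [CharP F 2] (a b : F) (h : a * (b^2+b+1) = 1) :
   (C (a ^ 2 + 1) * X ^ 9 + C a * X ^ 8 + C (a ^ 4 + a ^ 2 + 1) * X +
      C (a ^ 5 + a) : F[X]) = (X ^ 3 + X + C a) * (C (a * b ^ 2) * X ^ 3 + X ^ 2 + C (a * (b + 1) ^ 2) * X +
      C (a ^ 2 * b ^ 4)) * (C (a * (b + 1) ^ 2) * X ^ 3 + X ^ 2 + C (a * b ^ 2) * X +
      C (a ^ 2 * (b + 1) ^ 4)) := by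
  have h2 : (2:F[X]) = 0 := CharTwo.two_eq_zero
  have hc : C a * (C b^2 + C b + 1) = 1 := by
    simpa using congrArg C h
  simp only [map_add, map_mul, map_pow, map_one]
  generalize C a = A at *
  generalize C b = B at *
  generalize (X : F[X]) = x at *
  clear h
  grind

lemma aux_rho {F : Type*} [Field F] [CharP F 2] (a x : F) (y z : F) (h1 : x^2+1 ≠ 0)
   (hy : y = a/(x^2+1)) (hy1 : y^2+1 ≠ 0) (hz : z = a/(y^2+1)) (hz1 : z^2+1 ≠ 0)
   (hf : (a ^ 2 + 1) * x ^ 9 + a * x ^ 8 + (a ^ 4 + a ^ 2 + 1) * x + (a ^ 5 + a) = 0) :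
   a / (z^2+1) = x := by
  have h2 : (2:F) = 0 := CharTwo.two_eq_zero
  have e1 : y * (x^2+1) = a := by rw [hy]; field_simp
  have e2 : z * (y^2+1) = a := by rw [hz]; field_simp
  rw [div_eq_iff hz1]
  have e3 : (y^2+1) * (x^2+1)^2 = a^2 + x^4+1 := by
    linear_combination (y * (x^2+1) + a) * e1 + x^2 * h2
  have e4 : z * (a^2+x^4+1) = a * (x^4+1) := by
    linear_combination (x^2+1)^2 * e2 - z * e3 + a * x^2 * h2
  have e5 : a^2+x^4+1 ≠ 0 := by
    rw [← e3]; positivity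
  have e6 : (x * (z^2+1) - a) * (a^2+x^4+1)^2 = 0 := by
    have : (x * (z^2+1) - a) * (a^2+x^4+1)^2 = x * (z * (a^2+x^4+1))^2 + (x - a) * (a^2+x^4+1)^2 := by ring
    rw [this, e4]
    clear * - hf h2
    grind
  have := (mul_eq_zero.1 e6).resolve_right (pow_ne_zero _ e5)
  linear_combination - this

lemma aux_sep {F : Type*} [Field F] [CharP F 2] (a x : F) (ha : a ≠ 0)
   (hf : (a ^ 2 + 1) * x ^ 9 + a * x ^ 8 + (a ^ 4 + a ^ 2 + 1) * x + (a ^ 5 + a) = 0) 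
   (hd : (a ^ 2 + 1) * x ^ 8 + (a ^ 4 + a ^ 2 + 1) = 0) : False := by
  have h2 : (2:F) = 0 := CharTwo.two_eq_zero
  have e : a * (x^8 + a^4 + 1) = 0 := by linear_combination hf - x * hd
  have e1 := (mul_eq_zero.1 e).resolve_left ha
  have : a^6 = 0 := by
    linear_combination (a^2+1) * e1 - hd - 0 * h2
  exact ha (by simpa using this)

lemma aux_sep' {F : Type*} [Field F] [CharP F 2] (a x : F) (ha : a ≠ 0)
   (f : F[X]) (hf : f = C (a ^ 2 + 1) * X ^ 9 + C a * X ^ 8 + C (a ^ 4 + a ^ 2 + 1) * X +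
      C (a ^ 5 + a)) (h0 : f.eval x = 0) (h1 : (derivative f).eval x = 0) : False := by
  have h2 : (2:F) = 0 := CharTwo.two_eq_zero
  rw [hf] at h0 h1
  simp only [derivative_add, derivative_mul, derivative_C, derivative_X_pow, derivative_X,
    eval_add, eval_mul, eval_C, eval_pow, eval_X, eval_zero, eval_one, eval_natCast] at h0 h1
  norm_num at h1
  refine aux_sep a x ha (by linear_combination h0) ?_
  linear_combination h1 - (4 * (a^2+1) * x^8 + 4 * a * x^7) * h2

lemma aux_card_s16 {F : Type*} [Field F] [CharP F 2] [IsAlgClosed F] (a : F) (ha : a ≠ 0) (ha1 : a ≠ 1)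
   (f : F[X]) (hf : f = C (a ^ 2 + 1) * X ^ 9 + C a * X ^ 8 + C (a ^ 4 + a ^ 2 + 1) * X +
      C (a ^ 5 + a)) : {x : F | Polynomial.eval x f = 0}.ncard = 9 := by
  classical
  have h2 : (2:F) = 0 := CharTwo.two_eq_zero
  have hlead : a^2+1 ≠ 0 := by
    intro h0
    have : (a+1)^2 = 0 := by linear_combination h0 + a * h2
    have := pow_eq_zero_iff (two_ne_zero) |>.1 this
    exact ha1 (by linear_combination this - h2)
  have hdeg : f.natDegree = 9 := by
    rw [hf]; compute_degree!
  have hf0 : f ≠ 0 := by rintro rfl; simp at hdeg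
  have hsep : f.roots.Nodup := by
    rw [Multiset.nodup_iff_count_le_one]
    intro x
    rw [count_roots]
    by_contra hlt
    obtain ⟨r0, r1⟩ := (one_lt_rootMultiplicity_iff_isRoot hf0).1 (not_le.1 hlt)
    exact aux_sep' a x ha f hf r0 r1
  have hset : {x : F | Polynomial.eval x f = 0} = (f.roots.toFinset : Set F) := by
    ext x; simp [hf0]
  rw [hset, Set.ncard_coe_finset, Multiset.toFinset_card_of_nodup hsep, ← hdeg]
  exact IsAlgClosed.card_roots_eq_natDegree

lemma aux_main {F : Type*} [Field F] [CharP F 2] (a b : F) (h : a * (b^2+b+1) = 1) (ha : a ≠ 0)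
    (hb0 : b ≠ 0) (ρ : F → F) (hρ : ρ = fun x : F => a / (x ^ 2 + 1))
    (g : F[X]) (hg : g = C (a * b ^ 2) * X ^ 3 + X ^ 2 + C (a * (b + 1) ^ 2) * X +
      C (a ^ 2 * b ^ 4)) (x : F) (hx : g.eval x = 0) :
    g.eval (ρ x) = 0 ∧ ρ x ≠ x ∧ ρ (ρ (ρ x)) = x := by
  have h2 : (2:F) = 0 := CharTwo.two_eq_zero
  have hev : ∀ y, g.eval y = a * b^2 * y^3 + y^2 + a*(b+1)^2*y + a^2*b^4 := by
    intro y; rw [hg]; simp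
  have step : ∀ y, g.eval y = 0 → y^2+1 ≠ 0 ∧ g.eval (ρ y) = 0 := by
    intro y hy
    have := aux_bc a b h y hb0 (by rw [← hev]; exact hy)
    rw [hev, hρ]
    exact this
  have fac := aux_fac a b h
  rw [← hg] at fac
  obtain ⟨h1, hy⟩ := step x hx
  obtain ⟨hy1, hz⟩ := step _ hy
  obtain ⟨hz1, -⟩ := step _ hz
  refine ⟨hy, ?_, ?_⟩
  · intro he
    have e0 : x^3 + x + a = 0 := by
      rw [hρ] at he
      have := (div_eq_iff h1).1 he
      linear_combination - this + a * h2
    refine aux_sep' a x ha _ rfl ?_ ?_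
    · rw [fac]; simp [hx]
    · rw [fac, derivative_mul, derivative_mul]
      simp [hx, e0]
  · have hf := congrArg (eval x) fac
    rw [eval_mul, eval_mul, hx, mul_zero, zero_mul] at hf
    have := aux_rho a x (ρ x) (ρ (ρ x)) h1 (by rw [hρ]) hy1 (by rw [hρ]) hz1 (by simpa using hf)
    exact (congrFun hρ _).trans this

local notation "K" => AlgebraicClosure (ZMod 2)

/-- Lemma 4.5: `f = f₀·f₁·f₂`, `f` has nine distinct roots in the algebraic closure,
`ρ` fixes each root of `f₀`, and `ρ` acts as a 3-cycle on the roots of `f₁` and `f₂`. -/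
theorem factorization_of_f
    (m : ℕ) (hm : 0 < m) (q : ℕ) (hq : q = 2 ^ m)
    (a : K) (haq : a ^ q = a) (ha2 : a ^ 2 ≠ a)
    (htr : ∑ i ∈ Finset.range m, a⁻¹ ^ 2 ^ i = (m : K))
    (b : K) (hbq : b ^ q = b) (hb : b ^ 2 + b = a⁻¹ + 1)
    (ρ : K → K) (hρ : ρ = fun x : K => a / (x ^ 2 + 1))
    (f f0 f1 f2 : Polynomial K)
    (hf : f = C (a ^ 2 + 1) * X ^ 9 + C a * X ^ 8 + C (a ^ 4 + a ^ 2 + 1) * X +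
      C (a ^ 5 + a))
    (hf0 : f0 = X ^ 3 + X + C a)
    (hf1 : f1 = C (a * b ^ 2) * X ^ 3 + X ^ 2 + C (a * (b + 1) ^ 2) * X +
      C (a ^ 2 * b ^ 4))
    (hf2 : f2 = C (a * (b + 1) ^ 2) * X ^ 3 + X ^ 2 + C (a * b ^ 2) * X +
      C (a ^ 2 * (b + 1) ^ 4)) :
    f = f0 * f1 * f2 ∧
    {x : K | Polynomial.eval x f = 0}.ncard = 9 ∧
    (∀ β : K, Polynomial.eval β f0 = 0 → ρ β = β) ∧
    (∀ g : Polynomial K, (g = f1 ∨ g = f2) → ∀ β : K, Polynomial.eval β g = 0 →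
      Polynomial.eval (ρ β) g = 0 ∧ ρ β ≠ β ∧ ρ (ρ (ρ β)) = β) := by
  have h2 : (2 : K) = 0 := CharTwo.two_eq_zero
  have ha : a ≠ 0 := by rintro rfl; simp at ha2
  have ha1 : a ≠ 1 := by rintro rfl; simp at ha2
  have hinv : a * a⁻¹ = 1 := mul_inv_cancel₀ ha
  have h : a * (b^2+b+1) = 1 := by
    linear_combination a * hb + hinv + a * h2
  have h' : a * ((b+1)^2+(b+1)+1) = 1 := by
    linear_combination h + a * (b + 1) * h2
  have hbb : b + 1 + 1 = b := by linear_combination h2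
  have hb0 : b ≠ 0 := by
    rintro rfl
    exact ha1 (by linear_combination h)
  have hb1 : b + 1 ≠ 0 := by
    intro h0
    exact ha1 (by linear_combination h - a * b * h0)
  refine ⟨?_, aux_card_s16 a ha ha1 f hf, ?_, ?_⟩
  · rw [hf, hf0, hf1, hf2]; exact aux_fac a b h
  · intro x hx
    rw [hf0] at hx
    simp only [eval_add, eval_pow, eval_X, eval_C] at hx
    have h1 : x ^ 2 + 1 ≠ 0 := by
      intro h0
      exact ha (by linear_combination hx - x * h0)
    rw [hρ]
    show a / (x ^ 2 + 1) = x
    rw [div_eq_iff h1]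
    linear_combination -hx + a * h2
  · rintro g (rfl | rfl) x hx
    · exact aux_main a b h ha hb0 ρ hρ _ hf1 x hx
    · exact aux_main a (b + 1) h' ha hb1 ρ hρ _ (by rw [hbb]; exact hf2) x hx
end

section
/- For each k ∈ {1,2} and each irreducible degree-3 polynomial g(X) ∈ F_q[X] dividing X^(2q^k+1) + X + a, there is a unique i ∈ {1,2} such that g(X) is a nonzero constant multiple of f_i(X). Conversely, for each i ∈ {1,2}, if f_i(X) is irreducible over F_q, then f_i(X) divides X^(2q^k+1) + X + a for a unique k ∈ {1,2}. -/
open Polynomial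

theorem fwd {L : Type*} [Field L] (h2 : (2:L) = 0) (a b x y z : L) (hxy : x ≠ y)
   (ha : a * (b^2+b+1) = 1)
   (h1 : x*y^2+x+a=0) (h3 : y*z^2+y+a=0) (h4 : z*x^2+z+a=0) :
   (a*b^2*(x+y+z) = 1 ∧ b^2*(x*y+y*z+z*x) = (b+1)^2 ∧ x*y*z = a*b^2) ∨
   (a*(b+1)^2*(x+y+z) = 1 ∧ (b+1)^2*(x*y+y*z+z*x) = b^2 ∧ x*y*z = a*(b+1)^2) := by
  obtain ⟨e1, he1⟩ : ∃ e, e = x+y+z := ⟨_, rfl⟩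
  obtain ⟨e2, he2⟩ : ∃ e, e = x*y+y*z+z*x := ⟨_, rfl⟩
  obtain ⟨e3, he3⟩ : ∃ e, e = x*y*z := ⟨_, rfl⟩
  have A : e1*e3+e2 = a*e1 := by subst he1 he2 he3; grind
  have C : e3*e2+e1+a = a*e2 := by subst he1 he2 he3; grind
  have D : e3*(e1^2+1) = a*e2 := by subst he1 he2 he3; grind
  have hx : x^3+e1*x^2+e2*x+e3=0 := by subst he1 he2 he3; grind
  have hy : y^3+e1*y^2+e2*y+e3=0 := by subst he1 he2 he3; grind
  rw [← he1, ← he2, ← he3]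
  clear he1 he2 he3 h1 h3 h4
  obtain ⟨s, hs⟩ : ∃ s, s = a + e3 + 1 := ⟨_, rfl⟩
  have E2 : e2 = e1 * (s+1) := by grind
  have EA : a = e1 * s^2 := by grind
  have E3 : e3 = e1*s^2+s+1 := by grind
  have ha0 : a ≠ 0 := by rintro rfl; simp at ha
  clear A hs
  subst E2 E3 EA
  have F : (s+e1+1)*(e1^2*s^2+e1*s+e1+1)=0 := by grind
  rcases mul_eq_zero.1 F with F | F
  · exfalso
    have hs : s = e1+1 := by grind
    subst hs
    have h : (x+e1)^3 = 0 := by grind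
    have h' : (y+e1)^3 = 0 := by grind
    have h := pow_eq_zero_iff (by norm_num) |>.1 h
    have h' := pow_eq_zero_iff (by norm_num) |>.1 h'
    exact hxy (by linear_combination h - h')
  · clear hx hy hxy C D
    have G : (e1*s^2)*((b*e1*s+1)*(b*e1*s+e1*s+1)) = 0 := by grind
    rcases mul_eq_zero.1 ((mul_eq_zero.1 G).resolve_left ha0) with G | G
    · left; refine ⟨?_, ?_, ?_⟩ <;> grind
    · right; refine ⟨?_, ?_, ?_⟩ <;> grind

theorem bwd {L : Type*} [Field L] (h2 : (2:L) = 0) (a b x y z : L)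
   (ha : a * (b^2+b+1) = 1) (hb : b ≠ 0) 
   (h1 : a*b^2*(x+y+z) = 1) (h3 : b^2*(x*y+y*z+z*x) = (b+1)^2) (h4 : x*y*z = a*b^2) :
   x*y^2+x+a=0 ∨ x*z^2+x+a=0 := by
  have key : ∀ x y z : L, a*b^2*(x+y+z) = 1 → b^2*(x*y+y*z+z*x) = (b+1)^2 → x*y*z = a*b^2 →
     x*y^2+y*z^2+z*x^2 = x+y+z+a → x*y^2+x+a=0 := by
    intro x y z h1 h3 h4 h5
    have U : (x*y^2+x+a) + (y*z^2+y+a) + (z*x^2+z+a) = 0 := by grind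
    have V : z*(x*y^2+x+a) + x*(y*z^2+y+a) + y*(z*x^2+z+a) = 0 := by grind
    have W : x*(x*y^2+x+a) + y*(y*z^2+y+a) + z*(z*x^2+z+a) = 0 := by grind
    have N : (x+y+z)^2 + (x*y+y*z+z*x) ≠ 0 := by
      intro h
      grind
    grind
  obtain ⟨e1, he1⟩ : ∃ e, e = x+y+z := ⟨_, rfl⟩
  obtain ⟨e2, he2⟩ : ∃ e, e = x*y+y*z+z*x := ⟨_, rfl⟩
  obtain ⟨e3, he3⟩ : ∃ e, e = x*y*z := ⟨_, rfl⟩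
  have hS : (x*y^2+y*z^2+z*x^2) + (x*z^2+z*y^2+y*x^2) = e1*e2+e3 := by subst he1 he2 he3; grind
  have hP : (x*y^2+y*z^2+z*x^2) * (x*z^2+z*y^2+y*x^2) = e1^3*e3+e2^3+e3^2 := by
    subst he1 he2 he3; grind
  have Q : e1^3*e3+e2^3+e3^2 + (e1+a)*(e1*e2+e3) + (e1+a)^2 = 0 := by
    rw [← he1] at h1
    rw [← he2] at h3
    rw [← he3] at h4
    clear hS hP he1 he2 he3 key
    obtain ⟨c, hc⟩ : ∃ c, c * b = 1 := ⟨b⁻¹, inv_mul_cancel₀ hb⟩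
    have E1 : e1 = 1+c+c^2 := by grind
    have E2 : e2 = 1+c^2 := by grind
    have A : a*(1+c+c^2) = c^2 := by grind
    have E3 : (1+c+c^2)*e3 = 1 := by grind
    have E0 : (1+c+c^2) ≠ 0 := by intro h; rw [h] at E3; simp at E3
    subst E1 E2
    clear h1 h3 h4 ha hb hc
    refine mul_left_cancel₀ (pow_ne_zero 2 E0) ?_
    grind
  have R : ((x*y^2+y*z^2+z*x^2) + (e1+a)) * ((x*z^2+z*y^2+y*x^2) + (e1 + a)) = 0 := by
    linear_combination hP + (e1+a)*hS + Q
  rcases mul_eq_zero.1 R with R | R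
  · left
    exact key x y z h1 h3 h4 (by rw [he1] at R; linear_combination R - (x+y+z+a)*h2)
  · right
    exact key x z y (by linear_combination h1) (by linear_combination h3)
      (by linear_combination h4) (by rw [he1] at R; linear_combination R - (x+y+z+a)*h2)

theorem vieta {L : Type*} [Field L] (c0 c1 c2 c3 x y z : L) (hxy : x ≠ y) (hxz : x ≠ z) (hyz : y ≠ z)
    (hx : c3*x^3+c2*x^2+c1*x+c0=0) (hy : c3*y^3+c2*y^2+c1*y+c0=0) (hz : c3*z^3+c2*z^2+c1*z+c0=0) :
    c2 = - (c3 * (x+y+z)) ∧ c1 = c3*(x*y+y*z+z*x) ∧ c0 = -(c3*(x*y*z)) := by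
  have h1 : c3*(x^2+x*y+y^2)+c2*(x+y)+c1 = 0 :=
    mul_left_cancel₀ (sub_ne_zero.2 hxy) (by linear_combination hx - hy)
  have h2 : c3*(x^2+x*z+z^2)+c2*(x+z)+c1 = 0 :=
    mul_left_cancel₀ (sub_ne_zero.2 hxz) (by linear_combination hx - hz)
  have h3 : c3*(x+y+z)+c2 = 0 :=
    mul_left_cancel₀ (sub_ne_zero.2 hyz) (by linear_combination h1 - h2)
  have e2 : c2 = - (c3 * (x+y+z)) := by linear_combination h3
  subst e2
  have e1 : c1 = c3*(x*y+y*z+z*x) := by linear_combination h1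
  subst e1
  exact ⟨rfl, rfl, by linear_combination hx⟩

universe u

theorem setup {F : Type u} [Field F] [Finite F] [CharP F 2] (q : ℕ) (hq : Nat.card F = q)
    (g : F[X]) (hg : Irreducible g) (hd : g.natDegree = 3) :
    ∃ (L : Type u) (_ : Field L) (_ : Algebra F L) (σ : L →ₐ[F] L) (x y z : L),
      (2 : L) = 0 ∧ x ≠ y ∧ x ≠ z ∧ y ≠ z ∧ (∀ w, σ w = w ^ q) ∧
      σ x = y ∧ σ y = z ∧ σ z = x ∧
      (∀ p : F[X], g ∣ p ↔ aeval x p = 0) ∧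
      algebraMap F L (g.coeff 2) = algebraMap F L (g.coeff 3) * (x+y+z) ∧
      algebraMap F L (g.coeff 1) = algebraMap F L (g.coeff 3) * (x*y+y*z+z*x) ∧
      algebraMap F L (g.coeff 0) = algebraMap F L (g.coeff 3) * (x*y*z) := by
  have := Fact.mk hg
  have := Fintype.ofFinite F
  let L := AdjoinRoot g
  let x : L := AdjoinRoot.root g
  have hdvd : ∀ p : F[X], g ∣ p ↔ aeval x p = 0 := fun p => by
    rw [AdjoinRoot.aeval_eq, AdjoinRoot.mk_eq_zero]
  let σ : L →ₐ[F] L := FiniteField.frobeniusAlgHom F L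
  have hσ : ∀ w, σ w = w ^ q := fun w => by
    rw [← hq, Nat.card_eq_fintype_card]; rfl
  have h2 : (2 : L) = 0 := by
    have : (2 : F) = 0 := CharTwo.two_eq_zero
    rw [← map_ofNat (algebraMap F L) 2, this, map_zero]
  have hpow : ∀ n : ℕ, x ^ q ^ n = x ↔ 3 ∣ n := by
    intro n
    rw [← hd, hg.natDegree_dvd_iff_dvd_X_pow_card_pow_sub_X, hdvd, hq]
    simp [sub_eq_zero]
  have e2 : σ (σ x) = x ^ q ^ 2 := by simp only [hσ]; ring
  have e3 : σ (σ (σ x)) = x := by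
    refine Eq.trans ?_ ((hpow 3).2 dvd_rfl)
    simp only [hσ]
    ring
  have hxy : x ≠ σ x := fun h => by
    have := (hpow 1).1 (by rw [pow_one, ← hσ, ← h])
    omega
  have hxz : x ≠ σ (σ x) := fun h => by
    have := (hpow 2).1 (by rw [← e2, ← h])
    omega
  have hyz : σ x ≠ σ (σ x) := fun h => hxy (σ.injective h)
  have hgx : aeval x g = 0 := (hdvd g).1 dvd_rfl
  have hroot : ∀ w, aeval w g = 0 → algebraMap F L (g.coeff 3) * w^3 +
      algebraMap F L (g.coeff 2) * w^2 + algebraMap F L (g.coeff 1) * w +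
      algebraMap F L (g.coeff 0) = 0 := by
    intro w hw
    rw [aeval_eq_sum_range, hd] at hw
    simp only [Finset.sum_range_succ, Finset.sum_range_zero, Algebra.smul_def] at hw
    linear_combination hw
  have hgy : aeval (σ x) g = 0 := by rw [aeval_algHom_apply, hgx, map_zero]
  have hgz : aeval (σ (σ x)) g = 0 := by rw [aeval_algHom_apply, hgy, map_zero]
  obtain ⟨v2, v1, v0⟩ := vieta _ _ _ _ _ _ _ hxy hxz hyz (hroot _ hgx) (hroot _ hgy) (hroot _ hgz)
  refine ⟨L, inferInstance, inferInstance, σ, x, σ x, σ (σ x), h2, hxy, hxz, hyz, hσ, rfl, rfl, e3,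
    hdvd, ?_, v1, ?_⟩
  · rw [v2]
    linear_combination -(algebraMap F L (g.coeff 3) * (x+σ x+σ (σ x))) * h2
  · rw [v0]
    linear_combination -(algebraMap F L (g.coeff 3) * (x*σ x*σ (σ x))) * h2

theorem eqn {F : Type u} [Field F] {L : Type u} [Field L] [Algebra F L] (q : ℕ) (a : F)
    (σ : L →ₐ[F] L) (x y z : L) (hσ : ∀ w, σ w = w ^ q) (hxy : σ x = y) (hyz : σ y = z) :
    aeval x (X ^ (2 * q ^ 1 + 1) + X + C a : F[X]) = x * y^2 + x + algebraMap F L a ∧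
    aeval x (X ^ (2 * q ^ 2 + 1) + X + C a : F[X]) = x * z^2 + x + algebraMap F L a := by
  subst hxy hyz
  simp only [hσ, map_add, map_pow, aeval_X, aeval_C]
  constructor <;> ring

noncomputable def ff {F : Type u} [Field F] (a b : F) : F[X] :=
  C (a * b ^ 2) * X ^ 3 + X ^ 2 + C (a * (b + 1) ^ 2) * X + C (a ^ 2 * b ^ 4)

theorem ff_coeff {F : Type u} [Field F] (a b : F) : (ff a b).coeff 3 = a * b^2 ∧
    (ff a b).coeff 2 = 1 ∧ (ff a b).coeff 1 = a * (b+1)^2 ∧ (ff a b).coeff 0 = a^2*b^4 := by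
  unfold ff
  refine ⟨?_, ?_, ?_, ?_⟩ <;>
    simp only [coeff_add, coeff_C_mul, coeff_X_pow, coeff_X, coeff_C] <;> norm_num

theorem ff_natDegree {F : Type u} [Field F] (a b : F) (ha : a ≠ 0) (hb : b ≠ 0) :
    (ff a b).natDegree = 3 := by
  have : a * b^2 ≠ 0 := mul_ne_zero ha (pow_ne_zero 2 hb)
  unfold ff
  compute_degree!

theorem scale {F : Type u} [Field F] {L : Type u} [Field L] [Algebra F L] (a b : F) (ha : a ≠ 0)
    (hb : b ≠ 0) (g : F[X]) (hd : g.natDegree = 3) (e1 e2 e3 : L)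
    (h2 : algebraMap F L (g.coeff 2) = algebraMap F L (g.coeff 3) * e1)
    (h1 : algebraMap F L (g.coeff 1) = algebraMap F L (g.coeff 3) * e2)
    (h0 : algebraMap F L (g.coeff 0) = algebraMap F L (g.coeff 3) * e3)
    (k1 : algebraMap F L a * algebraMap F L b ^ 2 * e1 = 1)
    (k2 : algebraMap F L b ^ 2 * e2 = (algebraMap F L b + 1) ^ 2)
    (k3 : e3 = algebraMap F L a * algebraMap F L b ^ 2) :
    ∃ u : F, u ≠ 0 ∧ g = C u * ff a b := by
  have hg3 : g.coeff 3 ≠ 0 := by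
    rw [← hd]; apply leadingCoeff_ne_zero.2; rintro rfl; simp at hd
  obtain ⟨u, hu⟩ : ∃ u, g.coeff 3 = u * (a * b^2) :=
    ⟨g.coeff 3 / (a*b^2), by field_simp⟩
  have hu0 : u ≠ 0 := by rintro rfl; simp at hu; exact hg3 hu
  refine ⟨u, hu0, ?_⟩
  rw [hu] at h2 h1 h0
  have inj := (algebraMap F L).injective
  have c2 : g.coeff 2 = u := inj (by
    rw [h2]; push_cast [map_mul, map_pow]; linear_combination algebraMap F L u * k1)
  have c1 : g.coeff 1 = u * (a * (b+1)^2) := inj (by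
    rw [h1]; simp only [map_mul, map_pow, map_add, map_one]
    linear_combination algebraMap F L u * algebraMap F L a * k2)
  have c0 : g.coeff 0 = u * (a^2*b^4) := inj (by
    rw [h0, k3]; simp only [map_mul, map_pow]; ring)
  obtain ⟨f3, f2, f1, f0⟩ := ff_coeff a b
  ext n
  rw [coeff_C_mul]
  by_cases hn : n ≤ 3
  · interval_cases n
    · rw [f0, c0]
    · rw [f1, c1]
    · rw [f2, c2, mul_one]
    · rw [f3, hu]
  · rw [coeff_eq_zero_of_natDegree_lt (by omega),
      coeff_eq_zero_of_natDegree_lt (by rw [ff_natDegree a b ha hb]; omega), mul_zero]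

theorem part1 {F : Type u} [Field F] [Finite F] [CharP F 2] (q : ℕ) (hq : Nat.card F = q)
    (a b : F) (hab : a * (b^2+b+1) = 1) (hb0 : b ≠ 0) (hb1 : b + 1 ≠ 0) (k : ℕ) (hk : k = 1 ∨ k = 2)
    (g : F[X]) (hg : Irreducible g) (hd : g.natDegree = 3)
    (hdvd : g ∣ X ^ (2 * q ^ k + 1) + X + C a) :
    (∃ u : F, u ≠ 0 ∧ g = C u * ff a b) ∨ (∃ u : F, u ≠ 0 ∧ g = C u * ff a (b+1)) := by
  obtain ⟨L, _, _, σ, x, y, z, h2, hxy, hxz, hyz, hσ, sx, sy, sz, hd', v2, v1, v0⟩ :=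
    setup q hq g hg hd
  have ha : a ≠ 0 := by rintro rfl; simp at hab
  have hab' : algebraMap F L a * (algebraMap F L b^2+algebraMap F L b+1) = 1 := by
    simpa only [map_mul, map_pow, map_add, map_one] using congrArg (algebraMap F L) hab
  have hbb : b + 1 + 1 = b := by
    have : (2 : F) = 0 := CharTwo.two_eq_zero
    linear_combination this
  have hbb' : algebraMap F L b + 1 + 1 = algebraMap F L b := by
    linear_combination h2
  obtain ⟨q1, q2⟩ := eqn q a σ x y z hσ sx sy
  rw [hd'] at hdvd
  have fin : ∀ y z : L, x ≠ y → x * y^2 + x + algebraMap F L a = 0 →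
      y * z^2 + y + algebraMap F L a = 0 → z * x^2 + z + algebraMap F L a = 0 →
      algebraMap F L (g.coeff 2) = algebraMap F L (g.coeff 3) * (x+y+z) →
      algebraMap F L (g.coeff 1) = algebraMap F L (g.coeff 3) * (x*y+y*z+z*x) →
      algebraMap F L (g.coeff 0) = algebraMap F L (g.coeff 3) * (x*y*z) →
      (∃ u : F, u ≠ 0 ∧ g = C u * ff a b) ∨ (∃ u : F, u ≠ 0 ∧ g = C u * ff a (b+1)) := by
    intro y z hxy E1 E2 E3 v2 v1 v0
    rcases fwd h2 _ _ x y z hxy hab' E1 E2 E3 with ⟨k1, k2, k3⟩ | ⟨k1, k2, k3⟩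
    · left
      exact scale a b ha hb0 g hd _ _ _ v2 v1 v0 k1 k2 k3
    · right
      refine scale a (b+1) ha hb1 g hd _ _ _ v2 v1 v0 ?_ ?_ ?_ <;>
        rw [map_add, map_one]
      · exact k1
      · rw [hbb']; exact k2
      · exact k3
  rcases hk with rfl | rfl
  · rw [q1] at hdvd
    have E2 := congrArg σ hdvd
    simp only [map_add, map_mul, map_pow, map_zero, AlgHom.commutes, sx, sy] at E2
    have E3 := congrArg σ E2
    simp only [map_add, map_mul, map_pow, map_zero, AlgHom.commutes, sy, sz] at E3
    exact fin y z hxy hdvd E2 E3 v2 v1 v0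
  · rw [q2] at hdvd
    have E2 := congrArg σ hdvd
    simp only [map_add, map_mul, map_pow, map_zero, AlgHom.commutes, sx, sz] at E2
    have E3 := congrArg σ E2
    simp only [map_add, map_mul, map_pow, map_zero, AlgHom.commutes, sx, sy] at E3
    refine fin z y hxz hdvd E3 E2 ?_ ?_ ?_
    · rw [v2]; ring
    · rw [v1]; ring
    · rw [v0]; ring

theorem part2 {F : Type u} [Field F] [Finite F] [CharP F 2] (q : ℕ) (hq : Nat.card F = q)
    (a b : F) (hab : a * (b^2+b+1) = 1) (hb0 : b ≠ 0) (hi : Irreducible (ff a b)) :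
    ∃! k : ℕ, (k = 1 ∨ k = 2) ∧ ff a b ∣ X ^ (2 * q ^ k + 1) + X + C a := by
  have ha : a ≠ 0 := by rintro rfl; simp at hab
  obtain ⟨L, _, _, σ, x, y, z, h2, hxy, hxz, hyz, hσ, sx, sy, sz, hd', v2, v1, v0⟩ :=
    setup q hq _ hi (ff_natDegree a b ha hb0)
  have hab' : algebraMap F L a * (algebraMap F L b^2+algebraMap F L b+1) = 1 := by
    simpa only [map_mul, map_pow, map_add, map_one] using congrArg (algebraMap F L) hab
  obtain ⟨q1, q2⟩ := eqn q a σ x y z hσ sx sy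
  obtain ⟨f3, f2, f1, f0⟩ := ff_coeff a b
  rw [f3] at v0 v1 v2
  rw [f2] at v2
  rw [f1] at v1
  rw [f0] at v0
  simp only [map_mul, map_pow, map_add, map_one] at v0 v1 v2
  have ha' : algebraMap F L a ≠ 0 := by simpa using ha
  have hb' : algebraMap F L b ≠ 0 := by simpa using hb0
  have k := bwd h2 _ _ x y z hab' hb' v2.symm
    (mul_left_cancel₀ ha' (by linear_combination -v1))
    (mul_left_cancel₀ (mul_ne_zero ha' (pow_ne_zero 2 hb')) (by linear_combination -v0))
  have hne : ¬ (x * y^2 + x + algebraMap F L a = 0 ∧ x * z^2 + x + algebraMap F L a = 0) := by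
    rintro ⟨A, B⟩
    have hx : x ≠ 0 := by
      rintro rfl
      simp [ha] at A
    have : (y - z)^2 = 0 := mul_left_cancel₀ hx (by linear_combination A - B - (x*y*z - x * z^2) * h2)
    exact hyz (sub_eq_zero.1 (pow_eq_zero_iff (by norm_num) |>.1 this))
  rw [← q1, ← q2, ← hd', ← hd'] at hne k
  rcases k with k | k
  · refine ⟨1, ⟨Or.inl rfl, k⟩, ?_⟩
    rintro j ⟨rfl | rfl, hj⟩
    · rfl
    · exact absurd ⟨k, hj⟩ hne
  · refine ⟨2, ⟨Or.inr rfl, k⟩, ?_⟩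
    rintro j ⟨rfl | rfl, hj⟩
    · exact absurd ⟨hj, k⟩ hne
    · rfl

/-- Proposition 4.1: for `k ∈ {1,2}`, any irreducible cubic `g ∈ F_q[X]` dividing
`H_k(X) = X^(2q^k+1) + X + a` is a nonzero constant multiple of exactly one of `f₁, f₂`;
conversely, if `f_i` is irreducible over `F_q` then `f_i` divides `H_k` for a unique
`k ∈ {1,2}`. -/
theorem irreducible_cubic_factors
    (m : ℕ) (hm : 0 < m) (q : ℕ) (hq : q = 2 ^ m)
    (a b : GaloisField 2 m)
    (ha2 : a ^ 2 ≠ a)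
    (htr : ∑ i ∈ Finset.range m, a⁻¹ ^ 2 ^ i = (m : GaloisField 2 m))
    (hb : b ^ 2 + b = a⁻¹ + 1)
    (f1 f2 : Polynomial (GaloisField 2 m))
    (hf1 : f1 = C (a * b ^ 2) * X ^ 3 + X ^ 2 + C (a * (b + 1) ^ 2) * X +
      C (a ^ 2 * b ^ 4))
    (hf2 : f2 = C (a * (b + 1) ^ 2) * X ^ 3 + X ^ 2 + C (a * b ^ 2) * X +
      C (a ^ 2 * (b + 1) ^ 4)) :
    (∀ k : ℕ, (k = 1 ∨ k = 2) → ∀ g : Polynomial (GaloisField 2 m),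
      Irreducible g → g.degree = 3 →
      g ∣ (X ^ (2 * q ^ k + 1) + X + C a) →
      ∃! i : ℕ, (i = 1 ∨ i = 2) ∧
        ∃ u : GaloisField 2 m, u ≠ 0 ∧ g = C u * (if i = 1 then f1 else f2)) ∧
    (∀ i : ℕ, (i = 1 ∨ i = 2) → Irreducible (if i = 1 then f1 else f2) →
      ∃! k : ℕ, (k = 1 ∨ k = 2) ∧
        (if i = 1 then f1 else f2) ∣ (X ^ (2 * q ^ k + 1) + X + C a)) := by
  have h2 : (2 : GaloisField 2 m) = 0 := CharTwo.two_eq_zero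
  have hcard : Nat.card (GaloisField 2 m) = q := by rw [GaloisField.card 2 m hm.ne', hq]
  have ha0 : a ≠ 0 := by rintro rfl; simp at ha2
  have hab : a * (b^2+b+1) = 1 := by
    rw [hb, add_assoc, show (1:GaloisField 2 m) + 1 = 0 by linear_combination h2, add_zero,
      mul_inv_cancel₀ ha0]
  have hb0 : b ≠ 0 := by
    rintro rfl
    simp at hab
    simp [hab] at ha2
  have hb1 : b + 1 ≠ 0 := by
    intro h
    have : a = 1 := by linear_combination hab - a * b * h
    simp [this] at ha2
  have hbb : b + 1 + 1 = b := by linear_combination h2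
  have F1 : f1 = ff a b := hf1
  have F2 : f2 = ff a (b+1) := by rw [hf2, ff, hbb]
  have hab1 : a * ((b+1)^2+(b+1)+1) = 1 := by linear_combination hab + (a*b+a)*h2
  clear hf1 hf2
  subst F1 F2
  refine ⟨?_, ?_⟩
  · intro k hk g hg hd hdvd
    have hnd : g.natDegree = 3 := natDegree_eq_of_degree_eq_some hd
    have hne : ¬ ((∃ u : GaloisField 2 m, u ≠ 0 ∧ g = C u * ff a b) ∧
        (∃ u : GaloisField 2 m, u ≠ 0 ∧ g = C u * ff a (b+1))) := by
      rintro ⟨⟨u, hu, h⟩, v, hv, h'⟩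
      rw [h] at h'
      obtain ⟨p3, p2, -, -⟩ := ff_coeff a b
      obtain ⟨r3, r2, -, -⟩ := ff_coeff a (b+1)
      have c2 := congrArg (fun p => coeff p 2) h'
      have c3 := congrArg (fun p => coeff p 3) h'
      simp only [coeff_C_mul, p3, p2, r3, r2, mul_one] at c2 c3
      subst c2
      have := mul_left_cancel₀ ha0 (mul_left_cancel₀ hu c3)
      exact one_ne_zero (α := GaloisField 2 m) (by linear_combination -this - b * h2)
    rcases part1 q hcard a b hab hb0 hb1 k hk g hg hnd hdvd with h | h
    · refine ⟨1, ⟨Or.inl rfl, by simpa using h⟩, ?_⟩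
      rintro j ⟨rfl | rfl, hj⟩
      · rfl
      · exact absurd ⟨h, by simpa using hj⟩ hne
    · refine ⟨2, ⟨Or.inr rfl, by simpa using h⟩, ?_⟩
      rintro j ⟨rfl | rfl, hj⟩
      · exact absurd ⟨by simpa using hj, h⟩ hne
      · rfl
  · intro i hi
    rcases hi with rfl | rfl
    · intro hirr
      simp only [if_true] at hirr ⊢
      exact part2 q hcard a b hab hb0 hirr
    · intro hirr
      simp only [show (2:ℕ) ≠ 1 by norm_num, if_false] at hirr ⊢
      exact part2 q hcard a (b+1) hab1 hb1 hirr
end
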